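/- For the six-vertex model with weights a = b = 1 and c = 2, the free energy exists and equals f(1,1,2) = 2·log(2·Γ(5/4)/Γ(3/4)), where Γ denotes the Gamma function. -/

import Mathlib

open MeasureTheory Filter
open scoped Real BigOperators

noncomputable section

namespace SixVertexFE

/-- Configurations on the `N × M` torus: each vertex `v` carries a horizontal edge
(from `v` to `v+(1,0)`) and a vertical edge (from `v` to `v+(0,1)`).
First component: `true` = the horizontal edge points East.
Second component: `true` = the vertical edge points North. -/
abbrev Cfg (N M : ℕ) := ((Fin N × Fin M) → Bool) × ((Fin N × Fin M) → Bool)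

/-- the predecessor (`i - 1`) on the discrete circle `Fin N`. -/
def predF {N : ℕ} (i : Fin N) : Fin N := ⟨(i.1 + (N - 1)) % N, Nat.mod_lt _ i.pos⟩

/-- number of edges incident to `v` that point towards `v`. -/
abbrev inArrows {N M : ℕ} (ω : Cfg N M) (v : Fin N × Fin M) : ℕ :=
  (if ω.1 (predF v.1, v.2) = true then 1 else 0) +
  (if ω.1 v = false then 1 else 0) +
  (if ω.2 (v.1, predF v.2) = true then 1 else 0) +
  (if ω.2 v = false then 1 else 0)

/-- the ice rule: exactly two incoming arrows at every vertex. -/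
abbrev IsSixVertex {N M : ℕ} (ω : Cfg N M) : Prop := ∀ v, inArrows ω v = 2

/-- weight of a vertex: `c` if the two horizontal edges at `v` point in opposite
directions, `a` for all-East-all-North or all-West-all-South, `b` for
all-East-all-South or all-West-all-North. -/
def vWeight (a b c : ℝ) {N M : ℕ} (ω : Cfg N M) (v : Fin N × Fin M) : ℝ :=
  if ω.1 (predF v.1, v.2) ≠ ω.1 v then c
  else if (ω.1 (predF v.1, v.2) = true ∧ ω.1 v = true ∧
            ω.2 (v.1, predF v.2) = true ∧ ω.2 v = true) ∨
          (ω.1 (predF v.1, v.2) = false ∧ ω.1 v = false ∧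
            ω.2 (v.1, predF v.2) = false ∧ ω.2 v = false) then a
  else if (ω.1 (predF v.1, v.2) = true ∧ ω.1 v = true ∧
            ω.2 (v.1, predF v.2) = false ∧ ω.2 v = false) ∨
          (ω.1 (predF v.1, v.2) = false ∧ ω.1 v = false ∧
            ω.2 (v.1, predF v.2) = true ∧ ω.2 v = true) then b
  else 0

/-- weight of a configuration. -/
def W (a b c : ℝ) {N M : ℕ} (ω : Cfg N M) : ℝ := ∏ v, vWeight a b c ω v

/-- partition function of the six-vertex model on the `N × M` torus. -/
def Z (N M : ℕ) (a b c : ℝ) : ℝ :=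
  ∑ ω : Cfg N M, if IsSixVertex ω then W a b c ω else 0

/-- number of North-pointing vertical edges in row `j`. -/
abbrev RowCount {N M : ℕ} (ω : Cfg N M) (j : Fin M) : ℕ :=
  (Finset.univ.filter fun i : Fin N => ω.2 (i, j) = true).card

/-- partition function restricted to configurations with exactly `n` up arrows per row. -/
def Zn (N M n : ℕ) (a b c : ℝ) : ℝ :=
  ∑ ω : Cfg N M, if IsSixVertex ω ∧ (∀ j, RowCount ω j = n) then W a b c ω else 0

/-- `F` is the per-site free energy of the six-vertex model with weights `a, b, c`:
the inner limit in `M` exists for every even `N ≥ 2`, and the resulting quantities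
converge to `F` as `N → ∞` along even `N`. -/
def FreeEnergyIs (a b c F : ℝ) : Prop :=
  ∃ g : ℕ → ℝ,
    (∀ N : ℕ, Even N → 2 ≤ N →
      Tendsto (fun M : ℕ => Real.log (Z N M a b c) / (M * N)) atTop (nhds (g N))) ∧
    Tendsto g (atTop ⊓ Filter.principal {N | Even N}) (nhds F)

/-- `L = f_N^{(n)}(a,b,c)`, the free energy of the six-vertex model in the sector
with `n` up arrows per row. -/
def SectorFE (N n : ℕ) (a b c L : ℝ) : Prop :=
  Tendsto (fun M : ℕ => Real.log (Zn N M n a b c) / (N * M)) atTop (nhds L)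

end SixVertexFE

namespace SixVertexFE

/-!
The partition function is the trace of the `M`-th power of a symmetric nonnegative row-to-row
transfer matrix, so the inner limit is the logarithm of its largest Rayleigh quotient `μ N`, and
`(μ N) ^ (1 / N)` has to be bounded from both sides. After division by `2` the weights `1, 1, 2`
are the point `w = 1 / 2` of the family `a = 1 - w`, `b = w`, `c = 1`.

*Upper bound.* For a fixed vector `ψ`, the function `w ↦ ⟨ψ, T(w) ψ⟩` is a polynomial. On the sides
of the strip `0 ≤ Re w ≤ 1` the local tensor is bounded in `ℓ²` by `(1 + (Im w)²) ^ (1 / 2)`, the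
modulus of an explicit quotient `κ` of Gamma functions, and Phragmén–Lindelöf gives
`|⟨ψ, T(w) ψ⟩| ≤ 2 |κ(w)| ^ N` inside the strip.

*Lower bound.* The point `w = 1 / 2` is approached through the commuting matrices with weights
`sinh (l (1 - w)) / sinh l`, `sinh (l w) / sinh l`, `1`, as `l → 0`. Their common Perron vector `ψ`
turns the fusion relation `T(w) T(w + 1) = scalar + fused matrix` into a scalar identity, whose last
term is at most `3 tanh (π² / (4 l)) ^ N` times the scalar. This bounds the eigenvalue `⟨ψ, T(w) ψ⟩`
from below on the sides of the strip. It has no zeros in the strip: that is clear for large `l`,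
where only alternating rows contribute, and persists as `l` decreases because a zero-free
eigenvalue stays away from zero by Phragmén–Lindelöf for its reciprocal. The same principle then
compares the eigenvalue with `κ(w) ^ N` at `w = 1 / 2`.
-/

theorem predF_zero {n : ℕ} : predF (0 : Fin (n + 1)) = Fin.last n := by
  ext
  simp [predF]

theorem predF_succ {n : ℕ} (i : Fin n) : predF i.succ = i.castSucc := by
  ext
  have shift : (i : ℕ) + 1 + n = i + (n + 1) := by ring
  simp only [predF, Fin.val_succ, Fin.val_castSucc, Nat.add_sub_cancel]
  rw [shift, Nat.add_mod_right, Nat.mod_eq_of_lt (by lia)]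

theorem snoc_predF {σ : Type*} {n : ℕ} (p : Fin n → σ) (s : σ) (i : Fin (n + 1)) :
    (Fin.snoc p s : Fin (n + 1) → σ) (predF i) = (Fin.cons s p : Fin (n + 1) → σ) i := by
  cases i using Fin.cases with
  | zero => simp [predF_zero]
  | succ j => simp [predF_succ]

section TransferMatrix

variable {R σ κ κ' : Type*} [CommRing R] [Fintype κ] [Fintype κ']

theorem sum_univ_fin_cons {M : Type*} [AddCommMonoid M] {n : ℕ} (F : (Fin (n + 1) → κ) → M) :
    ∑ x, F x = ∑ s, ∑ x' : Fin n → κ, F (Fin.cons s x') := by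
  rw [← (Fin.consEquiv fun _ : Fin (n + 1) ↦ κ).sum_comp, Fintype.sum_prod_type]
  rfl

theorem sum_univ_fin_snoc {M : Type*} [AddCommMonoid M] {n : ℕ} (F : (Fin (n + 1) → κ) → M) :
    ∑ x, F x = ∑ s, ∑ x' : Fin n → κ, F (Fin.snoc x' s) := by
  rw [← (Fin.snocEquiv fun _ : Fin (n + 1) ↦ κ).sum_comp, Fintype.sum_prod_type]
  rfl

theorem list_prod_apply_eq_sum_paths [DecidableEq κ] {n : ℕ}
    (A : Fin (n + 1) → Matrix κ κ R) (α β : κ) :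
    (List.ofFn A).prod α β = ∑ p : Fin n → κ, ∏ i,
      A i ((Fin.cons α p : Fin (n + 1) → κ) i) ((Fin.snoc p β : Fin (n + 1) → κ) i) := by
  induction n generalizing α with
  | zero => simp [Fin.snoc]
  | succ n ih =>
    rw [List.ofFn_succ, List.prod_cons, Matrix.mul_apply, sum_univ_fin_cons]
    refine Finset.sum_congr rfl fun γ _ ↦ ?_
    rw [ih, Finset.mul_sum]
    refine Finset.sum_congr rfl fun p _ ↦ ?_
    simp only [Fin.prod_univ_succ (n := n + 1), ← Fin.cons_snoc_eq_snoc_cons, Fin.cons_zero,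
      Fin.cons_succ]

theorem trace_list_prod_eq_sum_cycles [DecidableEq κ] {n : ℕ} [NeZero n]
    (A : Fin n → Matrix κ κ R) :
    (List.ofFn A).prod.trace = ∑ h : Fin n → κ, ∏ i, A i (h (predF i)) (h i) := by
  obtain ⟨n, rfl⟩ := Nat.exists_eq_succ_of_ne_zero (NeZero.ne n)
  rw [sum_univ_fin_snoc]
  simp only [Matrix.trace, Matrix.diag, list_prod_apply_eq_sum_paths, snoc_predF]

theorem trace_pow_eq_sum_cycles [DecidableEq κ] {n : ℕ} [NeZero n] (A : Matrix κ κ R) :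
    (A ^ n).trace = ∑ h : Fin n → κ, ∏ i, A (h (predF i)) (h i) := by
  simpa using trace_list_prod_eq_sum_cycles fun _ : Fin n ↦ A

/-- The row-to-row transfer matrix of the local tensor `m`, whose entry `m s s' h h'` is the weight
of a vertex with vertical spins `s` below and `s'` above and horizontal spins `h` to the left and
`h'` to the right, on a horizontally periodic row of `N` vertices. -/
def transferMatrix (m : σ → σ → Matrix κ κ R) (N : ℕ) : Matrix (Fin N → σ) (Fin N → σ) R :=
  fun x y ↦ ∑ h : Fin N → κ, ∏ i, m (x i) (y i) (h (predF i)) (h i)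

/-- The monodromy of the local tensor `m`: the ordered product of its matrices along an open row,
itself a local tensor whose spins are the rows of vertical spins. -/
def monodromy [DecidableEq κ] (m : σ → σ → Matrix κ κ R) (n : ℕ) (x y : Fin n → σ) :
    Matrix κ κ R :=
  (List.ofFn fun i ↦ m (x i) (y i)).prod

theorem monodromy_cons [DecidableEq κ] (m : σ → σ → Matrix κ κ R) {n : ℕ} (s s' : σ)
    (x y : Fin n → σ) :
    monodromy m (n + 1) (Fin.cons s x) (Fin.cons s' y) = m s s' * monodromy m n x y := by
  simp [monodromy, List.ofFn_succ]

theorem transferMatrix_apply_eq_trace [DecidableEq κ] {N : ℕ} [NeZero N]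
    (m : σ → σ → Matrix κ κ R) (x y : Fin N → σ) :
    transferMatrix m N x y = (monodromy m N x y).trace :=
  (trace_list_prod_eq_sum_cycles _).symm

theorem transferMatrix_mul [Fintype σ] {N : ℕ} (m : σ → σ → Matrix κ κ R)
    (m' : σ → σ → Matrix κ' κ' R) :
    transferMatrix m N * transferMatrix m' N =
      transferMatrix (fun s s'' ↦ ∑ s', Matrix.kroneckerMap (· * ·) (m s s') (m' s' s'')) N := by
  ext x z
  simp only [Matrix.mul_apply, transferMatrix, Finset.sum_mul_sum, Matrix.sum_apply,
    Matrix.kroneckerMap_apply]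
  rw [← (Equiv.arrowProdEquivProdArrow (Fin N) (fun _ ↦ κ) (fun _ ↦ κ')).symm.sum_comp,
    Fintype.sum_prod_type, Finset.sum_comm]
  refine Finset.sum_congr rfl fun h _ ↦ ?_
  rw [Finset.sum_comm]
  refine Finset.sum_congr rfl fun h' _ ↦ ?_
  simp only [Equiv.arrowProdEquivProdArrow_symm_apply, Finset.prod_univ_sum,
    Fintype.piFinset_univ, Finset.prod_mul_distrib]

theorem transferMatrix_smul {N : ℕ} (φ : R) (m : σ → σ → Matrix κ κ R) :
    transferMatrix (fun s s' ↦ φ • m s s') N = φ ^ N • transferMatrix m N := by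
  ext x y
  simp [transferMatrix, Finset.prod_mul_distrib, Finset.mul_sum]

theorem transferMatrix_scalar [DecidableEq σ] {N : ℕ} (φ : R) :
    transferMatrix (fun s s' : σ ↦ (if s = s' then φ else 0) • (1 : Matrix Unit Unit R)) N
      = φ ^ N • (1 : Matrix (Fin N → σ) (Fin N → σ) R) := by
  ext x y
  simp only [transferMatrix, Matrix.smul_apply, Matrix.one_apply, smul_eq_mul,
    Finset.univ_unique, Finset.sum_singleton, if_true, mul_one]
  by_cases h : x = y
  · subst h
    simp
  · obtain ⟨i, hi⟩ := Function.ne_iff.mp h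
    rw [if_neg h, mul_zero, Finset.prod_eq_zero (Finset.mem_univ i) (if_neg hi)]

theorem list_prod_intertwine [DecidableEq κ] [DecidableEq κ'] (P : Matrix κ κ' R) {n : ℕ}
    {A : Fin n → Matrix κ κ R} {B : Fin n → Matrix κ' κ' R} (h : ∀ i, A i * P = P * B i) :
    (List.ofFn A).prod * P = P * (List.ofFn B).prod := by
  induction n with
  | zero => simp
  | succ n ih =>
    rw [List.ofFn_succ, List.prod_cons, List.ofFn_succ, List.prod_cons, Matrix.mul_assoc,
      ih fun i ↦ h i.succ, ← Matrix.mul_assoc, h 0, Matrix.mul_assoc]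

theorem transferMatrix_eq_of_intertwine [DecidableEq κ] [DecidableEq κ'] {N : ℕ} [NeZero N]
    {m : σ → σ → Matrix κ κ R} {m' : σ → σ → Matrix κ' κ' R} {P : Matrix κ κ' R}
    {P' : Matrix κ' κ R} (hPP' : P * P' = 1) (hP'P : P' * P = 1)
    (h : ∀ s s', m s s' * P = P * m' s s') :
    transferMatrix m N = transferMatrix m' N := by
  ext x y
  have intertwine : monodromy m N x y * P = P * monodromy m' N x y :=
    list_prod_intertwine P fun i ↦ h (x i) (y i)
  calc transferMatrix m N x y = (monodromy m N x y * P * P').trace := by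
        rw [transferMatrix_apply_eq_trace, Matrix.mul_assoc, hPP', Matrix.mul_one]
    _ = transferMatrix m' N x y := by
        rw [intertwine, Matrix.mul_assoc, Matrix.trace_mul_comm, Matrix.mul_assoc, hP'P,
          Matrix.mul_one, transferMatrix_apply_eq_trace]

theorem exists_list_prod_fromBlocks [DecidableEq κ] [DecidableEq κ'] {n : ℕ}
    (A : Fin n → Matrix κ κ R) (B : Fin n → Matrix κ' κ R) (D : Fin n → Matrix κ' κ' R) :
    ∃ E, (List.ofFn fun i ↦ Matrix.fromBlocks (A i) 0 (B i) (D i)).prod =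
      Matrix.fromBlocks (List.ofFn A).prod 0 E (List.ofFn D).prod := by
  induction n with
  | zero => exact ⟨0, by simp⟩
  | succ n ih =>
    obtain ⟨E, hE⟩ := ih (fun i ↦ A i.succ) (fun i ↦ B i.succ) fun i ↦ D i.succ
    simp only [List.ofFn_succ, List.prod_cons, hE, Matrix.fromBlocks_multiply]
    exact ⟨_, by simp only [Matrix.mul_zero, Matrix.zero_mul, add_zero, zero_add]; rfl⟩

theorem transferMatrix_fromBlocks {N : ℕ} [NeZero N]
    (A : σ → σ → Matrix κ κ R) (B : σ → σ → Matrix κ' κ R) (D : σ → σ → Matrix κ' κ' R) :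
    transferMatrix (fun s s' ↦ Matrix.fromBlocks (A s s') 0 (B s s') (D s s')) N =
      transferMatrix A N + transferMatrix D N := by
  classical
  ext x y
  obtain ⟨E, hE⟩ := exists_list_prod_fromBlocks (fun i ↦ A (x i) (y i)) (fun i ↦ B (x i) (y i))
    fun i ↦ D (x i) (y i)
  simp only [Matrix.add_apply, transferMatrix_apply_eq_trace, monodromy, hE]
  simp [Matrix.trace, Fintype.sum_sum_type]

end TransferMatrix

section Expectation

variable {X : Type*} [Fintype X]

/-- The expectation `⟨ψ, T ψ⟩` of a complex matrix `T` in the real state `ψ`. -/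
def expectation (T : Matrix X X ℂ) (ψ : X → ℝ) : ℂ :=
  (fun x ↦ (ψ x : ℂ)) ⬝ᵥ T.mulVec fun x ↦ (ψ x : ℂ)

theorem expectation_eq_sum (T : Matrix X X ℂ) (ψ : X → ℝ) :
    expectation T ψ = ∑ y, (∑ x, (ψ x : ℂ) * T x y) * ψ y := by
  rw [expectation, Matrix.dotProduct_mulVec]
  rfl

theorem expectation_transpose (T : Matrix X X ℂ) (ψ : X → ℝ) :
    expectation T.transpose ψ = expectation T ψ := by
  rw [expectation, Matrix.mulVec_transpose, dotProduct_comm, ← Matrix.dotProduct_mulVec,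
    expectation]

theorem expectation_sum {ι : Type*} (s : Finset ι) (T : ι → Matrix X X ℂ) (ψ : X → ℝ) :
    expectation (∑ i ∈ s, T i) ψ = ∑ i ∈ s, expectation (T i) ψ := by
  simp only [expectation, Matrix.sum_mulVec, dotProduct_sum]

theorem expectation_smul (c : ℂ) (T : Matrix X X ℂ) (ψ : X → ℝ) :
    expectation (c • T) ψ = c * expectation T ψ := by
  rw [expectation, Matrix.smul_mulVec, dotProduct_smul, smul_eq_mul, expectation]

theorem expectation_ofReal (A : Matrix X X ℝ) (ψ : X → ℝ) :
    expectation (A.map Complex.ofReal) ψ = (ψ ⬝ᵥ A.mulVec ψ : ℝ) := by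
  simp [expectation, dotProduct, Matrix.mulVec]

theorem norm_expectation_le {T : Matrix X X ℂ} {C : ℝ} {ψ : X → ℝ} (hC : 0 ≤ C)
    (h : ∑ y, ‖∑ x, (ψ x : ℂ) * T x y‖ ^ 2 ≤ C ^ 2 * (ψ ⬝ᵥ ψ)) :
    ‖expectation T ψ‖ ≤ C * (ψ ⬝ᵥ ψ) := by
  simp only [dotProduct, ← sq] at h ⊢
  have triangle : ‖expectation T ψ‖ ≤ ∑ y, ‖∑ x, (ψ x : ℂ) * T x y‖ * |ψ y| := by
    rw [expectation_eq_sum]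
    refine (norm_sum_le _ _).trans_eq (Finset.sum_congr rfl fun y _ ↦ ?_)
    rw [norm_mul, Complex.norm_real, Real.norm_eq_abs]
  have cauchy_schwarz := Finset.sum_mul_sq_le_sq_mul_sq Finset.univ
    (fun y ↦ ‖∑ x, (ψ x : ℂ) * T x y‖) fun y ↦ |ψ y|
  simp only [sq_abs] at cauchy_schwarz
  refine triangle.trans (abs_le_of_sq_le_sq' ?_ (by positivity)).2
  calc _ ≤ _ := cauchy_schwarz
    _ ≤ C ^ 2 * (∑ x, ψ x ^ 2) * ∑ x, ψ x ^ 2 := by gcongr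
    _ = (C * ∑ x, ψ x ^ 2) ^ 2 := by ring

end Expectation

section L2Bound

variable {σ κ : Type*} [Fintype σ] [Fintype κ]

/-- The local tensor `m`, acting on functions of one horizontal and one vertical spin, has
`ℓ²`-operator norm at most `C`. -/
def IsL2Bounded (m : σ → σ → Matrix κ κ ℂ) (C : ℝ) : Prop :=
  ∀ f : κ → σ → ℂ,
    ∑ β, ∑ s', ‖∑ α, ∑ s, f α s * m s s' α β‖ ^ 2 ≤ C ^ 2 * ∑ α, ∑ s, ‖f α s‖ ^ 2

theorem sum_mul_monodromy_cons [DecidableEq κ] (m : σ → σ → Matrix κ κ ℂ) {n : ℕ}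
    (f : κ → (Fin (n + 1) → σ) → ℂ) (β : κ) (s' : σ) (y : Fin n → σ) :
    ∑ α, ∑ x, f α x * monodromy m (n + 1) x (Fin.cons s' y) α β =
      ∑ γ, ∑ x, (∑ α, ∑ s, f α (Fin.cons s x) * m s s' α γ) * monodromy m n x y γ β := by
  simp only [sum_univ_fin_cons, monodromy_cons, Matrix.mul_apply, Finset.mul_sum, Finset.sum_mul,
    ← mul_assoc]
  calc _ = ∑ α, ∑ γ, ∑ x, ∑ s, f α (Fin.cons s x) * m s s' α γ * monodromy m n x y γ β := by
        refine Finset.sum_congr rfl fun α _ ↦ ?_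
        rw [Finset.sum_comm]
        simp_rw [Finset.sum_comm (γ := κ)]
    _ = _ := by
        rw [Finset.sum_comm]
        exact Finset.sum_congr rfl fun γ _ ↦ Finset.sum_comm

theorem IsL2Bounded.monodromy [DecidableEq κ] {m : σ → σ → Matrix κ κ ℂ} {C : ℝ}
    (h : IsL2Bounded m C) (n : ℕ) : IsL2Bounded (monodromy m n) (C ^ n) := by
  induction n with
  | zero =>
    intro f
    simp [SixVertexFE.monodromy, Matrix.one_apply]
  | succ n ih =>
    intro f
    let g (s' : σ) (γ : κ) (x : Fin n → σ) : ℂ := ∑ α, ∑ s, f α (Fin.cons s x) * m s s' α γ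
    calc _ = ∑ s', ∑ β, ∑ y, ‖∑ γ, ∑ x, g s' γ x * SixVertexFE.monodromy m n x y γ β‖ ^ 2 := by
          simp_rw [sum_univ_fin_cons (κ := σ) (F := fun _ ↦ ‖_‖ ^ 2), sum_mul_monodromy_cons]
          exact Finset.sum_comm
      _ ≤ ∑ s', (C ^ n) ^ 2 * ∑ γ, ∑ x, ‖g s' γ x‖ ^ 2 := Finset.sum_le_sum fun s' _ ↦ ih (g s')
      _ = (C ^ n) ^ 2 * ∑ x, ∑ γ, ∑ s', ‖g s' γ x‖ ^ 2 := by
          rw [← Finset.mul_sum, Finset.sum_comm,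
            Finset.sum_comm (γ := _ → _)]
          exact congrArg _ (Finset.sum_congr rfl fun γ _ ↦ Finset.sum_comm)
      _ ≤ (C ^ n) ^ 2 * ∑ x : Fin n → σ, C ^ 2 * ∑ α, ∑ s, ‖f α (Fin.cons s x)‖ ^ 2 := by
          gcongr with x
          exact h fun α s ↦ f α (Fin.cons s x)
      _ = (C ^ (n + 1)) ^ 2 * ∑ α, ∑ x, ‖f α x‖ ^ 2 := by
          rw [← Finset.mul_sum, ← mul_assoc, ← mul_pow, ← pow_succ, Finset.sum_comm]
          simp_rw [sum_univ_fin_cons, Finset.sum_comm (γ := σ)]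

theorem IsL2Bounded.sum_norm_sq_diag_le {m : σ → σ → Matrix κ κ ℂ} {C : ℝ}
    (h : IsL2Bounded m C) (α : κ) (g : σ → ℂ) :
    ∑ s', ‖∑ s, g s * m s s' α α‖ ^ 2 ≤ C ^ 2 * ∑ s, ‖g s‖ ^ 2 := by
  classical
  let extended (γ : κ) (s : σ) : ℂ := if γ = α then g s else 0
  have sum_extended (s' : σ) : ∑ γ, ∑ s, extended γ s * m s s' γ α = ∑ s, g s * m s s' α α := by
    rw [Finset.sum_eq_single α (by simp +contextual [extended]) (by simp)]
    simp [extended]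
  calc ∑ s', ‖∑ s, g s * m s s' α α‖ ^ 2
    _ = ∑ s', ‖∑ γ, ∑ s, extended γ s * m s s' γ α‖ ^ 2 := by simp only [sum_extended]
    _ ≤ ∑ β, ∑ s', ‖∑ γ, ∑ s, extended γ s * m s s' γ β‖ ^ 2 :=
        Finset.single_le_sum (f := fun β ↦ ∑ s', ‖∑ γ, ∑ s, extended γ s * m s s' γ β‖ ^ 2)
          (fun β _ ↦ by positivity) (Finset.mem_univ α)
    _ ≤ C ^ 2 * ∑ γ, ∑ s, ‖extended γ s‖ ^ 2 := h extended
    _ = C ^ 2 * ∑ s, ‖g s‖ ^ 2 := by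
        rw [Finset.sum_eq_single α (by simp +contextual [extended]) (by simp)]
        simp [extended]

theorem norm_expectation_transferMatrix_le {m : σ → σ → Matrix κ κ ℂ} {C : ℝ} (hC : 0 ≤ C)
    (h : IsL2Bounded m C) {N : ℕ} [NeZero N] (ψ : (Fin N → σ) → ℝ) :
    ‖expectation (transferMatrix m N) ψ‖ ≤ Fintype.card κ * (C ^ N * (ψ ⬝ᵥ ψ)) := by
  classical
  have trace_eq : transferMatrix m N = ∑ α, Matrix.of fun x y ↦ monodromy m N x y α α := by
    ext x y
    simp [transferMatrix_apply_eq_trace, Matrix.trace, Matrix.sum_apply]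
  rw [trace_eq, expectation_sum]
  refine (norm_sum_le _ _).trans ?_
  rw [← nsmul_eq_mul, ← Finset.card_univ, ← Finset.sum_const]
  refine Finset.sum_le_sum fun α _ ↦ norm_expectation_le (by positivity) ?_
  simpa [dotProduct, ← sq] using (h.monodromy N).sum_norm_sq_diag_le α fun x ↦ (ψ x : ℂ)

end L2Bound

section PartitionFunction

/-- The local tensor of the six-vertex model, with `true` for North and East: by the ice rule the
only vertices that change the vertical spin are those of type `c`. -/
def sixVertexTensor {R : Type*} [CommRing R] (a b c : R) : Bool → Bool → Matrix Bool Bool R :=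
  fun s s' h h' ↦ if s = s' then (if h = h' then (if h = s then a else b) else 0)
    else (if h = s' ∧ h' = s then c else 0)

variable {N M : ℕ} (a b c : ℝ)

theorem sixVertexTensor_eq_vWeight (ω : Cfg N M) (v : Fin N × Fin M) :
    sixVertexTensor a b c (ω.2 (v.1, predF v.2)) (ω.2 v) (ω.1 (predF v.1, v.2)) (ω.1 v) =
      if inArrows ω v = 2 then vWeight a b c ω v else 0 := by
  unfold sixVertexTensor vWeight inArrows
  cases ω.2 (v.1, predF v.2) <;> cases ω.2 v <;> cases ω.1 (predF v.1, v.2) <;>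
    cases ω.1 v <;> simp

theorem ite_isSixVertex_eq_prod (ω : Cfg N M) :
    (if IsSixVertex ω then W a b c ω else 0) = ∏ v : Fin N × Fin M,
      sixVertexTensor a b c (ω.2 (v.1, predF v.2)) (ω.2 v) (ω.1 (predF v.1, v.2)) (ω.1 v) := by
  simp only [sixVertexTensor_eq_vWeight, W]
  by_cases h : IsSixVertex ω
  · rw [if_pos h]
    exact Finset.prod_congr rfl fun v _ ↦ (if_pos (h v)).symm
  · obtain ⟨v, hv⟩ := not_forall.mp h
    rw [if_neg h, Finset.prod_eq_zero (Finset.mem_univ v) (if_neg hv)]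

theorem Z_eq_trace_transferMatrix_pow [NeZero M] :
    Z N M a b c = (transferMatrix (sixVertexTensor a b c) N ^ M).trace := by
  let rows : (Fin N × Fin M → Bool) ≃ (Fin M → Fin N → Bool) :=
    ((Equiv.prodComm _ _).arrowCongr (Equiv.refl _)).trans (Equiv.curry _ _ _)
  simp only [trace_pow_eq_sum_cycles, transferMatrix, Finset.prod_univ_sum,
    Fintype.piFinset_univ, Z, ite_isSixVertex_eq_prod, Fintype.sum_prod_type (γ := ℝ)]
  rw [Finset.sum_comm, ← rows.symm.sum_comp]
  refine Finset.sum_congr rfl fun vertical _ ↦ ?_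
  rw [← rows.symm.sum_comp]
  refine Finset.sum_congr rfl fun horizontal _ ↦ ?_
  rw [Fintype.prod_prod_type, Finset.prod_comm]
  rfl

end PartitionFunction

section RayleighQuotient

open Matrix

variable {X : Type*} [Fintype X] {A : Matrix X X ℝ} {μ : ℝ}

/-- The numerical range of a real matrix: the values of its quadratic form on the unit sphere. -/
def numericalRange (A : Matrix X X ℝ) : Set ℝ :=
  (fun v : X → ℝ ↦ v ⬝ᵥ A *ᵥ v) '' {v | v ⬝ᵥ v = 1}

theorem dotProduct_abs_self (v : X → ℝ) : (fun x ↦ |v x|) ⬝ᵥ (fun x ↦ |v x|) = v ⬝ᵥ v := by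
  simp [dotProduct]

theorem abs_dotProduct_mulVec_le (hA₀ : ∀ x y, 0 ≤ A x y) (v : X → ℝ) :
    |v ⬝ᵥ A *ᵥ v| ≤ (fun x ↦ |v x|) ⬝ᵥ A *ᵥ fun x ↦ |v x| := by
  simp only [dotProduct, mulVec, Finset.mul_sum]
  refine (Finset.abs_sum_le_sum_abs _ _).trans (Finset.sum_le_sum fun x _ ↦ ?_)
  refine (Finset.abs_sum_le_sum_abs _ _).trans (Finset.sum_le_sum fun y _ ↦ le_of_eq ?_)
  rw [abs_mul, abs_mul, abs_of_nonneg (hA₀ x y)]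

theorem eigenvectorBasis_dotProduct_self [DecidableEq X] (hA : A.IsHermitian) (i : X) :
    ⇑(hA.eigenvectorBasis i) ⬝ᵥ ⇑(hA.eigenvectorBasis i) = 1 := by
  have unit := hA.eigenvectorBasis.orthonormal.1 i
  rw [← sq_eq_sq₀ (norm_nonneg _) zero_le_one, EuclideanSpace.real_norm_sq_eq] at unit
  simpa [dotProduct, ← sq] using unit

theorem eigenvectorBasis_dotProduct_mulVec [DecidableEq X] (hA : A.IsHermitian) (i : X) :
    ⇑(hA.eigenvectorBasis i) ⬝ᵥ A *ᵥ ⇑(hA.eigenvectorBasis i) = hA.eigenvalues i := by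
  rw [hA.mulVec_eigenvectorBasis, dotProduct_smul, eigenvectorBasis_dotProduct_self, smul_eq_mul,
    mul_one]

theorem posSemidef_smul_one_sub [DecidableEq X] (hA : A.IsHermitian)
    (hμ : ∀ i, hA.eigenvalues i ≤ μ) : (μ • (1 : Matrix X X ℝ) - A).PosSemidef := by
  have diagonalized : μ • (1 : Matrix X X ℝ) - A = Unitary.conjStarAlgAut ℝ _
      hA.eigenvectorUnitary (diagonal fun i ↦ μ - hA.eigenvalues i) := by
    conv_lhs => rw [hA.spectral_theorem]
    rw [← map_one (Unitary.conjStarAlgAut ℝ _ hA.eigenvectorUnitary), ← map_smul, ← map_sub,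
      smul_one_eq_diagonal, diagonal_sub]
    rfl
  rw [diagonalized, Unitary.conjStarAlgAut_apply]
  exact (PosSemidef.diagonal fun i ↦ sub_nonneg.mpr (hμ i)).mul_mul_conjTranspose_same _

theorem dotProduct_smul_one_sub_mulVec [DecidableEq X] (v : X → ℝ) :
    v ⬝ᵥ (μ • (1 : Matrix X X ℝ) - A) *ᵥ v = μ * (v ⬝ᵥ v) - v ⬝ᵥ A *ᵥ v := by
  rw [sub_mulVec, dotProduct_sub, smul_mulVec, one_mulVec, dotProduct_smul, smul_eq_mul]

theorem exists_eigenvalue_isGreatest_numericalRange [DecidableEq X] [Nonempty X]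
    (hA : A.IsHermitian) : ∃ i, IsGreatest (numericalRange A) (hA.eigenvalues i) ∧
      (hA.eigenvalues i • (1 : Matrix X X ℝ) - A).PosSemidef := by
  obtain ⟨i, -, hi⟩ := Finset.exists_max_image Finset.univ hA.eigenvalues Finset.univ_nonempty
  have psd := posSemidef_smul_one_sub hA fun j ↦ hi j (Finset.mem_univ j)
  refine ⟨i, ⟨⟨_, eigenvectorBasis_dotProduct_self hA i,
    eigenvectorBasis_dotProduct_mulVec hA i⟩, ?_⟩, psd⟩
  rintro _ ⟨v, hv : v ⬝ᵥ v = 1, rfl⟩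
  have nonneg := psd.dotProduct_mulVec_nonneg v
  rw [star_trivial, dotProduct_smul_one_sub_mulVec, hv, mul_one] at nonneg
  exact sub_nonneg.mp nonneg

theorem exists_isGreatest_numericalRange [Nonempty X] (hA : A.IsHermitian) :
    ∃ μ, IsGreatest (numericalRange A) μ := by
  classical
  obtain ⟨i, hi, -⟩ := exists_eigenvalue_isGreatest_numericalRange hA
  exact ⟨_, hi⟩

theorem mulVec_eq_smul_of_isGreatest [Nonempty X] (hA : A.IsHermitian)
    (hμ : IsGreatest (numericalRange A) μ) {ψ : X → ℝ} (hψ : ψ ⬝ᵥ ψ = 1)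
    (hψμ : ψ ⬝ᵥ A *ᵥ ψ = μ) : A *ᵥ ψ = μ • ψ := by
  classical
  obtain ⟨i, hi, psd⟩ := exists_eigenvalue_isGreatest_numericalRange hA
  rw [hi.unique hμ] at psd
  have in_kernel := (psd.dotProduct_mulVec_zero_iff ψ).mp <| by
    rw [star_trivial, dotProduct_smul_one_sub_mulVec, hψ, hψμ, mul_one, sub_self]
  rw [sub_mulVec, smul_mulVec, one_mulVec] at in_kernel
  exact (sub_eq_zero.mp in_kernel).symm

theorem exists_nonneg_eigenvector [Nonempty X] (hA : A.IsHermitian) (hA₀ : ∀ x y, 0 ≤ A x y) :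
    ∃ ψ : X → ℝ, (∀ x, 0 ≤ ψ x) ∧ ψ ⬝ᵥ ψ = 1 ∧ A *ᵥ ψ = (ψ ⬝ᵥ A *ᵥ ψ) • ψ := by
  obtain ⟨μ, hμ⟩ := exists_isGreatest_numericalRange hA
  obtain ⟨v, hv : v ⬝ᵥ v = 1, hvμ : v ⬝ᵥ A *ᵥ v = μ⟩ := hμ.1
  have unit := (dotProduct_abs_self v).trans hv
  have attains : (fun x ↦ |v x|) ⬝ᵥ A *ᵥ (fun x ↦ |v x|) = μ :=
    le_antisymm (hμ.2 ⟨_, unit, rfl⟩)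
      (hvμ ▸ (le_abs_self _).trans (abs_dotProduct_mulVec_le hA₀ v))
  exact ⟨_, fun x ↦ abs_nonneg (v x), unit,
    by rw [attains]; exact mulVec_eq_smul_of_isGreatest hA hμ unit attains⟩

end RayleighQuotient

section TraceOfPowers

open Matrix

variable {X : Type*} [Fintype X] [DecidableEq X] {A : Matrix X X ℝ} {μ : ℝ}

theorem trace_pow_eq_sum_eigenvalues (hA : A.IsHermitian) (k : ℕ) :
    (A ^ k).trace = ∑ i, hA.eigenvalues i ^ k := by
  conv_lhs => rw [hA.spectral_theorem, ← map_pow, Unitary.conjStarAlgAut_apply, trace_mul_comm,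
    ← mul_assoc, Unitary.coe_star_mul_self, one_mul, diagonal_pow, trace_diagonal]
  simp

theorem abs_eigenvalues_le (hA : A.IsHermitian) (hA₀ : ∀ x y, 0 ≤ A x y)
    (hμ : IsGreatest (numericalRange A) μ) (i : X) : |hA.eigenvalues i| ≤ μ := by
  rw [← eigenvectorBasis_dotProduct_mulVec hA]
  refine (abs_dotProduct_mulVec_le hA₀ _).trans (hμ.2 ⟨_, ?_, rfl⟩)
  exact (dotProduct_abs_self _).trans (eigenvectorBasis_dotProduct_self hA i)

theorem trace_pow_le (hA : A.IsHermitian) (hA₀ : ∀ x y, 0 ≤ A x y)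
    (hμ : IsGreatest (numericalRange A) μ) (k : ℕ) : (A ^ k).trace ≤ Fintype.card X * μ ^ k := by
  rw [trace_pow_eq_sum_eigenvalues hA, ← Finset.card_univ, ← nsmul_eq_mul]
  refine Finset.sum_le_card_nsmul _ _ _ fun i _ ↦ ?_
  calc hA.eigenvalues i ^ k ≤ |hA.eigenvalues i| ^ k := by
        rw [← abs_pow]
        exact le_abs_self _
    _ ≤ μ ^ k := by
        gcongr
        exact abs_eigenvalues_le hA hA₀ hμ i

theorem pow_le_trace_pow_of_even [Nonempty X] (hA : A.IsHermitian)
    (hμ : IsGreatest (numericalRange A) μ) {k : ℕ} (hk : Even k) : μ ^ k ≤ (A ^ k).trace := by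
  obtain ⟨i, hi, -⟩ := exists_eigenvalue_isGreatest_numericalRange hA
  rw [trace_pow_eq_sum_eigenvalues hA, hμ.unique hi]
  exact Finset.single_le_sum (f := fun j ↦ hA.eigenvalues j ^ k) (fun j _ ↦ hk.pow_nonneg _)
    (Finset.mem_univ i)

theorem matrix_pow_apply_nonneg (hA₀ : ∀ x y, 0 ≤ A x y) (k : ℕ) (x y : X) :
    0 ≤ (A ^ k) x y := by
  induction k generalizing y with
  | zero => simp only [pow_zero, one_apply]; positivity
  | succ k ih =>
    rw [pow_succ, mul_apply]
    exact Finset.sum_nonneg fun z _ ↦ mul_nonneg (ih z) (hA₀ z y)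

theorem monotone_trace_pow (hA₀ : ∀ x y, 0 ≤ A x y) (hA₁ : ∀ x, 1 ≤ A x x) :
    Monotone fun k ↦ (A ^ k).trace := by
  refine monotone_nat_of_le_succ fun k ↦ Finset.sum_le_sum fun x _ ↦ ?_
  calc (A ^ k) x x ≤ (A ^ k) x x * A x x :=
        le_mul_of_one_le_right (matrix_pow_apply_nonneg hA₀ k x x) (hA₁ x)
    _ ≤ (A ^ (k + 1)) x x := by
        rw [pow_succ, mul_apply]
        exact Finset.single_le_sum (f := fun z ↦ (A ^ k) x z * A z x)
          (fun z _ ↦ mul_nonneg (matrix_pow_apply_nonneg hA₀ k x z) (hA₀ z x)) (Finset.mem_univ x)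

theorem tendsto_div_natCast_of_abs_sub_le {u : ℕ → ℝ} {L K : ℝ} (h : ∀ n : ℕ, |u n - n * L| ≤ K) :
    Tendsto (fun n : ℕ ↦ u n / n) atTop (nhds L) := by
  rw [tendsto_iff_norm_sub_tendsto_zero]
  refine squeeze_zero' (.of_forall fun n ↦ norm_nonneg _) ?_
    (tendsto_const_div_atTop_nhds_zero_nat K)
  filter_upwards [eventually_gt_atTop 0] with n hn
  have hn' : (0 : ℝ) < n := by exact_mod_cast hn
  rw [Real.norm_eq_abs, show u n / n - L = (u n - n * L) / n by field_simp, abs_div,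
    abs_of_pos hn']
  gcongr
  exact h n

theorem tendsto_log_trace_pow_div [Nonempty X] (hA : A.IsHermitian) (hA₀ : ∀ x y, 0 ≤ A x y)
    (hA₁ : ∀ x, 1 ≤ A x x) (hμ : IsGreatest (numericalRange A) μ) :
    Tendsto (fun M : ℕ ↦ Real.log (A ^ M).trace / M) atTop (nhds (Real.log μ)) := by
  have one_le : 1 ≤ μ := by
    obtain ⟨x⟩ := ‹Nonempty X›
    exact (hA₁ x).trans (hμ.2 ⟨Pi.single x 1, by simp, by simp⟩)
  have log_nonneg : 0 ≤ Real.log μ := Real.log_nonneg one_le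
  have log_card_nonneg : 0 ≤ Real.log (Fintype.card X) := Real.log_natCast_nonneg _
  refine tendsto_div_natCast_of_abs_sub_le (K := Real.log (Fintype.card X) + Real.log μ)
    fun M ↦ ?_
  have lower : μ ^ (2 * (M / 2)) ≤ (A ^ M).trace :=
    (pow_le_trace_pow_of_even hA hμ (even_two_mul _)).trans
      (monotone_trace_pow hA₀ hA₁ (by lia))
  have log_lower := Real.log_le_log (by positivity) lower
  have log_upper := Real.log_le_log (lower.trans_lt' (by positivity)) (trace_pow_le hA hA₀ hμ M)
  rw [Real.log_pow] at log_lower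
  rw [Real.log_mul (by simp) (by positivity), Real.log_pow] at log_upper
  have half : (M : ℝ) - 1 ≤ (2 * (M / 2) : ℕ) := by
    rw [sub_le_iff_le_add]
    exact_mod_cast (by lia : M ≤ 2 * (M / 2) + 1)
  have := mul_le_mul_of_nonneg_right half log_nonneg
  rw [abs_le]
  constructor <;> linarith

end TraceOfPowers

section Strip

open Complex Asymptotics

variable {a b : ℝ} {f g : ℂ → ℂ}

/-- `f` grows at most exponentially in `|Im z|` at the ends of the vertical strip `a < Re z < b`,
which is far below the double-exponential threshold of the Phragmén–Lindelöf principle. -/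
def HasExpGrowth (a b : ℝ) (f : ℂ → ℂ) : Prop :=
  ∃ B : ℝ, f =O[comap (fun z : ℂ ↦ |z.im|) atTop ⊓ principal (re ⁻¹' Set.Ioo a b)]
    fun z ↦ Real.exp (B * |z.im|)

theorem HasExpGrowth.of_norm_le (K B : ℝ)
    (h : ∀ z : ℂ, a ≤ z.re → z.re ≤ b → 1 ≤ |z.im| → ‖f z‖ ≤ K * Real.exp (B * |z.im|)) :
    HasExpGrowth a b f := by
  refine ⟨B, .of_bound K ?_⟩
  rw [eventually_inf_principal]
  filter_upwards [tendsto_comap.eventually (eventually_ge_atTop 1)] with z hz hre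
  rw [Real.norm_of_nonneg (by positivity)]
  exact h z hre.1.le hre.2.le hz

theorem isBigO_exp_mul_abs_im {B B' : ℝ} (h : B ≤ B') (F : Filter ℂ) :
    (fun z : ℂ ↦ Real.exp (B * |z.im|)) =O[F] fun z ↦ Real.exp (B' * |z.im|) := by
  refine .of_norm_le fun z ↦ ?_
  rw [Real.norm_of_nonneg (by positivity)]
  gcongr

theorem HasExpGrowth.const (c : ℂ) : HasExpGrowth a b fun _ ↦ c :=
  .of_norm_le ‖c‖ 0 fun z _ _ _ ↦ by simp

theorem HasExpGrowth.id : HasExpGrowth a b fun z ↦ z := by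
  refine .of_norm_le (max |a| |b| + 1) 1 fun z h₁ h₂ h ↦ ?_
  have exp_ge := Real.add_one_le_exp |z.im|
  calc ‖z‖ ≤ |z.re| + |z.im| := norm_le_abs_re_add_abs_im z
    _ ≤ max |a| |b| * Real.exp |z.im| + Real.exp |z.im| := by
        gcongr
        · exact (abs_le_max_abs_abs h₁ h₂).trans
            (le_mul_of_one_le_right (by positivity) (by linarith))
        · linarith
    _ = _ := by ring_nf

theorem HasExpGrowth.add (hf : HasExpGrowth a b f) (hg : HasExpGrowth a b g) :
    HasExpGrowth a b fun z ↦ f z + g z := by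
  obtain ⟨B, hf⟩ := hf
  obtain ⟨B', hg⟩ := hg
  exact ⟨max B B', (hf.trans (isBigO_exp_mul_abs_im (le_max_left _ _) _)).add
    (hg.trans (isBigO_exp_mul_abs_im (le_max_right _ _) _))⟩

theorem HasExpGrowth.mul (hf : HasExpGrowth a b f) (hg : HasExpGrowth a b g) :
    HasExpGrowth a b fun z ↦ f z * g z := by
  obtain ⟨B, hf⟩ := hf
  obtain ⟨B', hg⟩ := hg
  exact ⟨B + B', (hf.mul hg).congr_right fun z ↦ by rw [← Real.exp_add, add_mul]⟩

theorem HasExpGrowth.sub (hf : HasExpGrowth a b f) (hg : HasExpGrowth a b g) :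
    HasExpGrowth a b fun z ↦ f z - g z := by
  simpa only [neg_one_mul, ← sub_eq_add_neg] using hf.add ((HasExpGrowth.const (-1)).mul hg)

theorem HasExpGrowth.pow (hf : HasExpGrowth a b f) (n : ℕ) : HasExpGrowth a b fun z ↦ f z ^ n := by
  induction n with
  | zero => simpa only [pow_zero] using HasExpGrowth.const 1
  | succ n ih => simpa only [pow_succ] using ih.mul hf

theorem HasExpGrowth.sum {ι : Type*} (s : Finset ι) {F : ι → ℂ → ℂ}
    (h : ∀ i ∈ s, HasExpGrowth a b (F i)) : HasExpGrowth a b fun z ↦ ∑ i ∈ s, F i z := by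
  induction s using Finset.cons_induction with
  | empty => simpa only [Finset.sum_empty] using HasExpGrowth.const 0
  | cons i s hi ih =>
    simp only [Finset.sum_cons]
    exact (h i (Finset.mem_cons_self i s)).add (ih fun j hj ↦ h j (Finset.mem_cons_of_mem hj))

theorem HasExpGrowth.prod {ι : Type*} (s : Finset ι) {F : ι → ℂ → ℂ}
    (h : ∀ i ∈ s, HasExpGrowth a b (F i)) : HasExpGrowth a b fun z ↦ ∏ i ∈ s, F i z := by
  induction s using Finset.cons_induction with
  | empty => simpa only [Finset.prod_empty] using HasExpGrowth.const 1
  | cons i s hi ih =>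
    simp only [Finset.prod_cons]
    exact (h i (Finset.mem_cons_self i s)).mul (ih fun j hj ↦ h j (Finset.mem_cons_of_mem hj))

theorem norm_le_of_hasExpGrowth {C : ℝ} (hab : a < b)
    (hd : ∀ z : ℂ, a ≤ z.re → z.re ≤ b → DifferentiableAt ℂ f z) (hf : HasExpGrowth a b f)
    (ha : ∀ z : ℂ, z.re = a → ‖f z‖ ≤ C) (hb : ∀ z : ℂ, z.re = b → ‖f z‖ ≤ C)
    {z : ℂ} (hza : a ≤ z.re) (hzb : z.re ≤ b) : ‖f z‖ ≤ C := by
  refine PhragmenLindelof.vertical_strip ?_ ?_ ha hb hza hzb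
  · refine ⟨fun z hz ↦ (hd z hz.1.le hz.2.le).differentiableWithinAt, ?_⟩
    rw [closure_preimage_re, closure_Ioo hab.ne]
    exact fun z hz ↦ (hd z hz.1 hz.2).continuousAt.continuousWithinAt
  · obtain ⟨B, hf⟩ := hf
    have hc : 0 < π / (b - a) := div_pos Real.pi_pos (sub_pos.mpr hab)
    set c := π / (b - a) / 2
    have c_pos : 0 < c := half_pos hc
    refine ⟨c, half_lt_self hc, |B| / c, hf.trans (.of_norm_le fun z ↦ ?_)⟩
    rw [Real.norm_of_nonneg (by positivity)]
    refine Real.exp_le_exp.mpr ?_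
    calc B * |z.im| ≤ |B| * |z.im| := by gcongr; exact le_abs_self B
      _ = |B| / c * (c * |z.im|) := by field_simp
      _ ≤ |B| / c * Real.exp (c * |z.im|) := by
          gcongr
          linarith [Real.add_one_le_exp (c * |z.im|)]

theorem norm_le_mul_norm_of_hasExpGrowth {C : ℝ} (hab : a < b)
    (hf : ∀ z : ℂ, a ≤ z.re → z.re ≤ b → DifferentiableAt ℂ f z)
    (hg : ∀ z : ℂ, a ≤ z.re → z.re ≤ b → DifferentiableAt ℂ g z)
    (hg₀ : ∀ z : ℂ, a ≤ z.re → z.re ≤ b → g z ≠ 0)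
    (hf_growth : HasExpGrowth a b f) (hg_growth : HasExpGrowth a b fun z ↦ (g z)⁻¹)
    (h : ∀ z : ℂ, z.re = a ∨ z.re = b → ‖f z‖ ≤ C * ‖g z‖)
    {z : ℂ} (hza : a ≤ z.re) (hzb : z.re ≤ b) : ‖f z‖ ≤ C * ‖g z‖ := by
  have quotient_le {z : ℂ} (hza : a ≤ z.re) (hzb : z.re ≤ b) :
      ‖f z * (g z)⁻¹‖ ≤ C ↔ ‖f z‖ ≤ C * ‖g z‖ := by
    rw [norm_mul, norm_inv, ← div_eq_mul_inv, div_le_iff₀ (norm_pos_iff.mpr (hg₀ z hza hzb))]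
  rw [← quotient_le hza hzb]
  refine norm_le_of_hasExpGrowth hab
    (fun z h₁ h₂ ↦ (hf z h₁ h₂).mul ((hg z h₁ h₂).inv (hg₀ z h₁ h₂)))
    (hf_growth.mul hg_growth) (fun z hz ↦ ?_) (fun z hz ↦ ?_) hza hzb
  · exact (quotient_le hz.ge (hz.trans_le hab.le)).mpr (h z (.inl hz))
  · exact (quotient_le (hab.le.trans hz.ge) hz.le).mpr (h z (.inr hz))

variable {σ κ : Type*} [Fintype κ] {m : ℂ → σ → σ → Matrix κ κ ℂ} {N : ℕ}

theorem HasExpGrowth.transferMatrix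
    (h : ∀ s s' k k', HasExpGrowth a b fun w ↦ m w s s' k k') (x y : Fin N → σ) :
    HasExpGrowth a b fun w ↦ transferMatrix (m w) N x y :=
  .sum _ fun _ _ ↦ .prod _ fun _ _ ↦ h _ _ _ _

theorem HasExpGrowth.expectation {X : Type*} [Fintype X] {T : ℂ → Matrix X X ℂ}
    (h : ∀ x y, HasExpGrowth a b fun w ↦ T w x y) (ψ : X → ℝ) :
    HasExpGrowth a b fun w ↦ expectation (T w) ψ :=
  .sum _ fun x _ ↦ .mul (.const _) (.sum _ fun y _ ↦ (h x y).mul (.const _))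

theorem differentiableAt_transferMatrix {z : ℂ}
    (h : ∀ s s' k k', DifferentiableAt ℂ (fun w ↦ m w s s' k k') z) (x y : Fin N → σ) :
    DifferentiableAt ℂ (fun w ↦ transferMatrix (m w) N x y) z :=
  .fun_sum fun _ _ ↦ .fun_finsetProd fun _ _ ↦ h _ _ _ _

theorem differentiableAt_expectation {X : Type*} [Fintype X] {T : ℂ → Matrix X X ℂ} {z : ℂ}
    (h : ∀ x y, DifferentiableAt ℂ (fun w ↦ T w x y) z) (ψ : X → ℝ) :
    DifferentiableAt ℂ (fun w ↦ expectation (T w) ψ) z :=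
  .fun_sum fun x _ ↦ .mul (differentiableAt_const _)
    (.fun_sum fun y _ ↦ (h x y).mul (differentiableAt_const _))

end Strip

section SixVertexBounds

theorem transferMatrix_sixVertexTensor_transpose {R : Type*} [CommRing R] (a b c : R) (N : ℕ) :
    (transferMatrix (sixVertexTensor a b c) N).transpose =
      transferMatrix (sixVertexTensor b a c) N := by
  ext x y
  -- reversing all horizontal arrows exchanges the vertices of types `a` and `b`
  rw [Matrix.transpose_apply, transferMatrix, transferMatrix,
    ← ((Equiv.refl (Fin N)).arrowCongr Equiv.boolNot).sum_comp]
  refine Finset.sum_congr rfl fun h _ ↦ Finset.prod_congr rfl fun i _ ↦ ?_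
  simp only [Equiv.arrowCongr_apply, Function.comp_apply, Equiv.refl_symm, Equiv.coe_refl, id,
    Equiv.boolNot_apply]
  unfold sixVertexTensor
  cases x i <;> cases y i <;> cases h (predF i) <;> cases h i <;> rfl

theorem expectation_sixVertexTensor_comm (a b c : ℂ) {N : ℕ} (ψ : (Fin N → Bool) → ℝ) :
    expectation (transferMatrix (sixVertexTensor a b c) N) ψ =
      expectation (transferMatrix (sixVertexTensor b a c) N) ψ := by
  rw [← transferMatrix_sixVertexTensor_transpose, expectation_transpose]

theorem norm_sq_add_norm_sq_of_re_eq_zero {b : ℂ} (hb : b.re = 0) (x y : ℂ) :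
    ‖x + b * y‖ ^ 2 + ‖b * x + y‖ ^ 2 = (‖b‖ ^ 2 + 1) * (‖x‖ ^ 2 + ‖y‖ ^ 2) := by
  simp only [← Complex.normSq_eq_norm_sq, Complex.normSq_apply, Complex.add_re, Complex.add_im,
    Complex.mul_re, Complex.mul_im, hb]
  ring

theorem isL2Bounded_sixVertexTensor {a b : ℂ} {C : ℝ} (hb : b.re = 0) (haC : ‖a‖ ^ 2 ≤ C ^ 2)
    (hbC : ‖b‖ ^ 2 + 1 ≤ C ^ 2) : IsL2Bounded (sixVertexTensor a b 1) C := by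
  intro f
  have antiparallel := norm_sq_add_norm_sq_of_re_eq_zero hb (f true false) (f false true)
  calc _ = ‖a‖ ^ 2 * (‖f true true‖ ^ 2 + ‖f false false‖ ^ 2) +
        (‖b‖ ^ 2 + 1) * (‖f true false‖ ^ 2 + ‖f false true‖ ^ 2) := by
        rw [← antiparallel]
        simp [sixVertexTensor, mul_comm b, mul_pow]
        ring
    _ ≤ C ^ 2 * (‖f true true‖ ^ 2 + ‖f false false‖ ^ 2) +
        C ^ 2 * (‖f true false‖ ^ 2 + ‖f false true‖ ^ 2) := by gcongr
    _ = _ := by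
        simp only [Fintype.sum_bool]
        ring

end SixVertexBounds

section GammaGrowth

open Complex

theorem norm_Gamma_le_Gamma_re {s : ℂ} (hs : 0 < s.re) : ‖Gamma s‖ ≤ Real.Gamma s.re := by
  rw [Gamma_eq_integral hs, Real.Gamma_eq_integral hs, GammaIntegral]
  refine (norm_integral_le_integral_norm _).trans_eq
    (setIntegral_congr_fun measurableSet_Ioi fun x hx ↦ ?_)
  simp only [norm_mul, norm_real, Real.norm_eq_abs, Real.abs_exp]
  rw [norm_cpow_eq_rpow_re_of_pos hx]
  simp

theorem exists_norm_Gamma_le {c d : ℝ} (hc : 0 < c) :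
    ∃ K : ℝ, ∀ s : ℂ, c ≤ s.re → s.re ≤ d → ‖Gamma s‖ ≤ K := by
  have continuous : ContinuousOn Real.Gamma (Set.Icc c d) := fun x hx ↦
    (Real.differentiableAt_Gamma fun m ↦ ((neg_nonpos.mpr m.cast_nonneg).trans_lt
      (hc.trans_le hx.1)).ne').continuousAt.continuousWithinAt
  obtain ⟨K, hK⟩ := isCompact_Icc.bddAbove_image continuous
  exact ⟨K, fun s h₁ h₂ ↦
    (norm_Gamma_le_Gamma_re (hc.trans_le h₁)).trans (hK ⟨s.re, ⟨h₁, h₂⟩, rfl⟩)⟩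

theorem norm_sin_le_exp_abs_im (z : ℂ) : ‖sin z‖ ≤ Real.exp |z.im| := by
  have exp_neg_le : ‖exp (-z * I)‖ ≤ Real.exp |z.im| := by
    rw [norm_exp]
    simpa using le_abs_self z.im
  have exp_le : ‖exp (z * I)‖ ≤ Real.exp |z.im| := by
    rw [norm_exp]
    simpa using neg_le_abs z.im
  rw [sin, norm_div, norm_mul, norm_I, mul_one, norm_ofNat]
  linarith [norm_sub_le (exp (-z * I)) (exp (z * I))]

theorem inv_Gamma_eq_sin_mul_Gamma {s : ℂ} (hs : s.im ≠ 0) :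
    (Gamma s)⁻¹ = sin (π * s) * Gamma (2 - s) / (π * (1 - s)) := by
  have ne_int (n : ℤ) : s ≠ n := fun h ↦ hs (by simp [h])
  have one_sub_ne : 1 - s ≠ 0 := sub_ne_zero.mpr fun h ↦ ne_int 1 (by simp [← h])
  have Gamma_ne : Gamma s ≠ 0 := Gamma_ne_zero fun m ↦ by simpa using ne_int (-m)
  have pi_ne : (π : ℂ) ≠ 0 := ofReal_ne_zero.mpr Real.pi_ne_zero
  have sin_ne : sin (π * s) ≠ 0 := by
    rw [Ne, sin_eq_zero_iff]
    rintro ⟨k, hk⟩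
    exact ne_int k (mul_left_cancel₀ pi_ne (by rw [hk, mul_comm]))
  have reflection := Gamma_mul_Gamma_one_sub s
  rw [eq_div_iff sin_ne] at reflection
  have recurrence := Gamma_add_one (1 - s) one_sub_ne
  rw [show 2 - s = 1 - s + 1 by ring, recurrence, inv_eq_one_div,
    div_eq_div_iff Gamma_ne (mul_ne_zero pi_ne one_sub_ne)]
  linear_combination (-(1 - s)) * reflection

theorem exists_norm_inv_Gamma_le (c : ℝ) {d : ℝ} (hd : d < 2) :
    ∃ K : ℝ, ∀ s : ℂ, c ≤ s.re → s.re ≤ d → 1 / 2 ≤ |s.im| →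
      ‖(Gamma s)⁻¹‖ ≤ K * Real.exp (π * |s.im|) := by
  obtain ⟨K, hK⟩ := exists_norm_Gamma_le (c := 2 - d) (d := 2 - c) (by linarith)
  refine ⟨K, fun s h₁ h₂ h₃ ↦ ?_⟩
  have Gamma_le : ‖Gamma (2 - s)‖ ≤ K := hK _ (by simp; linarith) (by simp; linarith)
  have sin_le : ‖sin (π * s)‖ ≤ Real.exp (π * |s.im|) := by
    simpa [abs_mul, abs_of_pos Real.pi_pos] using norm_sin_le_exp_abs_im (π * s)
  have one_le : 1 ≤ ‖(π : ℂ) * (1 - s)‖ := by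
    have im_le : |s.im| ≤ ‖1 - s‖ := by simpa using abs_im_le_norm (1 - s)
    rw [norm_mul, norm_real, Real.norm_of_nonneg Real.pi_pos.le]
    nlinarith [Real.pi_gt_three]
  rw [inv_Gamma_eq_sin_mul_Gamma (abs_pos.mp (by linarith)), norm_div, norm_mul]
  calc _ ≤ ‖sin (π * s)‖ * ‖Gamma (2 - s)‖ := div_le_self (by positivity) one_le
    _ ≤ Real.exp (π * |s.im|) * K := by gcongr
    _ = _ := mul_comm _ _

variable {a b r t : ℝ}

theorem hasExpGrowth_Gamma_affine (h : ∀ x, a ≤ x → x ≤ b → 1 / 2 ≤ r + t * x ∧ r + t * x ≤ 3 / 2) :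
    HasExpGrowth a b fun w ↦ Gamma (r + t * w) := by
  obtain ⟨K, hK⟩ := exists_norm_Gamma_le (c := 1 / 2) (d := 3 / 2) (by norm_num)
  refine .of_norm_le K 0 fun w h₁ h₂ _ ↦ ?_
  obtain ⟨lower, upper⟩ := h w.re h₁ h₂
  simpa using hK (r + t * w) (by simpa using lower) (by simpa using upper)

theorem hasExpGrowth_inv_Gamma_affine (ht : 1 / 2 ≤ |t|)
    (h : ∀ x, a ≤ x → x ≤ b → 1 / 2 ≤ r + t * x ∧ r + t * x ≤ 3 / 2) :
    HasExpGrowth a b fun w ↦ (Gamma (r + t * w))⁻¹ := by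
  obtain ⟨K, hK⟩ := exists_norm_inv_Gamma_le (1 / 2) (d := 3 / 2) (by norm_num)
  refine .of_norm_le K (π * |t|) fun w h₁ h₂ h_im ↦ ?_
  obtain ⟨lower, upper⟩ := h w.re h₁ h₂
  have bound := hK (r + t * w) (by simpa using lower) (by simpa using upper)
  simp only [add_im, ofReal_im, zero_add, im_ofReal_mul, abs_mul] at bound
  rw [mul_assoc]
  exact bound (by nlinarith)

end GammaGrowth

section Kappa

open Complex

/-- The solution of `|κ(w)|² = 1 + (Im w)²` on both sides of the strip `0 ≤ Re w ≤ 1` that has no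
zeros in the strip. The free energy per site will be `log (2 * ‖κ(1/2)‖)`. -/
def kappa (w : ℂ) : ℂ :=
  2 * Gamma (1 + w / 2) * Gamma (3 / 2 - w / 2) / (Gamma (1 / 2 + w / 2) * Gamma (1 - w / 2))

theorem two_mul_kappa_half :
    2 * kappa (1 / 2) = ((2 * Real.Gamma (5 / 4) / Real.Gamma (3 / 4)) ^ 2 : ℝ) := by
  unfold kappa
  push_cast [← Gamma_ofReal]
  norm_num
  ring

theorem kappa_one_sub (w : ℂ) : kappa (1 - w) = kappa w := by
  unfold kappa
  rw [show 1 + (1 - w) / 2 = 3 / 2 - w / 2 by ring, show 3 / 2 - (1 - w) / 2 = 1 + w / 2 by ring,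
    show 1 / 2 + (1 - w) / 2 = 1 - w / 2 by ring, show 1 - (1 - w) / 2 = 1 / 2 + w / 2 by ring]
  ring

theorem kappa_conj (w : ℂ) : kappa (starRingEnd ℂ w) = starRingEnd ℂ (kappa w) := by
  unfold kappa
  simp only [map_div₀, map_mul, ← Gamma_conj, map_add, map_sub, map_one, map_ofNat]

variable {w : ℂ}

theorem kappa_ne_zero (h₀ : 0 ≤ w.re) (h₁ : w.re ≤ 1) : kappa w ≠ 0 := by
  refine div_ne_zero (mul_ne_zero (mul_ne_zero two_ne_zero ?_) ?_) (mul_ne_zero ?_ ?_)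
  all_goals
    refine Gamma_ne_zero_of_re_pos ?_
    norm_num
    linarith

theorem differentiableAt_Gamma_of_re_pos {s : ℂ} (hs : 0 < s.re) : DifferentiableAt ℂ Gamma s :=
  differentiableAt_Gamma s fun m h ↦ by
    rw [h, neg_re, natCast_re] at hs
    linarith [m.cast_nonneg (α := ℝ)]

theorem differentiableAt_kappa (h₀ : 0 ≤ w.re) (h₁ : w.re ≤ 1) : DifferentiableAt ℂ kappa w := by
  have Gamma_comp {u : ℂ → ℂ} (hu : DifferentiableAt ℂ u w) (hu₀ : 0 < (u w).re) :
      DifferentiableAt ℂ (fun w ↦ Gamma (u w)) w :=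
    (differentiableAt_Gamma_of_re_pos hu₀).comp w hu
  refine .div (.mul (.mul (by fun_prop) ?_) ?_) (.mul ?_ ?_) (mul_ne_zero ?_ ?_)
  case refine_5 | refine_6 =>
    refine Gamma_ne_zero_of_re_pos ?_
    norm_num
    linarith
  all_goals
    refine Gamma_comp (by fun_prop) ?_
    norm_num
    linarith

theorem kappa_mul_kappa_neg (h : w.re = 0) : kappa w * kappa (-w) = 1 - w ^ 2 := by
  have minus_ne : 1 / 2 - w / 2 ≠ 0 := fun h' ↦ by simpa [h] using congrArg re h'
  have plus_ne : 1 / 2 + w / 2 ≠ 0 := fun h' ↦ by simpa [h] using congrArg re h'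
  have := Gamma_ne_zero_of_re_pos (s := 1 / 2 - w / 2) (by simp [h])
  have := Gamma_ne_zero_of_re_pos (s := 1 / 2 + w / 2) (by simp [h])
  have := Gamma_ne_zero_of_re_pos (s := 1 - w / 2) (by simp [h])
  have := Gamma_ne_zero_of_re_pos (s := 1 + w / 2) (by simp [h])
  unfold kappa
  rw [neg_div, sub_neg_eq_add, sub_neg_eq_add, ← sub_eq_add_neg, ← sub_eq_add_neg,
    show 3 / 2 - w / 2 = (1 / 2 - w / 2) + 1 by ring,
    show 3 / 2 + w / 2 = (1 / 2 + w / 2) + 1 by ring, Gamma_add_one _ minus_ne,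
    Gamma_add_one _ plus_ne]
  generalize Gamma (1 / 2 - w / 2) = A, Gamma (1 / 2 + w / 2) = B, Gamma (1 - w / 2) = C,
    Gamma (1 + w / 2) = D at *
  field_simp
  ring

theorem norm_sq_kappa (h : w.re = 0 ∨ w.re = 1) : ‖kappa w‖ ^ 2 = 1 + w.im ^ 2 := by
  wlog h₀ : w.re = 0 generalizing w
  · have h₁ : w.re = 1 := h.resolve_left h₀
    rw [← kappa_one_sub, this (w := 1 - w) (by simp [h₁]) (by simp [h₁])]
    simp
  have conj_eq : starRingEnd ℂ w = -w := by apply Complex.ext <;> simp [h₀]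
  have product := kappa_mul_kappa_neg h₀
  rw [← conj_eq, kappa_conj, mul_conj, normSq_eq_norm_sq] at product
  rw [← ofReal_re (‖kappa w‖ ^ 2), product]
  simp [sq, h₀]

theorem hasExpGrowth_kappa : HasExpGrowth 0 1 kappa := by
  have growth := (((HasExpGrowth.const 2).mul
    (hasExpGrowth_Gamma_affine (a := 0) (b := 1) (r := 1) (t := 1 / 2) ?_)).mul
    (hasExpGrowth_Gamma_affine (r := 3 / 2) (t := -1 / 2) ?_)).mul
    ((hasExpGrowth_inv_Gamma_affine (r := 1 / 2) (t := 1 / 2) ?_ ?_).mul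
    (hasExpGrowth_inv_Gamma_affine (r := 1) (t := -1 / 2) ?_ ?_))
  · convert growth using 2 with w
    rw [kappa, div_eq_mul_inv, mul_inv]
    push_cast
    ring_nf
  all_goals grind

theorem hasExpGrowth_inv_kappa : HasExpGrowth 0 1 fun w ↦ (kappa w)⁻¹ := by
  have growth := (((HasExpGrowth.const 2⁻¹).mul
    (hasExpGrowth_inv_Gamma_affine (a := 0) (b := 1) (r := 1) (t := 1 / 2) ?_ ?_)).mul
    (hasExpGrowth_inv_Gamma_affine (r := 3 / 2) (t := -1 / 2) ?_ ?_)).mul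
    ((hasExpGrowth_Gamma_affine (r := 1 / 2) (t := 1 / 2) ?_).mul
    (hasExpGrowth_Gamma_affine (r := 1) (t := -1 / 2) ?_))
  · convert growth using 2 with w
    rw [kappa, inv_div, div_eq_mul_inv, mul_inv, mul_inv]
    push_cast
    ring_nf
  all_goals grind

end Kappa

section UpperBound

variable {N : ℕ} (ψ : (Fin N → Bool) → ℝ)

theorem hasExpGrowth_sixVertexTensor {p q : ℝ} {a b c : ℂ → ℂ} (ha : HasExpGrowth p q a)
    (hb : HasExpGrowth p q b) (hc : HasExpGrowth p q c) (s s' h h' : Bool) :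
    HasExpGrowth p q fun w ↦ sixVertexTensor (a w) (b w) (c w) s s' h h' := by
  unfold sixVertexTensor
  split_ifs <;> first | assumption | exact .const 0

theorem differentiableAt_sixVertexTensor {a b c : ℂ → ℂ} {z : ℂ} (ha : DifferentiableAt ℂ a z)
    (hb : DifferentiableAt ℂ b z) (hc : DifferentiableAt ℂ c z) (s s' h h' : Bool) :
    DifferentiableAt ℂ (fun w ↦ sixVertexTensor (a w) (b w) (c w) s s' h h') z := by
  unfold sixVertexTensor
  split_ifs <;> first | assumption | exact differentiableAt_const _

theorem norm_expectation_le_kappa_pow_of_re_eq_zero [NeZero N] {w : ℂ} (hw : w.re = 0) :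
    ‖expectation (transferMatrix (sixVertexTensor (1 - w) w 1) N) ψ‖ ≤
      2 * (ψ ⬝ᵥ ψ) * ‖kappa w ^ N‖ := by
  have bounded : IsL2Bounded (sixVertexTensor (1 - w) w 1) ‖kappa w‖ := by
    apply isL2Bounded_sixVertexTensor hw <;>
    · rw [norm_sq_kappa (.inl hw), ← Complex.normSq_eq_norm_sq, Complex.normSq_apply]
      simp [hw, sq, add_comm]
  refine (norm_expectation_transferMatrix_le (norm_nonneg _) bounded ψ).trans_eq ?_
  rw [Fintype.card_bool, norm_pow]
  push_cast
  ring

theorem norm_expectation_le_kappa_pow [NeZero N] {w : ℂ} (h₀ : 0 ≤ w.re) (h₁ : w.re ≤ 1) :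
    ‖expectation (transferMatrix (sixVertexTensor (1 - w) w 1) N) ψ‖ ≤
      2 * (ψ ⬝ᵥ ψ) * ‖kappa w ^ N‖ := by
  have growth : HasExpGrowth 0 1 fun w ↦
      expectation (transferMatrix (sixVertexTensor (1 - w) w 1) N) ψ :=
    .expectation (.transferMatrix
      (hasExpGrowth_sixVertexTensor (.sub (.const 1) .id) .id (.const 1))) ψ
  refine norm_le_mul_norm_of_hasExpGrowth (g := fun z ↦ kappa z ^ N) one_pos
    (fun z _ _ ↦ differentiableAt_expectation (differentiableAt_transferMatrix
      (differentiableAt_sixVertexTensor (by fun_prop) (by fun_prop) (by fun_prop))) ψ)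
    (fun z h₀ h₁ ↦ (differentiableAt_kappa h₀ h₁).pow N)
    (fun z h₀ h₁ ↦ pow_ne_zero N (kappa_ne_zero h₀ h₁)) growth
    (by simpa only [← inv_pow] using hasExpGrowth_inv_kappa.pow N) (fun z hz ↦ ?_) h₀ h₁
  rcases hz with hz | hz
  · exact norm_expectation_le_kappa_pow_of_re_eq_zero ψ hz
  · rw [expectation_sixVertexTensor_comm, ← kappa_one_sub]
    simpa only [sub_sub_cancel] using
      norm_expectation_le_kappa_pow_of_re_eq_zero ψ (w := 1 - z) (by simp [hz])

end UpperBound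

section YangBaxter

open Matrix

/-- The intertwiner of the Yang–Baxter equation on a pair of horizontal spins: it multiplies equal
spins by `α` and mixes opposite spins with weight `q`. -/
def intertwiner {R : Type*} [CommRing R] (α q : R) : Matrix (Bool × Bool) (Bool × Bool) R :=
  fun p p' ↦ if p.1 = p.2 then (if p = p' then α else 0) else
    (if p = p' then 1 else if p'.1 ≠ p'.2 then q else 0)

theorem yang_baxter {R : Type*} [CommRing R] {a b a' b' α q : R} (h₁ : α * a = a' + q * b)
    (h₂ : α * b' = b + q * a') (h₃ : q = a * b' - a' * b) (s s'' : Bool) :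
    (∑ s', kroneckerMap (· * ·) (sixVertexTensor a b 1 s s') (sixVertexTensor a' b' 1 s' s'')) *
        intertwiner α q =
      intertwiner α q *
        ∑ s', kroneckerMap (· * ·) (sixVertexTensor a' b' 1 s s')
          (sixVertexTensor a b 1 s' s'') := by
  ext ⟨p₁, p₂⟩ ⟨r₁, r₂⟩
  simp only [mul_apply, Fintype.sum_prod_type, Fintype.sum_bool, Matrix.add_apply,
    kroneckerMap_apply, sixVertexTensor, intertwiner]
  cases s <;> cases s'' <;> cases p₁ <;> cases p₂ <;> cases r₁ <;> cases r₂ <;> simp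
  all_goals grind

theorem intertwiner_mul_inverse {K : Type*} [Field K] {α q : K} (hα : α ≠ 0) (hq : 1 - q ^ 2 ≠ 0) :
    intertwiner α q * of (fun p p' ↦ if p.1 = p.2 then (if p = p' then α⁻¹ else 0) else
      (if p = p' then (1 - q ^ 2)⁻¹ else if p'.1 ≠ p'.2 then -q * (1 - q ^ 2)⁻¹ else 0)) = 1 := by
  ext ⟨p₁, p₂⟩ ⟨r₁, r₂⟩
  simp only [mul_apply, Fintype.sum_prod_type, Fintype.sum_bool, intertwiner, one_apply, of_apply]
  cases p₁ <;> cases p₂ <;> cases r₁ <;> cases r₂ <;> simp <;> field_simp <;> ring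

theorem commute_transferMatrix_sixVertexTensor {K : Type*} [Field K] {N : ℕ} [NeZero N]
    {a b a' b' α q : K} (h₁ : α * a = a' + q * b) (h₂ : α * b' = b + q * a')
    (h₃ : q = a * b' - a' * b) (hα : α ≠ 0) (hq : 1 - q ^ 2 ≠ 0) :
    Commute (transferMatrix (sixVertexTensor a b 1) N)
      (transferMatrix (sixVertexTensor a' b' 1) N) := by
  have inverse := intertwiner_mul_inverse hα hq
  rw [Commute, SemiconjBy, transferMatrix_mul, transferMatrix_mul]
  exact transferMatrix_eq_of_intertwine inverse (mul_eq_one_comm.mp inverse)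
    (yang_baxter h₁ h₂ h₃)

end YangBaxter

section Fusion

open Matrix

variable {K : Type*} [Field K]

/-- The local tensor obtained by projecting two six-vertex rows, at spectral parameters `w` and
`1 + w`, onto the triplet of their horizontal spins. -/
def fusedTensor (a b d γ : K) : Bool → Bool → Matrix (Fin 3) (Fin 3) K
  | true, true => !![-a, 0, 0; 0, -b, 0; 0, 0, d]
  | false, false => !![d, 0, 0; 0, -b, 0; 0, 0, -a]
  | true, false => !![0, 0, 0; -γ, 0, 0; 0, -γ, 0]
  | false, true => !![0, γ, 0; 0, 0, γ; 0, 0, 0]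

/-- The change of basis from pairs of horizontal spins to triplet (`Fin 3`) and singlet (`Unit`),
in which the product of two six-vertex tensors is block triangular. -/
def fusionBasis (γ : K) : Matrix (Bool × Bool) (Fin 3 ⊕ Unit) K
  | (true, true), .inl 0 => 1
  | (true, false), .inl 1 => γ
  | (false, false), .inl 2 => 1
  | (true, false), .inr _ => 1
  | (false, true), .inr _ => 1
  | _, _ => 0

/-- The inverse of `fusionBasis`. -/
def fusionBasisInv (γ : K) : Matrix (Fin 3 ⊕ Unit) (Bool × Bool) K
  | .inl 0, (true, true) => 1
  | .inl 1, (true, false) => γ⁻¹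
  | .inl 1, (false, true) => -γ⁻¹
  | .inl 2, (false, false) => 1
  | .inr _, (false, true) => 1
  | _, _ => 0

theorem fusionBasis_mul_fusionBasisInv {γ : K} (hγ : γ ≠ 0) :
    fusionBasis γ * fusionBasisInv γ = 1 := by
  ext ⟨p₁, p₂⟩ ⟨r₁, r₂⟩
  simp only [mul_apply, Fintype.sum_sum_type, Fin.sum_univ_three, Finset.univ_unique,
    Finset.sum_singleton]
  cases p₁ <;> cases p₂ <;> cases r₁ <;> cases r₂ <;>
    simp [fusionBasis, fusionBasisInv, hγ, one_apply]

theorem fusionBasisInv_mul_fusionBasis {γ : K} (hγ : γ ≠ 0) :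
    fusionBasisInv γ * fusionBasis γ = 1 := by
  ext (p | p) (r | r) <;> simp only [mul_apply, Fintype.sum_prod_type, Fintype.sum_bool]
  · fin_cases p <;> fin_cases r <;> simp [fusionBasis, fusionBasisInv, hγ]
  · fin_cases p <;> simp [fusionBasis, fusionBasisInv]
  · fin_cases r <;> simp [fusionBasis, fusionBasisInv]
  · simp [fusionBasis, fusionBasisInv]

theorem exists_fusion_intertwine {a b d γ : K} (h₁ : a * d = 1 - b ^ 2) (h₂ : d - a = γ ^ 2 * b)
    (s s'' : Bool) :
    ∃ B : Matrix Unit (Fin 3) K,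
      (∑ s', kroneckerMap (· * ·) (sixVertexTensor a b 1 s s') (sixVertexTensor (-b) d 1 s' s'')) *
          fusionBasis γ =
        fusionBasis γ * fromBlocks (b • fusedTensor a b d γ s s'') 0 B
          ((if s = s'' then 1 - b ^ 2 else 0) • 1) := by
  let product := ∑ s',
    kroneckerMap (· * ·) (sixVertexTensor a b 1 s s') (sixVertexTensor (-b) d 1 s' s'')
  refine ⟨of fun _ j ↦ (product * fusionBasis γ) (false, true) (.inl j), ?_⟩
  ext ⟨p₁, p₂⟩ (r | r) <;>
  simp only [product, mul_apply, Fintype.sum_sum_type, Fin.sum_univ_three, Finset.univ_unique,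
    Finset.sum_singleton, fromBlocks_apply₁₁, fromBlocks_apply₁₂, fromBlocks_apply₂₁,
    fromBlocks_apply₂₂, of_apply, Fintype.sum_prod_type, Fintype.sum_bool, Matrix.add_apply,
    kroneckerMap_apply, sixVertexTensor, Matrix.smul_apply]
  · fin_cases r <;> cases s <;> cases s'' <;> cases p₁ <;> cases p₂ <;>
      simp [fusionBasis, fusedTensor]
    all_goals grind
  · cases s <;> cases s'' <;> cases p₁ <;> cases p₂ <;> simp [fusionBasis]
    all_goals grind

theorem transferMatrix_mul_eq_fused_add {N : ℕ} [NeZero N] {a b d γ : K} (h₁ : a * d = 1 - b ^ 2)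
    (h₂ : d - a = γ ^ 2 * b) (hγ : γ ≠ 0) :
    transferMatrix (sixVertexTensor a b 1) N * transferMatrix (sixVertexTensor (-b) d 1) N =
      b ^ N • transferMatrix (fusedTensor a b d γ) N + (1 - b ^ 2) ^ N • 1 := by
  choose B hB using exists_fusion_intertwine h₁ h₂
  rw [transferMatrix_mul, transferMatrix_eq_of_intertwine (fusionBasis_mul_fusionBasisInv hγ)
    (fusionBasisInv_mul_fusionBasis hγ) hB, transferMatrix_fromBlocks, transferMatrix_smul,
    transferMatrix_scalar]

theorem transferMatrix_fusedTensor_transpose (a b d γ : K) (N : ℕ) :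
    (transferMatrix (fusedTensor a b d γ) N).transpose =
      transferMatrix (fusedTensor (-d) b (-a) (-γ)) N := by
  ext x y
  rw [transpose_apply, transferMatrix, transferMatrix,
    ← ((Equiv.refl (Fin N)).arrowCongr Fin.revPerm).sum_comp]
  refine Finset.sum_congr rfl fun h _ ↦ Finset.prod_congr rfl fun i _ ↦ ?_
  simp only [Equiv.arrowCongr_apply, Function.comp_apply, Equiv.refl_symm, Equiv.coe_refl, id,
    Fin.revPerm_apply]
  generalize h (predF i) = p, h i = r
  cases x i <;> cases y i <;> fin_cases p <;> fin_cases r <;> simp [fusedTensor, Fin.rev]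

theorem expectation_fusedTensor_symm (a b d γ : ℂ) {N : ℕ} (ψ : (Fin N → Bool) → ℝ) :
    expectation (transferMatrix (fusedTensor a b d γ) N) ψ =
      expectation (transferMatrix (fusedTensor (-d) b (-a) (-γ)) N) ψ := by
  rw [← transferMatrix_fusedTensor_transpose, expectation_transpose]

theorem norm_sq_add_norm_sq_of_add_conj_eq_zero {b d : ℂ} (h : b + starRingEnd ℂ d = 0) (γ : ℝ)
    (x y : ℂ) :
    ‖γ * y - b * x‖ ^ 2 + ‖d * y - γ * x‖ ^ 2 =
      (‖b‖ ^ 2 + γ ^ 2) * ‖x‖ ^ 2 + (‖d‖ ^ 2 + γ ^ 2) * ‖y‖ ^ 2 := by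
  obtain rfl : b = -starRingEnd ℂ d := eq_neg_of_add_eq_zero_left h
  simp only [← Complex.normSq_eq_norm_sq, Complex.normSq_apply, Complex.sub_re, Complex.sub_im,
    Complex.mul_re, Complex.mul_im, Complex.neg_re, Complex.neg_im, Complex.ofReal_re,
    Complex.ofReal_im, Complex.conj_re, Complex.conj_im]
  ring

theorem isL2Bounded_fusedTensor {a b d : ℂ} {γ C : ℝ} (h : b + starRingEnd ℂ d = 0)
    (haC : ‖a‖ ^ 2 ≤ C ^ 2) (hbC : ‖b‖ ^ 2 + γ ^ 2 ≤ C ^ 2) (hdC : ‖d‖ ^ 2 + γ ^ 2 ≤ C ^ 2) :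
    IsL2Bounded (fusedTensor a b d (γ : ℂ)) C := by
  intro f
  have block := norm_sq_add_norm_sq_of_add_conj_eq_zero h γ (f 1 true) (f 0 false)
  have block' := norm_sq_add_norm_sq_of_add_conj_eq_zero h (-γ) (f 1 false) (f 2 true)
  calc _ = ‖a‖ ^ 2 * ‖f 0 true‖ ^ 2 + ‖a‖ ^ 2 * ‖f 2 false‖ ^ 2 +
        ((‖b‖ ^ 2 + γ ^ 2) * ‖f 1 true‖ ^ 2 + (‖d‖ ^ 2 + γ ^ 2) * ‖f 0 false‖ ^ 2) +
        ((‖b‖ ^ 2 + (-γ) ^ 2) * ‖f 1 false‖ ^ 2 + (‖d‖ ^ 2 + (-γ) ^ 2) * ‖f 2 true‖ ^ 2) := by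
        rw [← block, ← block']
        simp [fusedTensor, Fin.sum_univ_three, mul_pow, mul_comm, sub_eq_add_neg]
        ring_nf
    _ ≤ C ^ 2 * ‖f 0 true‖ ^ 2 + C ^ 2 * ‖f 2 false‖ ^ 2 +
        (C ^ 2 * ‖f 1 true‖ ^ 2 + C ^ 2 * ‖f 0 false‖ ^ 2) +
        (C ^ 2 * ‖f 1 false‖ ^ 2 + C ^ 2 * ‖f 2 true‖ ^ 2) := by
        rw [neg_sq]
        gcongr
    _ = _ := by
        simp only [Fintype.sum_bool, Fin.sum_univ_three]
        ring

end Fusion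

section StripSchwarz

open Complex

theorem norm_sq_sinh (z : ℂ) : ‖sinh z‖ ^ 2 = Real.sinh z.re ^ 2 + Real.sin z.im ^ 2 := by
  have sinh_eq : sinh z = ⟨Real.sinh z.re * Real.cos z.im, Real.cosh z.re * Real.sin z.im⟩ := by
    conv_lhs => rw [← re_add_im z, sinh_add, cosh_mul_I, sinh_mul_I]
    apply Complex.ext <;> simp [← ofReal_sinh, ← ofReal_cosh, ← ofReal_cos, ← ofReal_sin]
  rw [← normSq_eq_norm_sq, sinh_eq, normSq_mk]
  linear_combination Real.sin z.im ^ 2 * Real.cosh_sq z.re +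
    Real.sinh z.re ^ 2 * Real.sin_sq_add_cos_sq z.im

theorem norm_sq_sin (z : ℂ) : ‖sin z‖ ^ 2 = Real.sin z.re ^ 2 + Real.sinh z.im ^ 2 := by
  have norm_eq : ‖sin z‖ = ‖sinh (z * I)‖ := by rw [sinh_mul_I, norm_mul, norm_I, mul_one]
  rw [norm_eq, norm_sq_sinh]
  simp [add_comm]

theorem norm_sq_cos (z : ℂ) : ‖cos z‖ ^ 2 = Real.cos z.re ^ 2 + Real.sinh z.im ^ 2 := by
  have re_eq : (π / 2 - z).re = π / 2 - z.re := by simp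
  have im_eq : (π / 2 - z).im = -z.im := by simp
  rw [← sin_pi_div_two_sub, norm_sq_sin, re_eq, im_eq, Real.sin_pi_div_two_sub, Real.sinh_neg,
    neg_sq]

theorem re_pi_div_two_mul (z : ℂ) : (π / 2 * z).re = π / 2 * z.re := by simp

theorem im_pi_div_two_mul (z : ℂ) : (π / 2 * z).im = π / 2 * z.im := by simp

theorem sin_pi_div_two_mul_ne_zero {z : ℂ} (h : z ≠ 0) (h₀ : -2 < z.re) (h₁ : z.re < 2) :
    sin (π / 2 * z) ≠ 0 := by
  intro sin_eq
  have norm_sq := norm_sq_sin (π / 2 * z)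
  rw [sin_eq, re_pi_div_two_mul, im_pi_div_two_mul, norm_zero, zero_pow two_ne_zero, eq_comm,
    add_eq_zero_iff_of_nonneg (sq_nonneg _) (sq_nonneg _), sq_eq_zero_iff, sq_eq_zero_iff,
    Real.sinh_eq_zero, Real.sin_eq_zero_iff_of_lt_of_lt (by nlinarith [Real.pi_pos])
    (by nlinarith [Real.pi_pos])] at norm_sq
  exact h (Complex.ext (by simpa [Real.pi_ne_zero] using norm_sq.1)
    (by simpa [Real.pi_ne_zero] using norm_sq.2))

theorem cos_pi_div_two_mul_ne_zero {z : ℂ} (h₀ : -1 < z.re) (h₁ : z.re < 1) :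
    cos (π / 2 * z) ≠ 0 := by
  have cos_re_pos : 0 < Real.cos (π / 2 * z.re) :=
    Real.cos_pos_of_mem_Ioo ⟨by nlinarith [Real.pi_pos], by nlinarith [Real.pi_pos]⟩
  rw [← norm_ne_zero_iff, ← pow_ne_zero_iff two_ne_zero, norm_sq_cos, re_pi_div_two_mul]
  positivity

theorem norm_cos_eq_norm_sin_of_re_eq {z : ℂ} (h : z.re = -(1 / 2) ∨ z.re = 1 / 2) :
    ‖cos (π / 2 * z)‖ = ‖sin (π / 2 * z)‖ := by
  rw [← sq_eq_sq₀ (norm_nonneg _) (norm_nonneg _), norm_sq_cos, norm_sq_sin, re_pi_div_two_mul]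
  have arg_eq : π / 2 * (1 / 2) = π / 4 := by ring
  rcases h with h | h <;> rw [h] <;> simp [-one_div, arg_eq]

theorem one_le_norm_sin_pi_div_two_mul {z : ℂ} (h : 1 ≤ |z.im|) : 1 ≤ ‖sin (π / 2 * z)‖ := by
  have one_le : 1 ≤ |Real.sinh (π / 2 * z.im)| := by
    rw [Real.abs_sinh, abs_mul, abs_of_pos (by positivity)]
    have arg_ge : 1 ≤ π / 2 * |z.im| := by nlinarith [Real.pi_gt_three]
    exact arg_ge.trans (Real.self_le_sinh_iff.mpr (by linarith))
  rw [← sq_le_sq₀ zero_le_one (norm_nonneg _), norm_sq_sin, im_pi_div_two_mul,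
    ← sq_abs (Real.sinh _)]
  nlinarith [sq_nonneg (Real.sin (π / 2 * z).re)]

/-- The entire function `sin (π z / 2) / z`, with its removable singularity filled in. -/
def sinPiQuotient : ℂ → ℂ := dslope (fun z ↦ sin (π / 2 * z)) 0

theorem mul_sinPiQuotient (z : ℂ) : z * sinPiQuotient z = sin (π / 2 * z) := by
  simpa [sinPiQuotient] using sub_smul_dslope (fun z : ℂ ↦ sin (π / 2 * z)) 0 z

theorem differentiable_dslope {f : ℂ → ℂ} (hf : Differentiable ℂ f) (c : ℂ) :
    Differentiable ℂ (dslope f c) :=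
  differentiableOn_univ.mp ((differentiableOn_dslope univ_mem).mpr hf.differentiableOn)

theorem sinPiQuotient_ne_zero {z : ℂ} (h₀ : -2 < z.re) (h₁ : z.re < 2) : sinPiQuotient z ≠ 0 := by
  rcases eq_or_ne z 0 with rfl | hz
  · have hasDerivAt : HasDerivAt (fun z : ℂ ↦ sin (π / 2 * z)) (cos (π / 2 * 0) * (π / 2 * 1)) 0 :=
      ((hasDerivAt_id' 0).const_mul _).csin
    rw [sinPiQuotient, dslope_same, hasDerivAt.deriv]
    simp [Real.pi_ne_zero]
  · refine right_ne_zero_of_mul (a := z) ?_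
    rw [mul_sinPiQuotient]
    exact sin_pi_div_two_mul_ne_zero hz h₀ h₁

variable {a b : ℝ} {f g u : ℂ → ℂ}

theorem HasExpGrowth.mono (hg : HasExpGrowth a b g)
    (h : ∀ z : ℂ, 1 ≤ |z.im| → ‖f z‖ ≤ ‖g z‖) : HasExpGrowth a b f := by
  obtain ⟨B, hg⟩ := hg
  refine ⟨B, .trans (.of_bound 1 (.filter_mono inf_le_left ?_)) hg⟩
  filter_upwards [tendsto_comap.eventually (eventually_ge_atTop 1)] with z hz
  simpa only [one_mul] using h z hz

theorem hasExpGrowth_sin_pi_div_two_mul_add (c : ℝ) :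
    HasExpGrowth a b fun z ↦ sin (π / 2 * z + c) := by
  refine .of_norm_le 1 (π / 2) fun z _ _ _ ↦ (norm_sin_le_exp_abs_im _).trans_eq ?_
  rw [add_im, im_pi_div_two_mul, ofReal_im, add_zero, abs_mul, abs_of_pos (by positivity), one_mul]

theorem hasExpGrowth_cos_pi_div_two_mul : HasExpGrowth a b fun z ↦ cos (π / 2 * z) := by
  simpa only [ofReal_div, ofReal_ofNat, sin_add_pi_div_two] using
    hasExpGrowth_sin_pi_div_two_mul_add (a := a) (b := b) (π / 2)

theorem one_le_norm_of_one_le_abs_im {z : ℂ} (h : 1 ≤ |z.im|) : 1 ≤ ‖z‖ :=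
  h.trans (abs_im_le_norm z)

theorem hasExpGrowth_inv_sinPiQuotient : HasExpGrowth a b fun z ↦ (sinPiQuotient z)⁻¹ := by
  refine HasExpGrowth.id.mono fun z hz ↦ ?_
  have sin_ge := one_le_norm_sin_pi_div_two_mul hz
  rw [← mul_sinPiQuotient, norm_mul] at sin_ge
  rw [norm_inv]
  exact inv_le_of_inv_le₀ (zero_lt_one.trans_le (one_le_norm_of_one_le_abs_im hz))
    ((inv_le_iff_one_le_mul₀' (zero_lt_one.trans_le (one_le_norm_of_one_le_abs_im hz))).mpr sin_ge)

theorem HasExpGrowth.dslope (hu : HasExpGrowth a b u) (hu₀ : u 0 = 0) :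
    HasExpGrowth a b (dslope u 0) := by
  refine hu.mono fun z hz ↦ ?_
  have u_eq : z * _root_.dslope u 0 z = u z := by simpa [hu₀] using sub_smul_dslope u 0 z
  rw [← u_eq, norm_mul]
  exact le_mul_of_one_le_left (norm_nonneg _) (one_le_norm_of_one_le_abs_im hz)

/-- A Schwarz lemma: `tan (π z / 2)` maps the strip `|Re z| < 1 / 2` conformally onto the unit disc,
so a zero of order `N` at the origin improves a bound on the boundary by this factor. -/
theorem norm_mul_pow_le_mul_norm_tan_pow {N : ℕ} [NeZero N] {C : ℝ}
    (hf : ∀ z : ℂ, -(1 / 2) ≤ z.re → z.re ≤ 1 / 2 → DifferentiableAt ℂ f z)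
    (hf_growth : HasExpGrowth (-(1 / 2)) (1 / 2) f)
    (hu : Differentiable ℂ u) (hu_growth : HasExpGrowth (-(1 / 2)) (1 / 2) u) (hu₀ : u 0 = 0)
    (h : ∀ z : ℂ, z.re = -(1 / 2) ∨ z.re = 1 / 2 → ‖f z * u z ^ N‖ ≤ C)
    {z : ℂ} (hz₀ : -(1 / 2) ≤ z.re) (hz₁ : z.re ≤ 1 / 2) :
    ‖f z * u z ^ N‖ ≤ C * ‖tan (π / 2 * z)‖ ^ N := by
  rcases eq_or_ne z 0 with rfl | hz
  · simp [hu₀, NeZero.ne N]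
  have u_eq (z : ℂ) : z * dslope u 0 z = u z := by simpa [hu₀] using sub_smul_dslope u 0 z
  have quotient_le {z : ℂ} (hz : z ≠ 0) :
      ‖f z * (dslope u 0 z * cos (π / 2 * z)) ^ N‖ ≤ C * ‖sinPiQuotient z ^ N‖ ↔
        ‖f z * u z ^ N‖ * ‖cos (π / 2 * z)‖ ^ N ≤ C * ‖sin (π / 2 * z)‖ ^ N := by
    rw [← mul_le_mul_iff_right₀ (pow_pos (norm_pos_iff.mpr hz) N), ← u_eq z, ← mul_sinPiQuotient z]
    simp only [norm_mul, norm_pow, mul_pow]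
    ring_nf
  have main := (quotient_le hz).mp <| norm_le_mul_norm_of_hasExpGrowth
    (f := fun z ↦ f z * (dslope u 0 z * cos (π / 2 * z)) ^ N) (g := fun z ↦ sinPiQuotient z ^ N)
    (by norm_num)
    (fun z h₀ h₁ ↦ (hf z h₀ h₁).mul (((differentiable_dslope hu 0 z).mul (by fun_prop)).pow N))
    (fun z _ _ ↦ (differentiable_dslope (by fun_prop) 0 z).pow N)
    (fun z h₀ h₁ ↦ pow_ne_zero N (sinPiQuotient_ne_zero (by linarith) (by linarith)))
    (hf_growth.mul (((hu_growth.dslope hu₀).mul hasExpGrowth_cos_pi_div_two_mul).pow N))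
    (by simpa only [← inv_pow] using hasExpGrowth_inv_sinPiQuotient.pow N)
    (fun z hz ↦ (quotient_le (by rintro rfl; norm_num at hz)).mpr <| by
      rw [norm_cos_eq_norm_sin_of_re_eq hz]
      gcongr
      exact h z hz) hz₀ hz₁
  have cos_pos := norm_pos_iff.mpr (cos_pi_div_two_mul_ne_zero (z := z) (by linarith) (by linarith))
  rw [tan_eq_sin_div_cos, norm_div, div_pow, ← mul_div_assoc, le_div_iff₀ (by positivity)]
  exact main

end StripSchwarz

section SinhWeight

/-- In units of `c`, the weight `b` of the six-vertex model with `Δ = -cosh l` at spectral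
parameter `w`; the weight `a` is then `sinhWeight l (1 - w)`. -/
def sinhWeight (l : ℝ) (w : ℂ) : ℂ := Complex.sinh (l * w) / Complex.sinh l

variable {l : ℝ}

theorem sinhWeight_neg (l : ℝ) (w : ℂ) : sinhWeight l (-w) = -sinhWeight l w := by
  simp [sinhWeight, neg_div]

theorem sinhWeight_conj (l : ℝ) (w : ℂ) :
    sinhWeight l (starRingEnd ℂ w) = starRingEnd ℂ (sinhWeight l w) := by
  simp [sinhWeight, ← Complex.sinh_conj]

theorem norm_sq_sinhWeight (l : ℝ) (w : ℂ) :
    ‖sinhWeight l w‖ ^ 2 =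
      (Real.sinh (l * w.re) ^ 2 + Real.sin (l * w.im) ^ 2) / Real.sinh l ^ 2 := by
  simp [sinhWeight, div_pow, norm_sq_sinh]

theorem norm_sinhWeight_congr {w w' : ℂ} (hre : w.re = w'.re ∨ w.re = -w'.re)
    (him : w.im = w'.im ∨ w.im = -w'.im) : ‖sinhWeight l w‖ = ‖sinhWeight l w'‖ := by
  rw [← sq_eq_sq₀ (norm_nonneg _) (norm_nonneg _), norm_sq_sinhWeight, norm_sq_sinhWeight]
  rcases hre with hre | hre <;> rcases him with him | him <;> simp [hre, him]

theorem norm_sinhWeight_le (hl : 0 < l) (w : ℂ) :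
    ‖sinhWeight l w‖ ≤ Real.cosh (l * w.re) / Real.sinh l := by
  have := Real.sinh_pos_iff.mpr hl
  have := Real.cosh_pos (l * w.re)
  refine le_of_sq_le_sq ?_ (by positivity)
  rw [norm_sq_sinhWeight, div_pow, Real.cosh_sq]
  gcongr
  exact Real.sin_sq_le_one _

theorem sinh_div_sinh_le_norm_sinhWeight (hl : 0 < l) (w : ℂ) :
    Real.sinh (l * w.re) / Real.sinh l ≤ ‖sinhWeight l w‖ := by
  have := Real.sinh_pos_iff.mpr hl
  refine le_of_sq_le_sq ?_ (norm_nonneg _)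
  rw [norm_sq_sinhWeight, div_pow]
  gcongr
  exact le_add_of_nonneg_right (sq_nonneg _)

theorem sinhWeight_ne_zero (hl : 0 < l) {w : ℂ} (hw : 0 < w.re) : sinhWeight l w ≠ 0 := by
  rw [← norm_pos_iff]
  refine lt_of_lt_of_le ?_ (sinh_div_sinh_le_norm_sinhWeight hl w)
  exact div_pos (Real.sinh_pos_iff.mpr (mul_pos hl hw)) (Real.sinh_pos_iff.mpr hl)

theorem sinh_ofReal_ne_zero (hl : 0 < l) : Complex.sinh l ≠ 0 := by
  exact_mod_cast (Real.sinh_pos_iff.mpr hl).ne'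

theorem sinhWeight_one (hl : 0 < l) : sinhWeight l 1 = 1 := by
  rw [sinhWeight, mul_one, div_self (sinh_ofReal_ne_zero hl)]

theorem sinhWeight_one_sub_mul_sub (hl : 0 < l) (x y : ℂ) :
    sinhWeight l (1 - x) * sinhWeight l y - sinhWeight l (1 - y) * sinhWeight l x =
      sinhWeight l (y - x) := by
  have := sinh_ofReal_ne_zero hl
  simp only [sinhWeight, mul_sub, mul_one, Complex.sinh_sub]
  field_simp
  ring

theorem sinhWeight_one_sub_mul_one_add (hl : 0 < l) (w : ℂ) :
    sinhWeight l (1 - w) * sinhWeight l (1 + w) = 1 - sinhWeight l w ^ 2 := by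
  have addition := sinhWeight_one_sub_mul_sub hl w (1 + w)
  rw [add_sub_cancel_right, sub_add_cancel_left, sinhWeight_one hl, sinhWeight_neg] at addition
  linear_combination addition

theorem sinhWeight_one_sub_mul_one_add_ne_zero (hl : 0 < l) {w : ℂ} (hw : |w.re| < 1) :
    sinhWeight l (1 - w) * sinhWeight l (1 + w) ≠ 0 := by
  have := abs_lt.mp hw
  refine mul_ne_zero (sinhWeight_ne_zero hl ?_) (sinhWeight_ne_zero hl ?_)
  · rw [Complex.sub_re, Complex.one_re]
    linarith
  · rw [Complex.add_re, Complex.one_re]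
    linarith

theorem sinhWeight_one_add_sub_one_sub (l : ℝ) (w : ℂ) :
    sinhWeight l (1 + w) - sinhWeight l (1 - w) =
      (√(2 * Real.cosh l) : ℂ) ^ 2 * sinhWeight l w := by
  rw [← Complex.ofReal_pow, Real.sq_sqrt (mul_pos two_pos (Real.cosh_pos l)).le]
  simp only [sinhWeight, mul_sub, mul_add, mul_one, Complex.sinh_sub, Complex.sinh_add]
  push_cast
  ring

theorem sinhWeight_one_add_eq_conj {w : ℂ} (hw : w.re = 0) :
    sinhWeight l (1 + w) = starRingEnd ℂ (sinhWeight l (1 - w)) := by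
  rw [← sinhWeight_conj]
  congr 1
  apply Complex.ext <;> simp [hw]

theorem norm_sinhWeight_one_add {w : ℂ} (hw : w.re = 0) :
    ‖sinhWeight l (1 + w)‖ = ‖sinhWeight l (1 - w)‖ := by
  rw [sinhWeight_one_add_eq_conj hw, RCLike.norm_conj]

theorem norm_sq_sinhWeight_one_sub (hl : 0 < l) {w : ℂ} (hw : w.re = 0) :
    ‖sinhWeight l (1 - w)‖ ^ 2 = 1 + ‖sinhWeight l w‖ ^ 2 := by
  have := (Real.sinh_pos_iff.mpr hl).ne'
  rw [norm_sq_sinhWeight, norm_sq_sinhWeight]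
  simp only [Complex.sub_re, Complex.one_re, Complex.sub_im, Complex.one_im, hw, sub_zero, mul_one,
    zero_sub, mul_neg, Real.sin_neg, neg_sq, mul_zero, Real.sinh_zero]
  field_simp
  ring

theorem one_le_norm_sinhWeight_one_sub (hl : 0 < l) {w : ℂ} (hw : w.re = 0) :
    1 ≤ ‖sinhWeight l (1 - w)‖ := by
  have norm_sq := norm_sq_sinhWeight_one_sub hl hw
  nlinarith [norm_nonneg (sinhWeight l (1 - w)), sq_nonneg ‖sinhWeight l w‖]

theorem differentiable_sinhWeight (l : ℝ) : Differentiable ℂ (sinhWeight l) := by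
  unfold sinhWeight
  fun_prop

theorem hasExpGrowth_sinhWeight_comp (hl : 0 < l) {a b R : ℝ} {f : ℂ → ℂ}
    (hf : ∀ z : ℂ, a ≤ z.re → z.re ≤ b → |(f z).re| ≤ R) :
    HasExpGrowth a b fun z ↦ sinhWeight l (f z) := by
  refine .of_norm_le (Real.cosh (l * R) / Real.sinh l) 0 fun z h₀ h₁ _ ↦ ?_
  rw [zero_mul, Real.exp_zero, mul_one]
  refine (norm_sinhWeight_le hl _).trans (div_le_div_of_nonneg_right ?_
    (Real.sinh_pos_iff.mpr hl).le)
  rw [Real.cosh_le_cosh, abs_mul, abs_mul]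
  exact mul_le_mul_of_nonneg_left ((hf z h₀ h₁).trans (le_abs_self R)) (abs_nonneg l)

theorem hasExpGrowth_inv_sinhWeight_comp (hl : 0 < l) {a b r : ℝ} (hr : 0 < r) {f : ℂ → ℂ}
    (hf : ∀ z : ℂ, a ≤ z.re → z.re ≤ b → r ≤ (f z).re) :
    HasExpGrowth a b fun z ↦ (sinhWeight l (f z))⁻¹ := by
  have := Real.sinh_pos_iff.mpr hl
  have := Real.sinh_pos_iff.mpr (mul_pos hl hr)
  refine .of_norm_le (Real.sinh (l * r) / Real.sinh l)⁻¹ 0 fun z h₀ h₁ _ ↦ ?_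
  rw [zero_mul, Real.exp_zero, mul_one, norm_inv]
  gcongr
  refine le_trans ?_ (sinh_div_sinh_le_norm_sinhWeight hl _)
  gcongr
  exact Real.sinh_le_sinh.mpr (mul_le_mul_of_nonneg_left (hf z h₀ h₁) hl.le)

end SinhWeight

section SinhTransferMatrix

variable {l : ℝ} {N : ℕ}

/-- The transfer matrix of the six-vertex model with `Δ = -cosh l` at spectral parameter `w`. -/
def sinhTransferMatrix (l : ℝ) (N : ℕ) (w : ℂ) : Matrix (Fin N → Bool) (Fin N → Bool) ℂ :=
  transferMatrix (sixVertexTensor (sinhWeight l (1 - w)) (sinhWeight l w) 1) N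

/-- The spin-one transfer matrix that occurs in the fusion of `sinhTransferMatrix` at `w` and
`w + 1`. -/
def fusedTransferMatrix (l : ℝ) (N : ℕ) (w : ℂ) : Matrix (Fin N → Bool) (Fin N → Bool) ℂ :=
  transferMatrix (fusedTensor (sinhWeight l (1 - w)) (sinhWeight l w) (sinhWeight l (1 + w))
    √(2 * Real.cosh l)) N

theorem commute_sinhTransferMatrix [NeZero N] (hl : 0 < l) {w w' : ℂ} (h : |(w' - w).re| < 1) :
    Commute (sinhTransferMatrix l N w) (sinhTransferMatrix l N w') := by
  have weight_ne := sinhWeight_one_sub_mul_one_add_ne_zero hl h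
  refine commute_transferMatrix_sixVertexTensor (α := sinhWeight l (1 - (w' - w)))
    (q := sinhWeight l (w' - w)) ?_ ?_ (sinhWeight_one_sub_mul_sub hl w w').symm
    (left_ne_zero_of_mul weight_ne) (by rwa [← sinhWeight_one_sub_mul_one_add hl])
  · have addition := sinhWeight_one_sub_mul_sub hl (w' - w) (1 - w)
    rw [sub_sub_cancel, sub_sub_sub_cancel_right] at addition
    linear_combination addition
  · have addition := sinhWeight_one_sub_mul_sub hl (w' - w) w'
    rw [sub_sub_cancel] at addition
    linear_combination addition

theorem sinhTransferMatrix_mul_add_one [NeZero N] (hl : 0 < l) (w : ℂ) :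
    sinhTransferMatrix l N w * sinhTransferMatrix l N (1 + w) =
      sinhWeight l w ^ N • fusedTransferMatrix l N w + (1 - sinhWeight l w ^ 2) ^ N • 1 := by
  rw [sinhTransferMatrix, sinhTransferMatrix, fusedTransferMatrix, sub_add_cancel_left,
    sinhWeight_neg]
  refine transferMatrix_mul_eq_fused_add (sinhWeight_one_sub_mul_one_add hl w)
    (sinhWeight_one_add_sub_one_sub l w) ?_
  exact_mod_cast (Real.sqrt_pos.mpr (mul_pos two_pos (Real.cosh_pos l))).ne'

variable (ψ : (Fin N → Bool) → ℝ)

theorem expectation_sinhTransferMatrix_one_sub (w : ℂ) :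
    expectation (sinhTransferMatrix l N (1 - w)) ψ = expectation (sinhTransferMatrix l N w) ψ := by
  rw [sinhTransferMatrix, sinhTransferMatrix, expectation_sixVertexTensor_comm, sub_sub_cancel]

theorem differentiable_expectation_sinhTransferMatrix (l : ℝ) :
    Differentiable ℂ fun w ↦ expectation (sinhTransferMatrix l N w) ψ := fun _ ↦
  differentiableAt_expectation (differentiableAt_transferMatrix (differentiableAt_sixVertexTensor
    ((differentiable_sinhWeight l).comp (by fun_prop) _) (differentiable_sinhWeight l _)
    (by fun_prop))) ψ

theorem norm_expectation_sinhTransferMatrix_le [NeZero N] (hl : 0 < l) {w : ℂ} (hw : w.re = 0) :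
    ‖expectation (sinhTransferMatrix l N w) ψ‖ ≤
      2 * (ψ ⬝ᵥ ψ) * ‖sinhWeight l (1 - w)‖ ^ N := by
  have weight_re : (sinhWeight l w).re = 0 := by
    have conj_eq : starRingEnd ℂ (sinhWeight l w) = -sinhWeight l w := by
      rw [← sinhWeight_conj, ← sinhWeight_neg]
      congr 1
      apply Complex.ext <;> simp [hw]
    have := congrArg Complex.re conj_eq
    rw [Complex.conj_re, Complex.neg_re] at this
    linarith
  refine (norm_expectation_transferMatrix_le (norm_nonneg _) (isL2Bounded_sixVertexTensor weight_re
    le_rfl ((add_comm _ _).trans_le (norm_sq_sinhWeight_one_sub hl hw).ge)) ψ).trans_eq ?_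
  rw [Fintype.card_bool]
  push_cast
  ring

end SinhTransferMatrix

section FusedBound

variable {l : ℝ} {N : ℕ}

theorem tanh_monotone : Monotone Real.tanh := by
  intro x y hxy
  rw [Real.tanh_eq_sinh_div_cosh, Real.tanh_eq_sinh_div_cosh,
    div_le_div_iff₀ (Real.cosh_pos x) (Real.cosh_pos y)]
  have : 0 ≤ Real.sinh (y - x) := Real.sinh_nonneg_iff.mpr (sub_nonneg.mpr hxy)
  rw [Real.sinh_sub] at this
  linarith

theorem abs_tanh_le_tanh {x y : ℝ} (h : |x| ≤ y) : |Real.tanh x| ≤ Real.tanh y := by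
  rw [abs_le, ← Real.tanh_neg]
  exact ⟨tanh_monotone (abs_le.mp h).1, tanh_monotone (abs_le.mp h).2⟩

theorem sinh_three_halves_sq (l : ℝ) :
    Real.sinh (l * (3 / 2)) ^ 2 =
      Real.sinh (l * (1 / 2)) ^ 2 + 2 * Real.cosh l * Real.sinh l ^ 2 := by
  have diff_of_squares : Real.sinh (l + l / 2) ^ 2 - Real.sinh (l - l / 2) ^ 2 =
      2 * Real.cosh l * (Real.sinh l * Real.sinh (2 * (l / 2))) := by
    rw [Real.sinh_add, Real.sinh_sub, Real.sinh_two_mul]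
    ring
  ring_nf at diff_of_squares ⊢
  linarith

theorem norm_sq_sinhWeight_add_two_mul_cosh (hl : 0 < l) {w w' : ℂ} (hre : |w.re| = 3 / 2)
    (hre' : |w'.re| = 1 / 2) (him : |w.im| = |w'.im|) :
    ‖sinhWeight l w'‖ ^ 2 + 2 * Real.cosh l = ‖sinhWeight l w‖ ^ 2 := by
  have := Real.sinh_pos_iff.mpr hl
  have sin_sq : Real.sin (l * w.im) ^ 2 = Real.sin (l * w'.im) ^ 2 := by
    rcases abs_eq_abs.mp him with him | him <;> simp [him]
  have sinh_sq {x r : ℝ} (h : |x| = r) : Real.sinh (l * x) ^ 2 = Real.sinh (l * r) ^ 2 := by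
    rcases abs_choice x with hx | hx <;> simp [← h, hx]
  rw [norm_sq_sinhWeight, norm_sq_sinhWeight, sinh_sq hre, sinh_sq hre', sinh_three_halves_sq,
    sin_sq]
  field_simp
  ring

variable (ψ : (Fin N → Bool) → ℝ)

theorem norm_expectation_fusedTransferMatrix_le_left [NeZero N] (hl : 0 < l) {w : ℂ}
    (hw : w.re = -(1 / 2)) :
    ‖expectation (fusedTransferMatrix l N w) ψ‖ ≤
      3 * (‖sinhWeight l (1 - w)‖ ^ N * (ψ ⬝ᵥ ψ)) := by
  have conj_eq : sinhWeight l w + starRingEnd ℂ (sinhWeight l (1 + w)) = 0 := by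
    rw [← sinhWeight_conj, add_eq_zero_iff_eq_neg, ← sinhWeight_neg]
    congr 1
    apply Complex.ext <;> simp [hw]
    norm_num
  have sqrt_sq : √(2 * Real.cosh l) ^ 2 = 2 * Real.cosh l :=
    Real.sq_sqrt (mul_pos two_pos (Real.cosh_pos l)).le
  refine (norm_expectation_transferMatrix_le (norm_nonneg _)
    (isL2Bounded_fusedTensor conj_eq le_rfl ?_ ?_) ψ).trans_eq (by norm_num)
  all_goals
    rw [sqrt_sq]
    refine (norm_sq_sinhWeight_add_two_mul_cosh hl ?_ ?_ ?_).le <;> norm_num [hw]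

theorem norm_expectation_fusedTransferMatrix_neg (l : ℝ) (w : ℂ) :
    ‖expectation (fusedTransferMatrix l N (-w)) ψ‖ =
      ‖expectation (fusedTransferMatrix l N w) ψ‖ := by
  have tensor_neg : fusedTensor (-sinhWeight l (1 - w)) (sinhWeight l (-w))
      (-sinhWeight l (1 + w)) (-√(2 * Real.cosh l) : ℂ) =
      fun s s' ↦ (-1 : ℂ) • fusedTensor (sinhWeight l (1 - w)) (sinhWeight l w)
        (sinhWeight l (1 + w)) (√(2 * Real.cosh l) : ℂ) s s' := by
    rw [sinhWeight_neg]
    funext s s'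
    cases s <;> cases s' <;> simp [fusedTensor]
  rw [fusedTransferMatrix, sub_neg_eq_add, ← sub_eq_add_neg, expectation_fusedTensor_symm,
    tensor_neg, transferMatrix_smul, expectation_smul, norm_mul, norm_pow, norm_neg, norm_one,
    one_pow, one_mul, fusedTransferMatrix]

theorem norm_expectation_fusedTransferMatrix_mul_le [NeZero N] (hl : 0 < l) {w : ℂ}
    (hw : w.re = -(1 / 2) ∨ w.re = 1 / 2) :
    ‖expectation (fusedTransferMatrix l N w) ψ * sinhWeight l w ^ N‖ ≤
      3 * (ψ ⬝ᵥ ψ) * ‖sinhWeight l (1 - w) * sinhWeight l (1 + w)‖ ^ N := by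
  have left {w : ℂ} (hw : w.re = -(1 / 2)) :
      ‖expectation (fusedTransferMatrix l N w) ψ‖ * ‖sinhWeight l w‖ ^ N ≤
        3 * (ψ ⬝ᵥ ψ) * (‖sinhWeight l (1 - w)‖ * ‖sinhWeight l (1 + w)‖) ^ N := by
    have norm_eq : ‖sinhWeight l w‖ = ‖sinhWeight l (1 + w)‖ :=
      norm_sinhWeight_congr (.inr (by norm_num [hw])) (.inl (by simp))
    rw [norm_eq, mul_pow, ← mul_assoc]
    gcongr
    exact (norm_expectation_fusedTransferMatrix_le_left ψ hl hw).trans_eq (by ring)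
  rw [norm_mul, norm_pow, norm_mul]
  rcases hw with hw | hw
  · exact left hw
  · have := left (w := -w) (by rw [Complex.neg_re, hw])
    rwa [norm_expectation_fusedTransferMatrix_neg, sinhWeight_neg, norm_neg, sub_neg_eq_add,
      ← sub_eq_add_neg, mul_comm ‖sinhWeight l (1 + w)‖] at this

theorem hasExpGrowth_fusedTensor {p q : ℝ} {a b d : ℂ → ℂ} (ha : HasExpGrowth p q a)
    (hb : HasExpGrowth p q b) (hd : HasExpGrowth p q d) (γ : ℂ) (s s' : Bool) (h h' : Fin 3) :
    HasExpGrowth p q fun w ↦ fusedTensor (a w) (b w) (d w) γ s s' h h' := by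
  have neg {f : ℂ → ℂ} (hf : HasExpGrowth p q f) : HasExpGrowth p q fun w ↦ -f w := by
    simpa only [zero_sub] using (HasExpGrowth.const 0).sub hf
  cases s <;> cases s' <;> fin_cases h <;> fin_cases h' <;>
    first | exact ha | exact hb | exact hd | exact neg ha | exact neg hb | exact .const _

theorem differentiableAt_fusedTensor {a b d : ℂ → ℂ} {z : ℂ} (ha : DifferentiableAt ℂ a z)
    (hb : DifferentiableAt ℂ b z) (hd : DifferentiableAt ℂ d z) (γ : ℂ) (s s' : Bool)
    (h h' : Fin 3) :
    DifferentiableAt ℂ (fun w ↦ fusedTensor (a w) (b w) (d w) γ s s' h h') z := by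
  cases s <;> cases s' <;> fin_cases h <;> fin_cases h' <;>
    first | exact hd | exact ha.neg | exact hb.neg | exact differentiableAt_const _

theorem differentiable_expectation_fusedTransferMatrix (l : ℝ) :
    Differentiable ℂ fun w ↦ expectation (fusedTransferMatrix l N w) ψ := fun _ ↦
  differentiableAt_expectation (differentiableAt_transferMatrix (differentiableAt_fusedTensor
    ((differentiable_sinhWeight l).comp (by fun_prop) _) (differentiable_sinhWeight l _)
    ((differentiable_sinhWeight l).comp (by fun_prop) _) _)) ψ

theorem sinhWeight_int_mul_pi_div (hl : 0 < l) (k : ℤ) :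
    sinhWeight l ((π * k / l : ℝ) * Complex.I) = 0 := by
  rw [sinhWeight, ← mul_assoc, ← Complex.ofReal_mul, mul_div_cancel₀ _ hl.ne', Complex.sinh_mul_I,
    mul_comm π, ← Complex.ofReal_sin, Real.sin_int_mul_pi, Complex.ofReal_zero, zero_mul, zero_div]

/-- `fusedTransferMatrix`, translated by `c` and divided by the modulus it has on the lines
`Re z = ± 1 / 2`. -/
def normalizedFused (l : ℝ) (ψ : (Fin N → Bool) → ℝ) (c z : ℂ) : ℂ :=
  expectation (fusedTransferMatrix l N (z + c)) ψ *
    ((sinhWeight l (1 - (z + c)))⁻¹ * (sinhWeight l (1 + (z + c)))⁻¹) ^ N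

theorem norm_normalizedFused_mul (l : ℝ) (c z x : ℂ) :
    ‖normalizedFused l ψ c z * x ^ N‖ = ‖expectation (fusedTransferMatrix l N (z + c)) ψ * x ^ N‖ /
      ‖sinhWeight l (1 - (z + c)) * sinhWeight l (1 + (z + c))‖ ^ N := by
  rw [normalizedFused, ← mul_inv, inv_pow, mul_right_comm, norm_mul, norm_inv, norm_pow,
    ← div_eq_mul_inv]

theorem differentiableAt_normalizedFused (hl : 0 < l) {c z : ℂ} (hc : c.re = 0)
    (h₀ : -(1 / 2) ≤ z.re) (h₁ : z.re ≤ 1 / 2) : DifferentiableAt ℂ (normalizedFused l ψ c) z := by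
  refine (((differentiable_expectation_fusedTransferMatrix ψ l).comp (by fun_prop)) z).mul
    (.pow (.mul (.inv ?_ ?_) (.inv ?_ ?_)) N)
  · exact (differentiable_sinhWeight l).comp (by fun_prop) z
  · exact sinhWeight_ne_zero hl (by norm_num [hc]; linarith)
  · exact (differentiable_sinhWeight l).comp (by fun_prop) z
  · exact sinhWeight_ne_zero hl (by norm_num [hc]; linarith)

theorem hasExpGrowth_normalizedFused (hl : 0 < l) {c : ℂ} (hc : c.re = 0) :
    HasExpGrowth (-(1 / 2)) (1 / 2) (normalizedFused l ψ c) := by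
  have weight {f : ℂ → ℂ} (hf : ∀ z : ℂ, -(1 / 2) ≤ z.re → z.re ≤ 1 / 2 → |(f z).re| ≤ 3 / 2) :
      HasExpGrowth (-(1 / 2)) (1 / 2) fun z ↦ sinhWeight l (f z) :=
    hasExpGrowth_sinhWeight_comp hl hf
  have inv_weight {f : ℂ → ℂ} (hf : ∀ z : ℂ, -(1 / 2) ≤ z.re → z.re ≤ 1 / 2 → 1 / 2 ≤ (f z).re) :
      HasExpGrowth (-(1 / 2)) (1 / 2) fun z ↦ (sinhWeight l (f z))⁻¹ :=
    hasExpGrowth_inv_sinhWeight_comp hl (by norm_num) hf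
  refine .mul (.expectation (.transferMatrix (hasExpGrowth_fusedTensor
      (weight fun _ _ _ ↦ ?_) (weight fun _ _ _ ↦ ?_) (weight fun _ _ _ ↦ ?_) _)) ψ)
    (.pow (.mul (inv_weight fun _ _ _ ↦ ?_) (inv_weight fun _ _ _ ↦ ?_)) N) <;>
  · simp only [Complex.sub_re, Complex.add_re, Complex.one_re, hc, abs_le]
    grind

theorem norm_tan_pi_div_two_mul_le {z : ℂ} {y : ℝ} (hz : z.re = 0) (hy : |z.im| ≤ y) :
    ‖Complex.tan (π / 2 * z)‖ ≤ Real.tanh (π / 2 * y) := by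
  have z_eq : (π / 2 * z : ℂ) = (π / 2 * z.im : ℝ) * Complex.I := by
    apply Complex.ext <;> simp [hz]
  rw [z_eq, Complex.tan_mul_I, norm_mul, Complex.norm_I, mul_one, ← Complex.ofReal_tanh,
    Complex.norm_real]
  refine abs_tanh_le_tanh ?_
  rw [abs_mul, abs_of_pos Real.pi_div_two_pos]
  gcongr

theorem exists_int_abs_sub_le (hl : 0 < l) (y : ℝ) : ∃ k : ℤ, |y - π * k / l| ≤ π / (2 * l) := by
  refine ⟨round (y * l / π), ?_⟩
  have dist_eq : y - π * round (y * l / π) / l =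
      π / l * (y * l / π - round (y * l / π)) := by field_simp
  rw [dist_eq, abs_mul, abs_of_pos (by positivity)]
  calc π / l * |y * l / π - round (y * l / π)|
      ≤ π / l * (1 / 2) := by gcongr; exact abs_sub_round _
    _ = π / (2 * l) := by ring

theorem norm_normalizedFused_mul_le [NeZero N] (hl : 0 < l) {c z : ℂ} (hc : c.re = 0)
    (hz : z.re = -(1 / 2) ∨ z.re = 1 / 2) :
    ‖normalizedFused l ψ c z * sinhWeight l (z + c) ^ N‖ ≤ 3 * (ψ ⬝ᵥ ψ) := by
  have weight_ne : sinhWeight l (1 - (z + c)) * sinhWeight l (1 + (z + c)) ≠ 0 := by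
    refine sinhWeight_one_sub_mul_one_add_ne_zero hl ?_
    rcases hz with hz | hz <;> norm_num [hz, hc, abs_lt]
  rw [norm_normalizedFused_mul, div_le_iff₀ (pow_pos (norm_pos_iff.mpr weight_ne) N)]
  exact norm_expectation_fusedTransferMatrix_mul_le ψ hl (by simpa [hc] using hz)

theorem norm_expectation_fusedTransferMatrix_mul_le_tanh [NeZero N] (hl : 0 < l) {w : ℂ}
    (hw : w.re = 0) :
    ‖expectation (fusedTransferMatrix l N w) ψ * sinhWeight l w ^ N‖ ≤
      3 * (ψ ⬝ᵥ ψ) * (Real.tanh (π ^ 2 / (4 * l)) * ‖sinhWeight l (1 - w)‖ ^ 2) ^ N := by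
  obtain ⟨k, hk⟩ := exists_int_abs_sub_le hl w.im
  set c : ℂ := (π * k / l : ℝ) * Complex.I with hc
  have c_re : c.re = 0 := by rw [hc, Complex.re_ofReal_mul, Complex.I_re, mul_zero]
  have c_im : c.im = π * k / l := by rw [hc, Complex.im_ofReal_mul, Complex.I_im, mul_one]
  have schwarz := norm_mul_pow_le_mul_norm_tan_pow (z := w - c)
    (fun _ ↦ differentiableAt_normalizedFused ψ hl c_re) (hasExpGrowth_normalizedFused ψ hl c_re)
    (u := fun z ↦ sinhWeight l (z + c)) ((differentiable_sinhWeight l).comp (by fun_prop))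
    (hasExpGrowth_sinhWeight_comp (R := 1 / 2) hl fun z h₀ h₁ ↦ by
      rw [Complex.add_re, c_re, add_zero, abs_le]
      exact ⟨h₀, h₁⟩)
    (by rw [zero_add, sinhWeight_int_mul_pi_div hl])
    (fun _ ↦ norm_normalizedFused_mul_le ψ hl c_re)
    (by simp [hw, c_re]) (by simp [hw, c_re])
  have weight_ne := sinhWeight_one_sub_mul_one_add_ne_zero hl (w := w) (by simp [hw])
  rw [norm_normalizedFused_mul, sub_add_cancel,
    div_le_iff₀ (pow_pos (norm_pos_iff.mpr weight_ne) N), mul_assoc, ← mul_pow,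
    norm_mul (sinhWeight l _), norm_sinhWeight_one_add hw, ← sq] at schwarz
  have tan_le : ‖Complex.tan (π / 2 * (w - c))‖ ≤ Real.tanh (π ^ 2 / (4 * l)) :=
    (norm_tan_pi_div_two_mul_le (y := π / (2 * l)) (by simp [hw, c_re])
      (by rwa [Complex.sub_im, c_im])).trans_eq (by congr 1; ring)
  have := dotProduct_star_self_nonneg ψ
  exact schwarz.trans (by gcongr)

end FusedBound

section Perron

open Matrix

variable {X : Type*} [Fintype X] {A : Matrix X X ℝ} {S : Set X} {ψ χ : X → ℝ} {μ : ℝ}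

/-- `ψ` is a normalised nonnegative eigenvector of `A` supported in `S`. Its eigenvalue is recorded
as the Rayleigh quotient. -/
structure IsPerronVector (A : Matrix X X ℝ) (S : Set X) (ψ : X → ℝ) : Prop where
  nonneg : ∀ x, 0 ≤ ψ x
  dotProduct_self : ψ ⬝ᵥ ψ = 1
  eq_zero_of_notMem : ∀ x ∉ S, ψ x = 0
  mulVec_eq : A *ᵥ ψ = (ψ ⬝ᵥ A *ᵥ ψ) • ψ

/-- Any two indices in `S` are joined by a chain of positive entries of `A`. -/
def IsIrreducibleOn (A : Matrix X X ℝ) (S : Set X) : Prop :=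
  ∀ x ∈ S, ∀ y ∈ S, Relation.ReflTransGen (fun x y ↦ 0 < A x y) x y

theorem isClosed_setOf_isPerronVector (S : Set X) :
    IsClosed {p : Matrix X X ℝ × (X → ℝ) | IsPerronVector p.1 S p.2} := by
  have set_eq : {p : Matrix X X ℝ × (X → ℝ) | IsPerronVector p.1 S p.2} =
      {p | ∀ x, 0 ≤ p.2 x} ∩ {p | p.2 ⬝ᵥ p.2 = 1} ∩ {p | ∀ x ∉ S, p.2 x = 0} ∩
        {p | p.1 *ᵥ p.2 = (p.2 ⬝ᵥ p.1 *ᵥ p.2) • p.2} := by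
    ext p
    exact ⟨fun h ↦ ⟨⟨⟨h.1, h.2⟩, h.3⟩, h.4⟩, fun h ↦ ⟨h.1.1.1, h.1.1.2, h.1.2, h.2⟩⟩
  rw [set_eq]
  refine ((IsClosed.inter ?_ ?_).inter ?_).inter ?_
  · rw [Set.ofPred_forall]
    exact isClosed_iInter fun x ↦ isClosed_le continuous_const (by fun_prop)
  · exact isClosed_eq (by fun_prop) continuous_const
  · simp only [Set.ofPred_forall]
    exact isClosed_iInter fun x ↦ isClosed_iInter fun _ ↦ isClosed_eq (by fun_prop) continuous_const
  · exact isClosed_eq (by fun_prop) (by fun_prop)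

theorem IsPerronVector.ne_zero (h : IsPerronVector A S ψ) : ψ ≠ 0 := by
  rintro rfl
  simpa using h.dotProduct_self

theorem IsPerronVector.le_one (h : IsPerronVector A S ψ) (x : X) : ψ x ≤ 1 := by
  have sq_le : ψ x * ψ x ≤ ψ ⬝ᵥ ψ :=
    Finset.single_le_sum (f := fun x ↦ ψ x * ψ x) (fun y _ ↦ mul_self_nonneg _) (Finset.mem_univ x)
  rw [h.dotProduct_self] at sq_le
  nlinarith

theorem eq_zero_of_apply_eq_zero (hA₀ : ∀ x y, 0 ≤ A x y) (hirr : IsIrreducibleOn A S)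
    (hψ₀ : ∀ x, 0 ≤ ψ x) (hψS : ∀ x ∉ S, ψ x = 0) (hψ : A *ᵥ ψ = μ • ψ) {x : X} (hx : x ∈ S)
    (h : ψ x = 0) : ψ = 0 := by
  have step {x y : X} (hxy : 0 < A x y) (h : ψ x = 0) : ψ y = 0 := by
    have row : ∑ y, A x y * ψ y = 0 := by
      simpa [h, mulVec, dotProduct] using congrFun hψ x
    rw [Finset.sum_eq_zero_iff_of_nonneg fun y _ ↦ mul_nonneg (hA₀ x y) (hψ₀ y)] at row
    exact (mul_eq_zero.mp (row y (Finset.mem_univ y))).resolve_left hxy.ne'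
  funext y
  by_cases hy : y ∈ S
  · exact (hirr x hx y hy).rec h fun _ hyz ih ↦ step hyz ih
  · exact hψS y hy

theorem IsPerronVector.pos (h : IsPerronVector A S ψ) (hA₀ : ∀ x y, 0 ≤ A x y)
    (hirr : IsIrreducibleOn A S) {x : X} (hx : x ∈ S) : 0 < ψ x :=
  (h.nonneg x).lt_of_ne' fun hψx ↦ h.ne_zero
    (eq_zero_of_apply_eq_zero hA₀ hirr h.nonneg h.eq_zero_of_notMem h.mulVec_eq hx hψx)

theorem IsPerronVector.exists_mem (h : IsPerronVector A S ψ) : ∃ x, x ∈ S := by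
  by_contra! hS
  exact h.ne_zero (funext fun x ↦ h.eq_zero_of_notMem x (hS x))

/-- Subtract from `χ` the largest multiple of `ψ` that leaves it nonnegative: the result vanishes
somewhere in `S`, hence everywhere. -/
theorem IsPerronVector.exists_eq_smul (h : IsPerronVector A S ψ) (hA₀ : ∀ x y, 0 ≤ A x y)
    (hirr : IsIrreducibleOn A S) (hχS : ∀ x ∉ S, χ x = 0)
    (hχ : A *ᵥ χ = (ψ ⬝ᵥ A *ᵥ ψ) • χ) : ∃ t : ℝ, χ = t • ψ := by
  obtain ⟨x, hx, hmin⟩ := S.toFinite.exists_minimalFor (fun x ↦ χ x / ψ x) S h.exists_mem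
  refine ⟨χ x / ψ x, sub_eq_zero.mp (eq_zero_of_apply_eq_zero hA₀ hirr (μ := ψ ⬝ᵥ A *ᵥ ψ)
    (fun y ↦ ?_) (fun y hy ↦ ?_) ?_ hx ?_)⟩
  · rw [Pi.sub_apply, Pi.smul_apply, smul_eq_mul, sub_nonneg]
    by_cases hy : y ∈ S
    · rw [← le_div_iff₀ (h.pos hA₀ hirr hy)]
      exact (le_total _ _).elim id (hmin hy)
    · rw [h.eq_zero_of_notMem y hy, hχS y hy, mul_zero]
  · simp [h.eq_zero_of_notMem y hy, hχS y hy]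
  · rw [mulVec_sub, mulVec_smul, hχ, smul_sub, smul_comm (ψ ⬝ᵥ A *ᵥ ψ) _ ψ, ← h.mulVec_eq]
  · simp [(h.pos hA₀ hirr hx).ne']

theorem IsPerronVector.unique (h : IsPerronVector A S ψ) (h' : IsPerronVector A S χ)
    (hA : A.IsHermitian) (hA₀ : ∀ x y, 0 ≤ A x y) (hirr : IsIrreducibleOn A S) : χ = ψ := by
  obtain ⟨x, hx⟩ := h.exists_mem
  have overlap_pos : 0 < χ ⬝ᵥ ψ :=
    Finset.sum_pos' (fun y _ ↦ mul_nonneg (h'.nonneg y) (h.nonneg y))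
      ⟨x, Finset.mem_univ x, mul_pos (h'.pos hA₀ hirr hx) (h.pos hA₀ hirr hx)⟩
  have eigenvalue_eq : χ ⬝ᵥ A *ᵥ χ = ψ ⬝ᵥ A *ᵥ ψ := by
    have symm : χ ⬝ᵥ A *ᵥ ψ = ψ ⬝ᵥ A *ᵥ χ := by
      rw [dotProduct_mulVec, ← mulVec_transpose, dotProduct_comm]
      congr 2
    rw [h.mulVec_eq, h'.mulVec_eq, dotProduct_smul, dotProduct_smul, dotProduct_comm ψ χ] at symm
    exact (mul_right_cancel₀ overlap_pos.ne' symm).symm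
  obtain ⟨t, rfl⟩ := h.exists_eq_smul hA₀ hirr h'.eq_zero_of_notMem
    (eigenvalue_eq ▸ h'.mulVec_eq)
  have t_pos : 0 < t := by
    simpa [h.dotProduct_self] using overlap_pos
  have t_sq : t * t = 1 := by
    simpa [h.dotProduct_self] using h'.dotProduct_self
  rw [(mul_self_eq_one_iff.mp t_sq).resolve_right (by linarith), one_smul]

theorem exists_isPerronVector (hA : A.IsHermitian) (hA₀ : ∀ x y, 0 ≤ A x y) (hS : S.Nonempty)
    (hAS : ∀ x ∉ S, ∀ y ∈ S, A x y = 0) : ∃ ψ, IsPerronVector A S ψ := by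
  classical
  have : Nonempty S := hS.to_subtype
  obtain ⟨φ, φ_nonneg, φ_unit, φ_eig⟩ := exists_nonneg_eigenvector
    (hA.submatrix ((↑) : S → X)) fun x y ↦ hA₀ x y
  set ψ : X → ℝ := fun x ↦ if hx : x ∈ S then φ ⟨x, hx⟩ else 0 with hψ
  have ψ_coe (x : S) : ψ x = φ x := by simp [hψ]
  have ψ_notMem {x : X} (hx : x ∉ S) : ψ x = 0 := by simp [hψ, hx]
  have dot_eq (v : X → ℝ) : v ⬝ᵥ ψ = (fun x : S ↦ v x) ⬝ᵥ φ :=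
    (Fintype.sum_of_injective _ Subtype.val_injective _ _
      (fun x hx ↦ by rw [ψ_notMem (by simpa using hx), mul_zero]) fun x ↦ by rw [ψ_coe]).symm
  have mulVec_coe (x : S) : (A *ᵥ ψ) x = (A.submatrix (↑) (↑) *ᵥ φ) x := dot_eq (A x)
  have mulVec_notMem {x : X} (hx : x ∉ S) : (A *ᵥ ψ) x = 0 :=
    (dot_eq (A x)).trans (Finset.sum_eq_zero fun y _ ↦
      mul_eq_zero_of_left (hAS x hx y y.2) _)
  have rayleigh : ψ ⬝ᵥ A *ᵥ ψ = φ ⬝ᵥ A.submatrix (↑) (↑) *ᵥ φ := by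
    rw [dotProduct_comm, dot_eq, dotProduct_comm]
    simp only [mulVec_coe]
  refine ⟨ψ, fun x ↦ ?_, ?_, fun x ↦ ψ_notMem, funext fun x ↦ ?_⟩
  · by_cases hx : x ∈ S
    · exact (φ_nonneg ⟨x, hx⟩).trans_eq (ψ_coe ⟨x, hx⟩).symm
    · exact (ψ_notMem hx).ge
  · rw [dot_eq, ← φ_unit]
    simp only [ψ_coe]
  · by_cases hx : x ∈ S
    · rw [mulVec_coe ⟨x, hx⟩, φ_eig, rayleigh, Pi.smul_apply, Pi.smul_apply, ψ_coe ⟨x, hx⟩]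
    · rw [mulVec_notMem hx, Pi.smul_apply, ψ_notMem hx, smul_zero]

theorem IsPerronVector.exists_eq_smul_ofReal (h : IsPerronVector A S ψ) (hA₀ : ∀ x y, 0 ≤ A x y)
    (hirr : IsIrreducibleOn A S) {χ : X → ℂ} (hχS : ∀ x ∉ S, χ x = 0)
    (hχ : A.map Complex.ofReal *ᵥ χ = ((ψ ⬝ᵥ A *ᵥ ψ : ℝ) : ℂ) • χ) :
    ∃ t : ℂ, χ = t • fun x ↦ (ψ x : ℂ) := by
  obtain ⟨r, hr⟩ := h.exists_eq_smul hA₀ hirr (χ := fun x ↦ (χ x).re)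
    (fun x hx ↦ by rw [hχS x hx, Complex.zero_re]) <| funext fun x ↦ by
      simpa [mulVec, dotProduct] using congrArg Complex.re (congrFun hχ x)
  obtain ⟨s, hs⟩ := h.exists_eq_smul hA₀ hirr (χ := fun x ↦ (χ x).im)
    (fun x hx ↦ by rw [hχS x hx, Complex.zero_im]) <| funext fun x ↦ by
      simpa [mulVec, dotProduct] using congrArg Complex.im (congrFun hχ x)
  exact ⟨⟨r, s⟩, funext fun x ↦ Complex.ext (by simpa using congrFun hr x)
    (by simpa using congrFun hs x)⟩

theorem IsPerronVector.ofReal_dotProduct_self (h : IsPerronVector A S ψ) :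
    (fun x ↦ (ψ x : ℂ)) ⬝ᵥ (fun x ↦ (ψ x : ℂ)) = 1 := by
  have := congrArg Complex.ofReal h.dotProduct_self
  simpa [dotProduct] using this

theorem IsPerronVector.mulVec_eq_of_commute (h : IsPerronVector A S ψ) (hA₀ : ∀ x y, 0 ≤ A x y)
    (hirr : IsIrreducibleOn A S) {T : Matrix X X ℂ} (hT : Commute (A.map Complex.ofReal) T)
    (hTS : ∀ x ∉ S, ∀ y ∈ S, T x y = 0) :
    T *ᵥ (fun x ↦ (ψ x : ℂ)) = expectation T ψ • fun x ↦ (ψ x : ℂ) := by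
  have ψ_eig : A.map Complex.ofReal *ᵥ (fun x ↦ (ψ x : ℂ)) =
      ((ψ ⬝ᵥ A *ᵥ ψ : ℝ) : ℂ) • fun x ↦ (ψ x : ℂ) := funext fun x ↦ by
    simpa [mulVec, dotProduct] using congrArg Complex.ofReal (congrFun h.mulVec_eq x)
  obtain ⟨t, ht⟩ := h.exists_eq_smul_ofReal hA₀ hirr (χ := T *ᵥ fun x ↦ (ψ x : ℂ))
    (fun x hx ↦ Finset.sum_eq_zero fun y _ ↦ by
      by_cases hy : y ∈ S
      · exact mul_eq_zero_of_left (hTS x hx y hy) _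
      · exact mul_eq_zero_of_right _ (congrArg Complex.ofReal (h.eq_zero_of_notMem y hy)))
    (by rw [mulVec_mulVec, hT.eq, ← mulVec_mulVec, ψ_eig, mulVec_smul])
  rw [expectation, ht, dotProduct_smul, h.ofReal_dotProduct_self, smul_eq_mul, mul_one]

end Perron

section Sectors

theorem predF_injective {N : ℕ} : Function.Injective (predF (N := N)) := by
  cases N with
  | zero => exact Function.injective_of_subsingleton _
  | succ n =>
    intro i j h
    cases i using Fin.cases <;> cases j using Fin.cases <;>
      simp_all [predF_zero, predF_succ, Fin.castSucc_ne_last, (Fin.castSucc_ne_last _).symm]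

/-- The number of upward arrows in a row of vertical edges. -/
def upCount {N : ℕ} (x : Fin N → Bool) : ℕ := ∑ i, (x i).toNat

/-- The rows with as many upward as downward arrows. -/
def balancedRows (N : ℕ) : Set (Fin N → Bool) := {x | 2 * upCount x = N}

theorem toNat_add_toNat_of_sixVertexTensor_ne_zero {R : Type*} [CommRing R] {a b c : R}
    {s s' h h' : Bool} (hne : sixVertexTensor a b c s s' h h' ≠ 0) :
    s.toNat + h.toNat = s'.toNat + h'.toNat := by
  revert hne
  cases s <;> cases s' <;> cases h <;> cases h' <;> simp [sixVertexTensor]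

theorem upCount_eq_of_transferMatrix_ne_zero {R : Type*} [CommRing R] {a b c : R} {N : ℕ}
    {x y : Fin N → Bool} (hne : transferMatrix (sixVertexTensor a b c) N x y ≠ 0) :
    upCount x = upCount y := by
  obtain ⟨h, -, path_ne⟩ := Finset.exists_ne_zero_of_sum_ne_zero hne
  have conservation (i : Fin N) :
      (x i).toNat + (h (predF i)).toNat = (y i).toNat + (h i).toNat :=
    toNat_add_toNat_of_sixVertexTensor_ne_zero fun hi ↦
      path_ne (Finset.prod_eq_zero (Finset.mem_univ i) hi)
  have total := Finset.sum_congr rfl fun i (_ : i ∈ Finset.univ) ↦ conservation i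
  rw [Finset.sum_add_distrib, Finset.sum_add_distrib,
    (Finite.injective_iff_bijective.mp predF_injective).sum_comp fun i ↦ (h i).toNat] at total
  exact Nat.add_right_cancel total

theorem transferMatrix_eq_zero_of_mem_balancedRows {R : Type*} [CommRing R] (a b c : R) {N : ℕ}
    {x y : Fin N → Bool} (hx : x ∉ balancedRows N) (hy : y ∈ balancedRows N) :
    transferMatrix (sixVertexTensor a b c) N x y = 0 := by
  contrapose! hx
  exact (congrArg (2 * ·) (upCount_eq_of_transferMatrix_ne_zero hx)).trans hy

theorem balancedRows_nonempty {N : ℕ} (hN : Even N) : (balancedRows N).Nonempty := by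
  obtain ⟨k, rfl⟩ := hN
  refine ⟨fun i ↦ decide (i.1 < k), ?_⟩
  simp [balancedRows, upCount, Fin.sum_univ_add, two_mul]

theorem exists_perm_of_upCount_eq {N : ℕ} {x y : Fin N → Bool} (h : upCount x = upCount y) :
    ∃ σ : Equiv.Perm (Fin N), y = x ∘ σ := by
  have upCount_eq_card (x : Fin N → Bool) : upCount x = Fintype.card {i // x i = true} := by
    rw [Fintype.card_subtype, Finset.card_filter]
    exact Finset.sum_congr rfl fun i _ ↦ by cases x i <;> rfl
  rw [upCount_eq_card, upCount_eq_card] at h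
  obtain ⟨e⟩ := Fintype.card_eq.mp h.symm
  refine ⟨e.extendSubtype, funext fun i ↦ Bool.eq_iff_iff.mpr ⟨e.extendSubtype_mem i, ?_⟩⟩
  exact not_imp_not.mp (e.extendSubtype_not_mem i)

end Sectors

section Positivity

variable {N : ℕ} {a b c e : ℝ}

theorem isHermitian_transferMatrix (a c : ℝ) (N : ℕ) :
    (transferMatrix (sixVertexTensor a a c) N).IsHermitian :=
  transferMatrix_sixVertexTensor_transpose a a c N

theorem sixVertexTensor_nonneg (ha : 0 ≤ a) (hb : 0 ≤ b) (hc : 0 ≤ c) (s s' h h' : Bool) :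
    0 ≤ sixVertexTensor a b c s s' h h' := by
  unfold sixVertexTensor
  split_ifs <;> first | assumption | exact le_rfl

theorem prod_le_transferMatrix (ha : 0 ≤ a) (hb : 0 ≤ b) (hc : 0 ≤ c) (x y h : Fin N → Bool) :
    ∏ i, sixVertexTensor a b c (x i) (y i) (h (predF i)) (h i) ≤
      transferMatrix (sixVertexTensor a b c) N x y :=
  Finset.single_le_sum (f := fun h : Fin N → Bool ↦
      ∏ i, sixVertexTensor a b c (x i) (y i) (h (predF i)) (h i))
    (fun _ _ ↦ Finset.prod_nonneg fun _ _ ↦ sixVertexTensor_nonneg ha hb hc _ _ _ _)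
    (Finset.mem_univ h)

theorem transferMatrix_nonneg (ha : 0 ≤ a) (hb : 0 ≤ b) (hc : 0 ≤ c) (x y : Fin N → Bool) :
    0 ≤ transferMatrix (sixVertexTensor a b c) N x y :=
  Finset.sum_nonneg fun _ _ ↦ Finset.prod_nonneg fun _ _ ↦ sixVertexTensor_nonneg ha hb hc _ _ _ _

theorem one_le_transferMatrix_self (ha : 1 ≤ a) (hb : 1 ≤ b) (hc : 0 ≤ c) (x : Fin N → Bool) :
    1 ≤ transferMatrix (sixVertexTensor a b c) N x x := by
  refine le_trans (Finset.one_le_prod fun i _ ↦ ?_) (prod_le_transferMatrix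
    (zero_le_one.trans ha) (zero_le_one.trans hb) hc x x fun _ ↦ true)
  simp only [sixVertexTensor, if_true]
  split_ifs <;> assumption

theorem transferMatrix_mono {a' b' c' : ℝ} (ha : 0 ≤ a) (hb : 0 ≤ b) (hc : 0 ≤ c) (haa' : a ≤ a')
    (hbb' : b ≤ b') (hcc' : c ≤ c') (x y : Fin N → Bool) :
    transferMatrix (sixVertexTensor a b c) N x y ≤
      transferMatrix (sixVertexTensor a' b' c') N x y := by
  refine Finset.sum_le_sum fun h _ ↦ Finset.prod_le_prod
    (fun i _ ↦ sixVertexTensor_nonneg ha hb hc _ _ _ _) fun i _ ↦ ?_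
  unfold sixVertexTensor
  split_ifs <;> first | assumption | exact le_rfl

theorem sixVertexTensor_pos (he : 0 < e) {s s' h h' : Bool}
    (hs : s.toNat + h.toNat = s'.toNat + h'.toNat) : 0 < sixVertexTensor e e 1 s s' h h' := by
  revert hs
  cases s <;> cases s' <;> cases h <;> cases h' <;> simp [sixVertexTensor, he]

theorem transferMatrix_comp_swap_pos (he : 0 < e) {n : ℕ} {x : Fin (n + 1) → Bool} {i : Fin n}
    (hx : x i.castSucc ≠ x i.succ) :
    0 < transferMatrix (sixVertexTensor e e 1) (n + 1) x
      (x ∘ Equiv.swap i.castSucc i.succ) := by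
  let h (j : Fin (n + 1)) : Bool := if j = i.castSucc then x i.castSucc else !x i.castSucc
  refine (Finset.prod_pos fun j _ ↦ sixVertexTensor_pos he ?_).trans_le
    (prod_le_transferMatrix he.le he.le zero_le_one x _ h)
  have h_predF : h (predF j) = if j = i.succ then x i.castSucc else !x i.castSucc := by
    simp only [h, ← predF_succ i, predF_injective.eq_iff]
  have flip : x i.succ = !x i.castSucc := Bool.eq_not.mpr hx.symm
  have ne : i.succ ≠ i.castSucc := Fin.castSucc_lt_succ.ne'
  simp only [h_predF, h, Function.comp_apply, Equiv.swap_apply_def]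
  split_ifs with hsucc hcast hcast
  · exact absurd (hsucc.symm.trans hcast) ne
  · rw [hsucc, flip, add_comm]
  · rw [hcast, flip, add_comm]
  · rfl

theorem reflTransGen_comp_perm (he : 0 < e) {n : ℕ} (σ : Equiv.Perm (Fin (n + 1)))
    (x : Fin (n + 1) → Bool) :
    Relation.ReflTransGen (fun x y ↦ 0 < transferMatrix (sixVertexTensor e e 1) (n + 1) x y)
      x (x ∘ σ) := by
  have hσ : σ ∈ Submonoid.closure (Set.range fun i : Fin n ↦ Equiv.swap i.castSucc i.succ) := by
    rw [Equiv.Perm.mclosure_swap_castSucc_succ]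
    trivial
  induction hσ using Submonoid.closure_induction generalizing x with
  | mem σ hσ =>
    obtain ⟨i, rfl⟩ := hσ
    by_cases hx : x i.castSucc = x i.succ
    · have fixed : x ∘ Equiv.swap i.castSucc i.succ = x := by
        funext j
        simp only [Function.comp_apply, Equiv.swap_apply_def]
        split_ifs <;> simp_all
      exact fixed.symm ▸ .refl
    · exact .single (transferMatrix_comp_swap_pos he hx)
  | one => exact .refl
  | mul σ τ _ _ hσ hτ => exact (hσ x).trans (hτ (x ∘ σ))

theorem isIrreducibleOn_balancedRows [NeZero N] (he : 0 < e) :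
    IsIrreducibleOn (transferMatrix (sixVertexTensor e e 1) N) (balancedRows N) := by
  obtain ⟨n, rfl⟩ := Nat.exists_eq_succ_of_ne_zero (NeZero.ne N)
  intro x hx y hy
  obtain ⟨σ, rfl⟩ := exists_perm_of_upCount_eq
    (Nat.eq_of_mul_eq_mul_left two_pos (hx.trans hy.symm))
  exact reflTransGen_comp_perm he σ x

end Positivity

section GroundState

variable {l : ℝ} {N : ℕ} {ψ : (Fin N → Bool) → ℝ}

/-- The weight `sinhWeight l (1 / 2)`, as a real number. -/
def midpointWeight (l : ℝ) : ℝ := 1 / (2 * Real.cosh (l / 2))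

theorem midpointWeight_pos (l : ℝ) : 0 < midpointWeight l := by
  have := Real.cosh_pos (l / 2)
  unfold midpointWeight
  positivity

theorem midpointWeight_le_half (l : ℝ) : midpointWeight l ≤ 1 / 2 := by
  have := Real.one_le_cosh (l / 2)
  unfold midpointWeight
  gcongr
  linarith

theorem sinhWeight_half (hl : 0 < l) : sinhWeight l (1 / 2) = midpointWeight l := by
  have sinh_ne : Real.sinh (l / 2) ≠ 0 := (Real.sinh_pos_iff.mpr (half_pos hl)).ne'
  have cosh_ne : Real.cosh (l / 2) ≠ 0 := (Real.cosh_pos _).ne'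
  have half_mul : (l : ℂ) * (1 / 2) = (l / 2 : ℝ) := by push_cast; ring
  rw [sinhWeight, midpointWeight, half_mul, ← Complex.ofReal_sinh, ← Complex.ofReal_sinh,
    ← Complex.ofReal_div, Complex.ofReal_inj]
  nth_rw 2 [← mul_div_cancel₀ l two_ne_zero]
  rw [Real.sinh_two_mul]
  field_simp

theorem transferMatrix_map_ofReal (a b c : ℝ) (N : ℕ) :
    (transferMatrix (sixVertexTensor a b c) N).map Complex.ofReal =
      transferMatrix (sixVertexTensor (a : ℂ) b c) N := by
  ext x y
  simp only [Matrix.map_apply, transferMatrix, Complex.ofReal_sum, Complex.ofReal_prod]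
  refine Finset.sum_congr rfl fun h _ ↦ Finset.prod_congr rfl fun i _ ↦ ?_
  unfold sixVertexTensor
  split_ifs <;> simp

/-- The Perron vector, in the sector of balanced rows, of the transfer matrix with `Δ = -cosh l` at
the symmetric point `w = 1 / 2`. -/
def IsGroundState (l : ℝ) (ψ : (Fin N → Bool) → ℝ) : Prop :=
  IsPerronVector (transferMatrix (sixVertexTensor (midpointWeight l) (midpointWeight l) 1) N)
    (balancedRows N) ψ

theorem transferMatrix_midpointWeight_nonneg (l : ℝ) (x y : Fin N → Bool) :
    0 ≤ transferMatrix (sixVertexTensor (midpointWeight l) (midpointWeight l) 1) N x y :=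
  transferMatrix_nonneg (midpointWeight_pos l).le (midpointWeight_pos l).le zero_le_one x y

theorem exists_isGroundState (l : ℝ) (hN : Even N) :
    ∃ ψ : (Fin N → Bool) → ℝ, IsGroundState l ψ :=
  exists_isPerronVector (isHermitian_transferMatrix _ 1 N)
    (transferMatrix_midpointWeight_nonneg l) (balancedRows_nonempty hN)
    fun _ hx _ hy ↦ transferMatrix_eq_zero_of_mem_balancedRows _ _ _ hx hy

theorem IsGroundState.unique [NeZero N] {χ : (Fin N → Bool) → ℝ} (h : IsGroundState l ψ)
    (h' : IsGroundState l χ) : χ = ψ :=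
  IsPerronVector.unique h h' (isHermitian_transferMatrix _ 1 N)
    (transferMatrix_midpointWeight_nonneg l)
    (isIrreducibleOn_balancedRows (midpointWeight_pos l))

theorem sinhTransferMatrix_half (hl : 0 < l) : sinhTransferMatrix l N (1 / 2) =
    (transferMatrix (sixVertexTensor (midpointWeight l) (midpointWeight l) 1) N).map
      Complex.ofReal := by
  rw [sinhTransferMatrix, sub_half, sinhWeight_half hl, transferMatrix_map_ofReal,
    Complex.ofReal_one]

theorem IsGroundState.mulVec_eq [NeZero N] (h : IsGroundState l ψ) (hl : 0 < l) {w : ℂ}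
    (h₀ : 0 ≤ w.re) (h₁ : w.re ≤ 1) :
    (sinhTransferMatrix l N w).mulVec (fun x ↦ (ψ x : ℂ)) =
      expectation (sinhTransferMatrix l N w) ψ • fun x ↦ (ψ x : ℂ) := by
  refine IsPerronVector.mulVec_eq_of_commute h (transferMatrix_midpointWeight_nonneg l)
    (isIrreducibleOn_balancedRows (midpointWeight_pos l)) ?_
    fun _ hx _ hy ↦ transferMatrix_eq_zero_of_mem_balancedRows _ _ _ hx hy
  rw [← sinhTransferMatrix_half hl]
  have re_sub : (w - 1 / 2).re = w.re - 1 / 2 := by simp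
  exact commute_sinhTransferMatrix hl (abs_lt.mpr (by constructor <;> linarith))

theorem IsGroundState.expectation_mul [NeZero N] (h : IsGroundState l ψ) (hl : 0 < l) {w : ℂ}
    (hw : w.re = 0) :
    expectation (sinhTransferMatrix l N w) ψ * expectation (sinhTransferMatrix l N (-w)) ψ =
      expectation (fusedTransferMatrix l N w) ψ * sinhWeight l w ^ N +
        (sinhWeight l (1 - w) * sinhWeight l (1 + w)) ^ N := by
  have product : expectation (sinhTransferMatrix l N w * sinhTransferMatrix l N (1 + w)) ψ =
      expectation (sinhTransferMatrix l N w) ψ *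
        expectation (sinhTransferMatrix l N (1 + w)) ψ := by
    rw [expectation, ← Matrix.mulVec_mulVec, h.mulVec_eq hl (by simp [hw]) (by simp [hw]),
      Matrix.mulVec_smul, h.mulVec_eq hl hw.ge (by simp [hw]), dotProduct_smul, dotProduct_smul,
      IsPerronVector.ofReal_dotProduct_self h]
    simp [mul_comm]
  rw [← expectation_sinhTransferMatrix_one_sub ψ (-w), sub_neg_eq_add, ← product,
    sinhTransferMatrix_mul_add_one hl, ← sinhWeight_one_sub_mul_one_add hl, expectation,
    Matrix.add_mulVec, dotProduct_add, Matrix.smul_mulVec, Matrix.smul_mulVec, Matrix.one_mulVec,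
    dotProduct_smul, dotProduct_smul, IsPerronVector.ofReal_dotProduct_self h, ← expectation]
  simp [mul_comm]

theorem IsGroundState.norm_sinhWeight_one_sub_pow_le [NeZero N] (h : IsGroundState l ψ)
    (hl : 0 < l) (htanh : 3 * Real.tanh (π ^ 2 / (4 * l)) ^ N ≤ 1 / 2) {w : ℂ} (hw : w.re = 0) :
    ‖sinhWeight l (1 - w)‖ ^ N ≤ 4 * ‖expectation (sinhTransferMatrix l N w) ψ‖ := by
  have ψ_unit : ψ ⬝ᵥ ψ = 1 := IsPerronVector.dotProduct_self h
  have fused_le := norm_expectation_fusedTransferMatrix_mul_le_tanh ψ hl hw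
  have reflected_le := norm_expectation_sinhTransferMatrix_le ψ (w := -w) hl (by simp [hw])
  rw [sub_neg_eq_add, norm_sinhWeight_one_add hw] at reflected_le
  have fusion : (sinhWeight l (1 - w) * sinhWeight l (1 + w)) ^ N =
      expectation (sinhTransferMatrix l N w) ψ * expectation (sinhTransferMatrix l N (-w)) ψ -
        expectation (fusedTransferMatrix l N w) ψ * sinhWeight l w ^ N :=
    eq_sub_of_add_eq' (h.expectation_mul hl hw).symm
  have triangle := norm_sub_le
    (expectation (sinhTransferMatrix l N w) ψ * expectation (sinhTransferMatrix l N (-w)) ψ)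
    (expectation (fusedTransferMatrix l N w) ψ * sinhWeight l w ^ N)
  rw [← fusion, norm_pow, norm_mul (sinhWeight l _), norm_sinhWeight_one_add hw, mul_pow,
    norm_mul (expectation (sinhTransferMatrix l N w) ψ)] at triangle
  rw [ψ_unit, mul_one] at fused_le reflected_le
  rw [mul_pow, ← pow_mul, mul_comm 2, pow_mul] at fused_le
  have weight_pos : 0 < ‖sinhWeight l (1 - w)‖ ^ N :=
    pow_pos (one_pos.trans_le (one_le_norm_sinhWeight_one_sub hl hw)) N
  set p := ‖sinhWeight l (1 - w)‖ ^ N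
  set E := ‖expectation (sinhTransferMatrix l N w) ψ‖
  have half_sq_le : p ^ 2 / 2 ≤ E * (2 * p) := by
    have : E * ‖expectation (sinhTransferMatrix l N (-w)) ψ‖ ≤ E * (2 * p) := by gcongr
    nlinarith [sq_nonneg p]
  nlinarith

end GroundState

section StripLowerBound

variable {l : ℝ} {N : ℕ} {ψ : (Fin N → Bool) → ℝ}

theorem sinhWeight_periodic (hl : 0 < l) :
    Function.Periodic (sinhWeight l) ((2 * π / l : ℝ) * Complex.I) := by
  intro w
  have hl' : (l : ℂ) ≠ 0 := by exact_mod_cast hl.ne'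
  have angle : l * (w + (2 * π / l : ℝ) * Complex.I) = l * w + π * Complex.I + π * Complex.I := by
    push_cast
    field_simp
    ring
  rw [sinhWeight, sinhWeight, angle, Complex.sinh_add_pi_mul_I, Complex.sinh_add_pi_mul_I, neg_neg]

theorem sinhTransferMatrix_periodic (hl : 0 < l) (N : ℕ) :
    Function.Periodic (sinhTransferMatrix l N) ((2 * π / l : ℝ) * Complex.I) := by
  intro w
  rw [sinhTransferMatrix, sinhTransferMatrix, sinhWeight_periodic hl, ← sub_sub,
    (sinhWeight_periodic hl).sub_eq]

theorem exists_sinhTransferMatrix_eq_of_im_mem (hl : 0 < l) (N : ℕ) (w : ℂ) :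
    ∃ w' : ℂ, w'.re = w.re ∧ w'.im ∈ Set.Icc 0 (2 * π / l) ∧
      sinhTransferMatrix l N w = sinhTransferMatrix l N w' := by
  have periodic : Function.Periodic (fun t : ℝ ↦ sinhTransferMatrix l N (w.re + t * Complex.I))
      (2 * π / l) := fun t ↦ by
    simp only [Complex.ofReal_add, add_mul, ← add_assoc]
    exact sinhTransferMatrix_periodic hl N _
  obtain ⟨t, ht, eq⟩ := periodic.exists_mem_Ico₀ (by positivity) w.im
  exact ⟨w.re + t * Complex.I, by simp, by simpa using Set.Ico_subset_Icc_self ht,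
    by simpa only [Complex.re_add_im] using eq⟩

theorem hasExpGrowth_inv_expectation_sinhTransferMatrix (hl : 0 < l)
    (hψ : ∀ w : ℂ, 0 ≤ w.re → w.re ≤ 1 → expectation (sinhTransferMatrix l N w) ψ ≠ 0) :
    HasExpGrowth 0 1 fun w ↦ (expectation (sinhTransferMatrix l N w) ψ)⁻¹ := by
  obtain ⟨K, hK⟩ := (isCompact_Icc.reProdIm isCompact_Icc :
      IsCompact (Set.Icc (0 : ℝ) 1 ×ℂ Set.Icc 0 (2 * π / l))).exists_bound_of_continuousOn
    (f := fun w ↦ (expectation (sinhTransferMatrix l N w) ψ)⁻¹)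
    ((differentiable_expectation_sinhTransferMatrix ψ l).continuous.continuousOn.inv₀
      fun w hw ↦ hψ w hw.1.1 hw.1.2)
  refine .of_norm_le K 0 fun w h₀ h₁ _ ↦ ?_
  obtain ⟨w', re_eq, im_mem, eq⟩ := exists_sinhTransferMatrix_eq_of_im_mem hl N w
  rw [zero_mul, Real.exp_zero, mul_one, eq]
  exact hK w' ⟨by simp [re_eq, h₀, h₁], im_mem⟩

theorem IsGroundState.norm_pow_le_of_ne_zero [NeZero N] (h : IsGroundState l ψ) (hl : 0 < l)
    (htanh : 3 * Real.tanh (π ^ 2 / (4 * l)) ^ N ≤ 1 / 2)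
    (hψ : ∀ w : ℂ, 0 ≤ w.re → w.re ≤ 1 → expectation (sinhTransferMatrix l N w) ψ ≠ 0)
    {g : ℂ → ℂ} (hg : ∀ w : ℂ, 0 ≤ w.re → w.re ≤ 1 → DifferentiableAt ℂ g w)
    (hg_growth : HasExpGrowth 0 1 g)
    (hg_zero : ∀ w : ℂ, w.re = 0 → ‖g w‖ ≤ ‖sinhWeight l (1 - w)‖)
    (hg_one : ∀ w : ℂ, w.re = 1 → ‖g w‖ ≤ ‖sinhWeight l w‖)
    {w : ℂ} (h₀ : 0 ≤ w.re) (h₁ : w.re ≤ 1) :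
    ‖g w‖ ^ N ≤ 4 * ‖expectation (sinhTransferMatrix l N w) ψ‖ := by
  rw [← norm_pow]
  refine norm_le_mul_norm_of_hasExpGrowth (f := fun w ↦ g w ^ N) zero_lt_one
    (fun z h₀ h₁ ↦ (hg z h₀ h₁).pow N)
    (fun z _ _ ↦ differentiable_expectation_sinhTransferMatrix ψ l z) hψ (hg_growth.pow N)
    (hasExpGrowth_inv_expectation_sinhTransferMatrix hl hψ) (fun z hz ↦ ?_) h₀ h₁
  rw [norm_pow]
  rcases hz with hz | hz
  · exact (pow_le_pow_left₀ (norm_nonneg _) (hg_zero z hz) N).trans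
      (h.norm_sinhWeight_one_sub_pow_le hl htanh hz)
  · have reflected := h.norm_sinhWeight_one_sub_pow_le hl htanh (w := 1 - z) (by simp [hz])
    rw [sub_sub_cancel, expectation_sinhTransferMatrix_one_sub] at reflected
    exact (pow_le_pow_left₀ (norm_nonneg _) (hg_one z hz) N).trans reflected

end StripLowerBound

section Alternating

variable {N : ℕ}

/-- Rows in which consecutive arrows point in opposite directions, cyclically. They carry the ground
state in the limit `l → ∞`, where only the vertices of weight `c` survive. -/
def IsAlternating (x : Fin N → Bool) : Prop := ∀ i, x (predF i) = !x i

theorem IsAlternating.compl {x : Fin N → Bool} (hx : IsAlternating x) : IsAlternating xᶜ :=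
  fun i ↦ congrArg not (hx i)

theorem exists_isAlternating (hN : Even N) : ∃ x : Fin N → Bool, IsAlternating x := by
  refine ⟨fun i ↦ decide (i.1 % 2 = 0), fun i ↦ ?_⟩
  have pred_mod : (predF i).1 % 2 = (i.1 + (N - 1)) % 2 := Nat.mod_mod_of_dvd _ hN.two_dvd
  have := i.pos
  rw [Nat.even_iff] at hN
  beta_reduce
  rw [pred_mod, ← decide_not, decide_eq_decide]
  omega

theorem IsAlternating.eq_or_eq_compl {x y : Fin N → Bool} (hx : IsAlternating x)
    (hy : IsAlternating y) : y = x ∨ y = xᶜ := by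
  cases N with
  | zero => exact Or.inl (Subsingleton.elim _ _)
  | succ n =>
    have xor_eq (i : Fin (n + 1)) : (x i ^^ y i) = (x 0 ^^ y 0) := by
      induction i using Fin.induction with
      | zero => rfl
      | succ i ih =>
        rw [← ih, ← predF_succ, hx, hy, Bool.not_xor_not]
    refine (Bool.eq_false_or_eq_true (x 0 ^^ y 0)).symm.imp
      (fun h ↦ funext fun i ↦ ?_) (fun h ↦ funext fun i ↦ ?_)
    · exact (beq_iff_eq.mp <| by simpa [h] using xor_eq i).symm
    · have := (xor_eq i).trans h
      rw [Pi.compl_apply]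
      revert this
      cases x i <;> cases y i <;> simp

theorem IsAlternating.mem_balancedRows {x : Fin N → Bool} (hx : IsAlternating x) :
    x ∈ balancedRows N := by
  have upCount_pred : upCount (x ∘ predF) = upCount x :=
    (Finite.injective_iff_bijective.mp predF_injective).sum_comp fun i ↦ (x i).toNat
  have pair_sum (i : Fin N) : (x (predF i)).toNat + (x i).toNat = 1 := by
    rw [hx i]
    cases x i <;> rfl
  calc 2 * upCount x = upCount (x ∘ predF) + upCount x := by rw [upCount_pred, two_mul]
    _ = ∑ i, ((x (predF i)).toNat + (x i).toNat) := Finset.sum_add_distrib.symm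
    _ = N := by simp [pair_sum]

theorem IsAlternating.transferMatrix_compl {R : Type*} [CommRing R] (a b : R)
    {x : Fin N → Bool} (hx : IsAlternating x) :
    transferMatrix (sixVertexTensor a b 1) N x xᶜ = 1 := by
  rw [transferMatrix, Finset.sum_eq_single x]
  · refine Finset.prod_eq_one fun i _ ↦ ?_
    rw [hx i, Pi.compl_apply]
    cases x i <;> simp [sixVertexTensor]
  · intro h _ hne
    obtain ⟨i, hi⟩ := Function.ne_iff.mp hne
    refine Finset.prod_eq_zero (Finset.mem_univ i) ?_
    rw [Pi.compl_apply]
    revert hi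
    cases x i <;> cases h i <;> cases h (predF i) <;> simp [sixVertexTensor]
  · exact fun h ↦ (h (Finset.mem_univ x)).elim

theorem isAlternating_of_transferMatrix_ne_zero {R : Type*} [CommRing R] {c : R}
    {x y : Fin N → Bool} (hne : transferMatrix (sixVertexTensor 0 0 c) N x y ≠ 0) :
    IsAlternating x := by
  obtain ⟨h, -, path_ne⟩ := Finset.exists_ne_zero_of_sum_ne_zero hne
  have eq_of_ne_zero {s s' k k' : Bool} (hs : sixVertexTensor 0 0 c s s' k k' ≠ 0) :
      k' = s ∧ k = !s := by
    revert hs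
    cases s <;> cases s' <;> cases k <;> cases k' <;> simp [sixVertexTensor]
  have path_eq (i : Fin N) : h i = x i ∧ h (predF i) = !x i :=
    eq_of_ne_zero fun hi ↦ path_ne (Finset.prod_eq_zero (Finset.mem_univ i) hi)
  exact fun i ↦ (path_eq (predF i)).1.symm.trans (path_eq i).2

theorem IsAlternating.transferMatrix_self [NeZero N] {R : Type*} [CommRing R]
    [NoZeroDivisors R] {a b : R} (c : R) (hab : a * b = 0) {x : Fin N → Bool}
    (hx : IsAlternating x) : transferMatrix (sixVertexTensor a b c) N x x = 0 := by
  refine Finset.sum_eq_zero fun h _ ↦ ?_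
  have local_zero : sixVertexTensor a b c (x 0) (x 0) (h (predF 0)) (h 0) = 0 ∨
      sixVertexTensor a b c (x (predF 0)) (x (predF 0)) (h (predF (predF 0)))
        (h (predF 0)) = 0 := by
    rw [hx 0]
    obtain rfl | rfl := mul_eq_zero.mp hab <;> cases x 0 <;> cases h 0 <;> cases h (predF 0) <;>
      cases h (predF (predF 0)) <;> simp [sixVertexTensor]
  obtain at_zero | at_pred := local_zero
  · exact Finset.prod_eq_zero (Finset.mem_univ 0) at_zero
  · exact Finset.prod_eq_zero (Finset.mem_univ (predF 0)) at_pred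

end Alternating

section LargeAnisotropy

open Matrix

variable {N : ℕ}

theorem mulVec_ofReal_ne_zero_of_mul_eq_zero [NeZero N] {S : Set (Fin N → Bool)}
    {ψ : (Fin N → Bool) → ℝ}
    (h : IsPerronVector (transferMatrix (sixVertexTensor 0 0 1) N) S ψ)
    (hμ : 1 ≤ ψ ⬝ᵥ transferMatrix (sixVertexTensor 0 0 1) N *ᵥ ψ) {a b : ℂ} (hab : a * b = 0) :
    transferMatrix (sixVertexTensor a b 1) N *ᵥ (fun x ↦ (ψ x : ℂ)) ≠ 0 := by
  have alternating_of_ne_zero {x : Fin N → Bool} (hψx : ψ x ≠ 0) : IsAlternating x := by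
    have row_ne : (transferMatrix (sixVertexTensor (0 : ℝ) 0 1) N *ᵥ ψ) x ≠ 0 := by
      rw [h.mulVec_eq]
      exact mul_ne_zero (one_pos.trans_le hμ).ne' hψx
    obtain ⟨y, -, entry_ne⟩ := Finset.exists_ne_zero_of_sum_ne_zero row_ne
    exact isAlternating_of_transferMatrix_ne_zero (left_ne_zero_of_mul entry_ne)
  obtain ⟨x, hψx⟩ := Function.ne_iff.mp h.ne_zero
  have hx := alternating_of_ne_zero hψx
  refine Function.ne_iff.mpr ⟨xᶜ, ?_⟩
  have row_eq : (transferMatrix (sixVertexTensor a b 1) N *ᵥ fun x ↦ (ψ x : ℂ)) xᶜ = ψ x := by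
    rw [mulVec, dotProduct, Finset.sum_eq_single x]
    · have := hx.compl.transferMatrix_compl a b
      rw [compl_compl] at this
      rw [this, one_mul]
    · intro y _ hyx
      by_cases hψy : ψ y = 0
      · rw [hψy, Complex.ofReal_zero, mul_zero]
      · have y_eq : y = xᶜ :=
          (hx.eq_or_eq_compl (alternating_of_ne_zero hψy)).resolve_left hyx
        rw [y_eq, hx.compl.transferMatrix_self 1 hab, zero_mul]
    · exact fun hx ↦ (hx (Finset.mem_univ x)).elim
  rw [row_eq]
  exact Complex.ofReal_ne_zero.mpr hψx

theorem continuous_sixVertexTensor {R Y : Type*} [CommRing R] [TopologicalSpace R]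
    [TopologicalSpace Y] {a b c : Y → R} (ha : Continuous a) (hb : Continuous b)
    (hc : Continuous c) (s s' h h' : Bool) :
    Continuous fun y ↦ sixVertexTensor (a y) (b y) (c y) s s' h h' := by
  unfold sixVertexTensor
  split_ifs
  exacts [ha, hb, continuous_const, hc, continuous_const]

theorem continuous_transferMatrix_sixVertexTensor {R Y : Type*} [CommRing R]
    [TopologicalSpace R] [IsTopologicalRing R] [TopologicalSpace Y] {a b c : Y → R}
    (ha : Continuous a) (hb : Continuous b) (hc : Continuous c) (N : ℕ) :
    Continuous fun y ↦ transferMatrix (sixVertexTensor (a y) (b y) (c y)) N :=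
  continuous_pi fun _ ↦ continuous_pi fun _ ↦ continuous_finsetSum _ fun _ _ ↦
    continuous_finsetProd _ fun _ _ ↦ continuous_sixVertexTensor ha hb hc _ _ _ _

theorem exists_le_add_norm_mul_of_mulVec_eq_zero [NeZero N] (S : Set (Fin N → Bool)) (r : ℝ) :
    ∃ δ > 0, ∀ (e : ℝ) (a b : ℂ) (ψ : (Fin N → Bool) → ℝ), e ∈ Set.Icc 0 1 → ‖a‖ ≤ r → ‖b‖ ≤ r →
      IsPerronVector (transferMatrix (sixVertexTensor e e 1) N) S ψ →
      1 ≤ ψ ⬝ᵥ transferMatrix (sixVertexTensor e e 1) N *ᵥ ψ →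
      transferMatrix (sixVertexTensor a b 1) N *ᵥ (fun x ↦ (ψ x : ℂ)) = 0 →
      δ ≤ e + ‖a * b‖ := by
  let A (p : ℝ × ℂ × ℂ × ((Fin N → Bool) → ℝ)) : Matrix (Fin N → Bool) (Fin N → Bool) ℝ :=
    transferMatrix (sixVertexTensor p.1 p.1 1) N
  let T (p : ℝ × ℂ × ℂ × ((Fin N → Bool) → ℝ)) : Matrix (Fin N → Bool) (Fin N → Bool) ℂ :=
    transferMatrix (sixVertexTensor p.2.1 p.2.2.1 1) N
  have hA : Continuous A := continuous_transferMatrix_sixVertexTensor continuous_fst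
    continuous_fst continuous_const N
  have hT : Continuous T := continuous_transferMatrix_sixVertexTensor (by fun_prop) (by fun_prop)
    continuous_const N
  let K : Set (ℝ × ℂ × ℂ × ((Fin N → Bool) → ℝ)) :=
    (Set.Icc 0 1 ×ˢ Metric.closedBall 0 r ×ˢ Metric.closedBall 0 r ×ˢ Set.Icc 0 1) ∩
      ({p | IsPerronVector (A p) S p.2.2.2} ∩ {p | 1 ≤ p.2.2.2 ⬝ᵥ A p *ᵥ p.2.2.2} ∩
        {p | T p *ᵥ (fun x ↦ (p.2.2.2 x : ℂ)) = 0})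
  have hK : IsCompact K := by
    refine (isCompact_Icc.prod <| (isCompact_closedBall 0 r).prod <|
      (isCompact_closedBall 0 r).prod isCompact_Icc).inter_right
        ((((isClosed_setOf_isPerronVector S).preimage (hA.prodMk (by fun_prop))).inter ?_).inter ?_)
    · exact isClosed_le continuous_const (by fun_prop)
    · exact isClosed_eq (by fun_prop) continuous_const
  have pos_on : ∀ p ∈ K, 0 < p.1 + ‖p.2.1 * p.2.2.1‖ := by
    rintro ⟨e, a, b, ψ⟩ ⟨⟨he, -⟩, ⟨hψ, hμ⟩, hker⟩
    refine (add_nonneg he.1 (norm_nonneg _)).lt_of_ne' fun hzero ↦ ?_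
    obtain ⟨rfl, hab⟩ := (add_eq_zero_iff_of_nonneg he.1 (norm_nonneg _)).mp hzero
    exact mulVec_ofReal_ne_zero_of_mul_eq_zero hψ hμ (norm_eq_zero.mp hab) hker
  obtain ⟨δ, hδ, hδK⟩ := hK.exists_forall_le'
    (f := fun p ↦ p.1 + ‖p.2.1 * p.2.2.1‖) (by fun_prop) pos_on
  exact ⟨δ, hδ, fun e a b ψ he ha hb hψ hμ hker ↦ hδK (e, a, b, ψ)
    ⟨⟨he, mem_closedBall_zero_iff.mpr ha, mem_closedBall_zero_iff.mpr hb, hψ.nonneg, hψ.le_one⟩,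
      ⟨hψ, hμ⟩, hker⟩⟩

theorem IsGroundState.one_le_dotProduct_mulVec [NeZero N] {l : ℝ} {ψ : (Fin N → Bool) → ℝ}
    (h : IsGroundState l ψ) (hN : Even N) :
    1 ≤ ψ ⬝ᵥ transferMatrix (sixVertexTensor (midpointWeight l) (midpointWeight l) 1) N *ᵥ ψ := by
  obtain ⟨x, hx⟩ := exists_isAlternating hN
  have entry_nonneg (x y : Fin N → Bool) := transferMatrix_midpointWeight_nonneg l x y
  have pos {x : Fin N → Bool} (hx : IsAlternating x) : 0 < ψ x := IsPerronVector.pos h entry_nonneg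
    (isIrreducibleOn_balancedRows (midpointWeight_pos l)) hx.mem_balancedRows
  set A := transferMatrix (sixVertexTensor (midpointWeight l) (midpointWeight l) 1) N with hA
  have compl_le {x : Fin N → Bool} (hx : IsAlternating x) : ψ xᶜ ≤ (ψ ⬝ᵥ A *ᵥ ψ) * ψ x := by
    calc ψ xᶜ = A x xᶜ * ψ xᶜ := by rw [hA, hx.transferMatrix_compl, one_mul]
      _ ≤ (A *ᵥ ψ) x := Finset.single_le_sum (f := fun y ↦ A x y * ψ y)
        (fun y _ ↦ mul_nonneg (entry_nonneg x y) (h.nonneg y)) (Finset.mem_univ xᶜ)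
      _ = (ψ ⬝ᵥ A *ᵥ ψ) * ψ x := congrFun (IsPerronVector.mulVec_eq h) x
  have first := compl_le hx
  have second := compl_le hx.compl
  rw [compl_compl] at second
  by_contra! hlt
  nlinarith [pos hx, pos hx.compl]

theorem cosh_le_two_mul_sinh {l : ℝ} (hl : 1 ≤ l) : Real.cosh l ≤ 2 * Real.sinh l := by
  have exp_le : Real.cosh l - Real.sinh l ≤ 1 := by
    rw [Real.cosh_sub_sinh]
    exact Real.exp_le_one_iff.mpr (by linarith)
  linarith [Real.self_le_sinh_iff.mpr (zero_le_one.trans hl)]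

theorem cosh_mul_cosh_le {x y : ℝ} (hx : 0 ≤ x) (hy : 0 ≤ y) :
    Real.cosh x * Real.cosh y ≤ Real.cosh (x + y) := by
  rw [Real.cosh_add]
  exact le_add_of_nonneg_right
    (mul_nonneg (Real.sinh_nonneg_iff.mpr hx) (Real.sinh_nonneg_iff.mpr hy))

theorem norm_sinhWeight_le_two {l : ℝ} (hl : 1 ≤ l) {w : ℂ} (hw : |w.re| ≤ 1) :
    ‖sinhWeight l w‖ ≤ 2 := by
  have l_pos : 0 < l := one_pos.trans_le hl
  refine (norm_sinhWeight_le l_pos w).trans ?_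
  rw [div_le_iff₀ (Real.sinh_pos_iff.mpr l_pos)]
  refine le_trans (Real.cosh_le_cosh.mpr ?_) (cosh_le_two_mul_sinh hl)
  rw [abs_mul]
  exact mul_le_of_le_one_right (abs_nonneg l) hw

theorem norm_sinhWeight_one_sub_mul_le {l : ℝ} (hl : 1 ≤ l) {w : ℂ} (h₀ : 0 ≤ w.re)
    (h₁ : w.re ≤ 1) : ‖sinhWeight l (1 - w) * sinhWeight l w‖ ≤ 2 / l := by
  have l_pos : 0 < l := one_pos.trans_le hl
  have sinh_pos : 0 < Real.sinh l := Real.sinh_pos_iff.mpr l_pos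
  have cosh_mul_le : Real.cosh (l * (1 - w).re) * Real.cosh (l * w.re) ≤ Real.cosh l := by
    have := cosh_mul_cosh_le (mul_nonneg l_pos.le (sub_nonneg.mpr h₁)) (mul_nonneg l_pos.le h₀)
    rwa [← mul_add, sub_add_cancel, mul_one] at this
  calc ‖sinhWeight l (1 - w) * sinhWeight l w‖
      ≤ (Real.cosh (l * (1 - w).re) / Real.sinh l) * (Real.cosh (l * w.re) / Real.sinh l) := by
        rw [norm_mul]
        exact mul_le_mul (norm_sinhWeight_le l_pos _) (norm_sinhWeight_le l_pos _)
          (norm_nonneg _) (by positivity)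
    _ ≤ 2 * Real.sinh l / (Real.sinh l * Real.sinh l) := by
        rw [div_mul_div_comm]
        exact div_le_div_of_nonneg_right (cosh_mul_le.trans (cosh_le_two_mul_sinh hl))
          (by positivity)
    _ = 2 / Real.sinh l := mul_div_mul_right _ _ sinh_pos.ne'
    _ ≤ 2 / l := by
        gcongr
        exact Real.self_le_sinh_iff.mpr l_pos.le

theorem midpointWeight_le {l : ℝ} (hl : 0 < l) : midpointWeight l ≤ 1 / l := by
  refine one_div_le_one_div_of_le hl ?_
  linarith [Real.self_le_sinh_iff.mpr (half_pos hl).le, Real.sinh_lt_cosh (l / 2)]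

theorem eventually_expectation_sinhTransferMatrix_ne_zero [NeZero N] (hN : Even N) :
    ∀ᶠ l in atTop, ∀ ψ : (Fin N → Bool) → ℝ, IsGroundState l ψ → ∀ w : ℂ, 0 ≤ w.re → w.re ≤ 1 →
      expectation (sinhTransferMatrix l N w) ψ ≠ 0 := by
  obtain ⟨δ, hδ, hδ_le⟩ := exists_le_add_norm_mul_of_mulVec_eq_zero (balancedRows N) 2
  filter_upwards [eventually_ge_atTop 1, eventually_gt_atTop (3 / δ)]
    with l hl hδl ψ hψ w h₀ h₁ hzero
  have l_pos : 0 < l := one_pos.trans_le hl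
  have mid_le := midpointWeight_le l_pos
  have mid_mem : midpointWeight l ∈ Set.Icc 0 1 :=
    ⟨(midpointWeight_pos l).le, mid_le.trans ((div_le_one l_pos).mpr hl)⟩
  have kernel : sinhTransferMatrix l N w *ᵥ (fun x ↦ (ψ x : ℂ)) = 0 := by
    rw [hψ.mulVec_eq l_pos h₀ h₁, hzero, zero_smul]
  have δ_le := hδ_le _ _ _ ψ mid_mem
    (norm_sinhWeight_le_two hl (abs_le.mpr ⟨by simp; linarith, by simpa using h₀⟩))
    (norm_sinhWeight_le_two hl (abs_le.mpr ⟨by linarith, h₁⟩))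
    hψ (hψ.one_le_dotProduct_mulVec hN) kernel
  have product_le := norm_sinhWeight_one_sub_mul_le hl h₀ h₁
  have three_div : 1 / l + 2 / l = 3 / l := by ring
  linarith [(div_lt_comm₀ hδ l_pos).mp hδl]

end LargeAnisotropy

section ZeroFree

variable {N : ℕ}

theorem continuous_midpointWeight : Continuous midpointWeight :=
  continuous_const.div (by fun_prop) fun l ↦ (mul_pos two_pos (Real.cosh_pos (l / 2))).ne'

theorem isCompact_setOf_isGroundState (N : ℕ) (l₀ l₁ : ℝ) :
    IsCompact {p : ℝ × ((Fin N → Bool) → ℝ) | p.1 ∈ Set.Icc l₀ l₁ ∧ IsGroundState p.1 p.2} := by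
  have closed : IsClosed {p : ℝ × ((Fin N → Bool) → ℝ) | IsGroundState p.1 p.2} :=
    (isClosed_setOf_isPerronVector (balancedRows N)).preimage
      ((continuous_transferMatrix_sixVertexTensor (continuous_midpointWeight.comp continuous_fst)
        (continuous_midpointWeight.comp continuous_fst) continuous_const N).prodMk continuous_snd)
  have subset : {p : ℝ × ((Fin N → Bool) → ℝ) | p.1 ∈ Set.Icc l₀ l₁ ∧ IsGroundState p.1 p.2} ⊆
      Set.Icc l₀ l₁ ×ˢ Set.Icc 0 1 := fun p hp ↦
    ⟨hp.1, IsPerronVector.nonneg hp.2, IsPerronVector.le_one hp.2⟩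
  exact (isCompact_Icc.prod isCompact_Icc).of_isClosed_subset
    ((isClosed_Icc.preimage continuous_fst).inter closed) subset

theorem continuousOn_sinhWeight {Y : Type*} [TopologicalSpace Y] {l : Y → ℝ} {w : Y → ℂ}
    (hl : Continuous l) (hw : Continuous w) :
    ContinuousOn (fun y ↦ sinhWeight (l y) (w y)) {y | 0 < l y} := by
  unfold sinhWeight
  exact ContinuousOn.div (by fun_prop) (by fun_prop) fun _ hy ↦ sinh_ofReal_ne_zero hy

theorem continuous_expectation {X Y : Type*} [Fintype X] [TopologicalSpace Y]
    {T : Y → Matrix X X ℂ} {ψ : Y → X → ℝ} (hT : Continuous T) (hψ : Continuous ψ) :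
    Continuous fun y ↦ expectation (T y) (ψ y) := by
  unfold expectation
  fun_prop

theorem continuousOn_expectation_sinhTransferMatrix (N : ℕ) :
    ContinuousOn (fun p : (ℝ × ((Fin N → Bool) → ℝ)) × ℂ ↦
      expectation (sinhTransferMatrix p.1.1 N p.2) p.1.2) {p | 0 < p.1.1} := by
  have continuous : Continuous fun q : (ℂ × ℂ) × ((Fin N → Bool) → ℝ) ↦
      expectation (transferMatrix (sixVertexTensor q.1.1 q.1.2 1) N) q.2 :=
    continuous_expectation (continuous_transferMatrix_sixVertexTensor (by fun_prop) (by fun_prop)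
      continuous_const N) continuous_snd
  have weights : ContinuousOn (fun p : (ℝ × ((Fin N → Bool) → ℝ)) × ℂ ↦
      ((sinhWeight p.1.1 (1 - p.2), sinhWeight p.1.1 p.2), p.1.2)) {p | 0 < p.1.1} :=
    ((continuousOn_sinhWeight (by fun_prop) (by fun_prop)).prodMk
      (continuousOn_sinhWeight (by fun_prop) continuous_snd)).prodMk (by fun_prop)
  exact (continuous.comp_continuousOn weights).congr fun _ _ ↦ rfl

theorem isClosed_setOf_exists_le_norm_expectation (N : ℕ) {l₀ : ℝ} (hl₀ : 0 < l₀) (l₁ r : ℝ) :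
    IsClosed {l | ∃ ψ : (Fin N → Bool) → ℝ, (l ∈ Set.Icc l₀ l₁ ∧ IsGroundState l ψ) ∧
      ∀ w : ℂ, 0 ≤ w.re → w.re ≤ 1 → r ≤ ‖expectation (sinhTransferMatrix l N w) ψ‖} := by
  have compact := isCompact_setOf_isGroundState N l₀ l₁
  set K := {p : ℝ × ((Fin N → Bool) → ℝ) | p.1 ∈ Set.Icc l₀ l₁ ∧ IsGroundState p.1 p.2}
  have closed (w : ℂ) :
      IsClosed (K ∩ {p | r ≤ ‖expectation (sinhTransferMatrix p.1 N w) p.2‖}) := by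
    have continuousOn : ContinuousOn
        (fun p : ℝ × ((Fin N → Bool) → ℝ) ↦ expectation (sinhTransferMatrix p.1 N w) p.2) K :=
      (continuousOn_expectation_sinhTransferMatrix N).comp (f := fun p ↦ (p, w)) (by fun_prop)
        fun p hp ↦ hl₀.trans_le hp.1.1
    exact continuousOn.norm.preimage_isClosed_of_isClosed compact.isClosed isClosed_Ici
  have compact_le : IsCompact (K ∩ ⋂ (w : ℂ) (_ : 0 ≤ w.re) (_ : w.re ≤ 1),
      K ∩ {p | r ≤ ‖expectation (sinhTransferMatrix p.1 N w) p.2‖}) :=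
    compact.inter_right <| isClosed_iInter fun w ↦ isClosed_iInter fun _ ↦
      isClosed_iInter fun _ ↦ closed w
  convert (compact_le.image continuous_fst).isClosed
  ext l
  simp only [Set.mem_ofPred_eq, Set.mem_image, Set.mem_inter_iff, Set.mem_iInter, Prod.exists,
    exists_and_right, exists_eq_right]
  exact exists_congr fun ψ ↦ and_congr_right fun hψ ↦
    forall₃_congr fun w _ _ ↦ (and_iff_right hψ).symm

theorem isClosed_setOf_exists_expectation_eq_zero (N : ℕ) {l₀ : ℝ} (hl₀ : 0 < l₀) (l₁ : ℝ) :
    IsClosed {l | ∃ ψ : (Fin N → Bool) → ℝ, (l ∈ Set.Icc l₀ l₁ ∧ IsGroundState l ψ) ∧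
      ∃ w : ℂ, 0 ≤ w.re ∧ w.re ≤ 1 ∧ expectation (sinhTransferMatrix l N w) ψ = 0} := by
  let K : Set ((ℝ × ((Fin N → Bool) → ℝ)) × ℂ) :=
    {p | p.1 ∈ Set.Icc l₀ l₁ ∧ IsGroundState p.1 p.2} ×ˢ
      (Set.Icc 0 1 ×ℂ Set.Icc 0 (2 * π / l₀))
  have compact : IsCompact K := (isCompact_setOf_isGroundState N l₀ l₁).prod
    (isCompact_Icc.reProdIm isCompact_Icc)
  have closed : IsClosed
      (K ∩ {p | expectation (sinhTransferMatrix p.1.1 N p.2) p.1.2 = 0}) :=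
    ContinuousOn.preimage_isClosed_of_isClosed
      ((continuousOn_expectation_sinhTransferMatrix N).mono fun p hp ↦ hl₀.trans_le hp.1.1.1)
      compact.isClosed isClosed_singleton
  convert ((compact.of_isClosed_subset closed Set.inter_subset_left).image
    (continuous_fst.comp continuous_fst)).isClosed
  ext l
  constructor
  · rintro ⟨ψ, hψ, w, h₀, h₁, hzero⟩
    obtain ⟨w', re_eq, im_mem, periodic⟩ :=
      exists_sinhTransferMatrix_eq_of_im_mem (hl₀.trans_le hψ.1.1) N w
    have im_le : w'.im ≤ 2 * π / l₀ :=
      im_mem.2.trans (div_le_div_of_nonneg_left Real.two_pi_pos.le hl₀ hψ.1.1)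
    refine ⟨((l, ψ), w'), ⟨⟨hψ, ⟨re_eq ▸ h₀, re_eq ▸ h₁⟩, im_mem.1, im_le⟩, ?_⟩, rfl⟩
    exact (congrArg (expectation · ψ) periodic.symm).trans hzero
  · rintro ⟨⟨⟨l, ψ⟩, w⟩, ⟨⟨hψ, hre, -⟩, hzero⟩, rfl⟩
    exact ⟨ψ, hψ, w, hre.1, hre.2, hzero⟩

theorem IsGroundState.one_fourth_le_norm_expectation [NeZero N] {l : ℝ}
    {ψ : (Fin N → Bool) → ℝ} (h : IsGroundState l ψ) (hl : 0 < l)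
    (htanh : 3 * Real.tanh (π ^ 2 / (4 * l)) ^ N ≤ 1 / 2)
    (hψ : ∀ w : ℂ, 0 ≤ w.re → w.re ≤ 1 → expectation (sinhTransferMatrix l N w) ψ ≠ 0) {w : ℂ}
    (h₀ : 0 ≤ w.re) (h₁ : w.re ≤ 1) :
    1 / 4 ≤ ‖expectation (sinhTransferMatrix l N w) ψ‖ := by
  have one_le {w : ℂ} (hw : w.re = 0) : ‖(1 : ℂ)‖ ≤ ‖sinhWeight l (1 - w)‖ :=
    norm_one.trans_le (one_le_norm_sinhWeight_one_sub hl hw)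
  have := h.norm_pow_le_of_ne_zero hl htanh hψ (g := fun _ ↦ 1)
    (fun _ _ _ ↦ differentiableAt_const 1) (.const 1) (fun w hw ↦ one_le hw)
    (fun w hw ↦ by simpa using one_le (w := 1 - w) (by simp [hw])) h₀ h₁
  rw [norm_one, one_pow] at this
  linarith

theorem tanh_pow_antitone (N : ℕ) {l l' : ℝ} (hl : 0 < l) (hll' : l ≤ l') :
    Real.tanh (π ^ 2 / (4 * l')) ^ N ≤ Real.tanh (π ^ 2 / (4 * l)) ^ N := by
  have l'_pos : 0 < l' := hl.trans_le hll'
  have tanh_nonneg : 0 ≤ Real.tanh (π ^ 2 / (4 * l')) :=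
    Real.tanh_zero.symm.trans_le (tanh_monotone (by positivity))
  refine pow_le_pow_left₀ tanh_nonneg (tanh_monotone ?_) N
  gcongr

theorem IsGroundState.expectation_ne_zero [NeZero N] (hN : Even N) {l : ℝ} (hl : 0 < l)
    (htanh : 3 * Real.tanh (π ^ 2 / (4 * l)) ^ N ≤ 1 / 2) {ψ : (Fin N → Bool) → ℝ}
    (h : IsGroundState l ψ) {w : ℂ} (h₀ : 0 ≤ w.re) (h₁ : w.re ≤ 1) :
    expectation (sinhTransferMatrix l N w) ψ ≠ 0 := by
  obtain ⟨l₁, zero_free, hl₁⟩ := ((eventually_expectation_sinhTransferMatrix_ne_zero hN).and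
    (eventually_ge_atTop l)).exists
  intro hzero
  have covered : Set.Icc l l₁ ⊆
      {t | ∃ χ : (Fin N → Bool) → ℝ, (t ∈ Set.Icc l l₁ ∧ IsGroundState t χ) ∧
        ∀ w : ℂ, 0 ≤ w.re → w.re ≤ 1 → 1 / 4 ≤ ‖expectation (sinhTransferMatrix t N w) χ‖} ∪
      {t | ∃ χ : (Fin N → Bool) → ℝ, (t ∈ Set.Icc l l₁ ∧ IsGroundState t χ) ∧
        ∃ w : ℂ, 0 ≤ w.re ∧ w.re ≤ 1 ∧ expectation (sinhTransferMatrix t N w) χ = 0} := by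
    intro t ht
    obtain ⟨χ, hχ⟩ := exists_isGroundState t hN
    by_cases hne : ∃ w : ℂ, 0 ≤ w.re ∧ w.re ≤ 1 ∧ expectation (sinhTransferMatrix t N w) χ = 0
    · exact Or.inr ⟨χ, ⟨ht, hχ⟩, hne⟩
    · push Not at hne
      have := tanh_pow_antitone N hl ht.1
      exact Or.inl ⟨χ, ⟨ht, hχ⟩, fun w h₀ h₁ ↦
        hχ.one_fourth_le_norm_expectation (hl.trans_le ht.1) (by linarith) hne h₀ h₁⟩
  have at_right : ∃ χ : (Fin N → Bool) → ℝ, (l₁ ∈ Set.Icc l l₁ ∧ IsGroundState l₁ χ) ∧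
      ∀ w : ℂ, 0 ≤ w.re → w.re ≤ 1 → 1 / 4 ≤ ‖expectation (sinhTransferMatrix l₁ N w) χ‖ :=
    (covered ⟨hl₁, le_rfl⟩).resolve_right fun ⟨χ, hχ, w, h₀, h₁, hw⟩ ↦
      zero_free χ hχ.2 w h₀ h₁ hw
  obtain ⟨t, -, ⟨χ, hχ, bound⟩, χ', hχ', w', h₀', h₁', hw'⟩ :=
    isPreconnected_closed_iff.mp isPreconnected_Icc _ _
      (isClosed_setOf_exists_le_norm_expectation N hl l₁ (1 / 4))
      (isClosed_setOf_exists_expectation_eq_zero N hl l₁) covered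
      ⟨l₁, ⟨hl₁, le_rfl⟩, at_right⟩ ⟨l, ⟨le_rfl, hl₁⟩, ψ, ⟨⟨le_rfl, hl₁⟩, h⟩, w, h₀, h₁, hzero⟩
  have := bound w' h₀' h₁'
  rw [← hχ.2.unique hχ'.2, hw', norm_zero] at this
  norm_num at this

end ZeroFree

section ComparisonFunction

variable {l : ℝ} {N : ℕ} {ψ : (Fin N → Bool) → ℝ}

theorem sq_le_one_add_sq_mul_sin_sq {x : ℝ} (hx : |x| ≤ 1) :
    x ^ 2 ≤ (1 + x ^ 2) * Real.sin x ^ 2 := by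
  obtain ⟨lower, upper⟩ := abs_le.mp hx
  have := Real.pi_gt_three
  have cos_le : Real.cos x ≤ 1 / √(x ^ 2 + 1) :=
    Real.cos_le_one_div_sqrt_sq_add_one (by linarith) (by linarith)
  have cos_nonneg : 0 ≤ Real.cos x := Real.cos_nonneg_of_mem_Icc ⟨by linarith, by linarith⟩
  have cos_sq_le := pow_le_pow_left₀ cos_nonneg cos_le 2
  rw [div_pow, one_pow, Real.sq_sqrt (by positivity), le_div_iff₀ (by positivity)] at cos_sq_le
  rw [Real.sin_sq]
  linarith

theorem sq_mul_one_add_sq_le (hl : 0 < l) (hl₁ : l ≤ 1) (v : ℝ) :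
    l ^ 2 * (1 + v ^ 2) ≤
      (Real.sinh l ^ 2 + Real.sin (l * v) ^ 2) * Real.exp (2 * l * v ^ 2) := by
  have l_sq_le : l ^ 2 ≤ Real.sinh l ^ 2 :=
    pow_le_pow_left₀ hl.le (Real.self_le_sinh_iff.mpr hl.le) 2
  rcases le_or_gt |l * v| 1 with small | large
  · have one_add_le : 1 + (l * v) ^ 2 ≤ Real.exp (2 * l * v ^ 2) := by
      nlinarith [Real.add_one_le_exp (2 * l * v ^ 2), mul_nonneg hl.le (sq_nonneg v)]
    calc l ^ 2 * (1 + v ^ 2) = l ^ 2 + (l * v) ^ 2 := by ring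
      _ ≤ l ^ 2 * (1 + (l * v) ^ 2) + (1 + (l * v) ^ 2) * Real.sin (l * v) ^ 2 :=
        add_le_add (le_mul_of_one_le_right (sq_nonneg l) (by linarith [sq_nonneg (l * v)]))
          (sq_le_one_add_sq_mul_sin_sq small)
      _ = (l ^ 2 + Real.sin (l * v) ^ 2) * (1 + (l * v) ^ 2) := by ring
      _ ≤ _ := by gcongr
  · have abs_le : |v| ≤ l * v ^ 2 := by
      rw [abs_mul, abs_of_pos hl] at large
      rw [← sq_abs v]
      nlinarith [abs_nonneg v]
    have v_sq_le : v ^ 2 ≤ (l * v ^ 2) ^ 2 := sq_le_sq.mpr (abs_le.trans (le_abs_self _))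
    have one_add_le : 1 + v ^ 2 ≤ Real.exp (2 * l * v ^ 2) := by
      have : 0 ≤ 2 * l * v ^ 2 := by positivity
      nlinarith [Real.quadratic_le_exp_of_nonneg this]
    exact mul_le_mul (by linarith [sq_nonneg (Real.sin (l * v))]) one_add_le (by positivity)
      (by positivity)

theorem sinh_le_mul_exp (l : ℝ) : Real.sinh l ≤ l * Real.exp l := by
  have exp_neg_eq : Real.exp (-l) = Real.exp l * Real.exp (-(2 * l)) := by
    rw [← Real.exp_add]
    ring_nf
  rw [Real.sinh_eq, exp_neg_eq]
  nlinarith [Real.add_one_le_exp (-(2 * l)), Real.exp_pos l]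

/-- A multiple of `kappa w` by a factor tending to `1` as `l → 0`, chosen to lie below the weights
`sinhWeight l (1 - w)` and `sinhWeight l w` on the sides `Re w = 0` and `Re w = 1` of the strip. -/
def dampedKappa (l : ℝ) (w : ℂ) : ℂ :=
  Complex.exp (-2 * l + l * (w - 1 / 2) ^ 2) * kappa w

theorem norm_dampedKappa (l : ℝ) (w : ℂ) :
    ‖dampedKappa l w‖ =
      Real.exp (-2 * l + l * ((w.re - 1 / 2) ^ 2 - w.im ^ 2)) * ‖kappa w‖ := by
  rw [dampedKappa, norm_mul, Complex.norm_exp]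
  simp [sq]

theorem differentiableAt_dampedKappa (l : ℝ) {w : ℂ} (h₀ : 0 ≤ w.re) (h₁ : w.re ≤ 1) :
    DifferentiableAt ℂ (dampedKappa l) w :=
  .mul (by fun_prop) (differentiableAt_kappa h₀ h₁)

theorem hasExpGrowth_dampedKappa (hl : 0 < l) : HasExpGrowth 0 1 (dampedKappa l) := by
  refine .mul (.of_norm_le 1 0 fun w h₀ h₁ _ ↦ ?_) hasExpGrowth_kappa
  rw [Complex.norm_exp, zero_mul, Real.exp_zero, one_mul, Real.exp_le_one_iff]
  have : (w.re - 1 / 2) ^ 2 ≤ 1 := by nlinarith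
  have : l * ((w.re - 1 / 2) ^ 2 - w.im ^ 2) ≤ l * 1 := by
    gcongr
    linarith [sq_nonneg w.im]
  have re_eq : (-2 * l + l * (w - 1 / 2) ^ 2 : ℂ).re =
      -2 * l + l * ((w.re - 1 / 2) ^ 2 - w.im ^ 2) := by simp [sq]
  rw [re_eq]
  linarith

theorem norm_sq_dampedKappa_le (hl : 0 < l) (hl₁ : l ≤ 1) {w : ℂ} (hw : w.re = 0 ∨ w.re = 1) :
    ‖dampedKappa l w‖ ^ 2 ≤ 1 + Real.sin (l * w.im) ^ 2 / Real.sinh l ^ 2 := by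
  have := Real.sinh_pos_iff.mpr hl
  have distance : (w.re - 1 / 2) ^ 2 = 1 / 4 := by rcases hw with hw | hw <;> rw [hw] <;> norm_num
  have damping_le : Real.exp (-2 * l + l * (1 / 4 - w.im ^ 2)) ^ 2 ≤
      Real.exp (-(2 * l * w.im ^ 2)) / Real.exp l ^ 2 := by
    rw [← Real.exp_nat_mul, ← Real.exp_nat_mul, ← Real.exp_sub, Real.exp_le_exp]
    push_cast
    linarith
  rw [one_add_div (by positivity), le_div_iff₀ (by positivity), norm_dampedKappa, mul_pow,
    norm_sq_kappa hw, distance]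
  calc _ ≤ Real.exp (-(2 * l * w.im ^ 2)) / Real.exp l ^ 2 * (1 + w.im ^ 2) *
        (l * Real.exp l) ^ 2 := by
        gcongr
        exact sinh_le_mul_exp l
    _ = l ^ 2 * (1 + w.im ^ 2) / Real.exp (2 * l * w.im ^ 2) := by
        rw [Real.exp_neg]
        field_simp
    _ ≤ _ := div_le_of_le_mul₀ (Real.exp_pos _).le (by positivity)
        (sq_mul_one_add_sq_le hl hl₁ w.im)

theorem norm_dampedKappa_le_of_re_eq_zero (hl : 0 < l) (hl₁ : l ≤ 1) {w : ℂ} (hw : w.re = 0) :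
    ‖dampedKappa l w‖ ≤ ‖sinhWeight l (1 - w)‖ := by
  refine le_of_sq_le_sq ((norm_sq_dampedKappa_le hl hl₁ (.inl hw)).trans_eq ?_) (norm_nonneg _)
  rw [norm_sq_sinhWeight_one_sub hl hw, norm_sq_sinhWeight, hw]
  simp

theorem norm_dampedKappa_le_of_re_eq_one (hl : 0 < l) (hl₁ : l ≤ 1) {w : ℂ} (hw : w.re = 1) :
    ‖dampedKappa l w‖ ≤ ‖sinhWeight l w‖ := by
  refine le_of_sq_le_sq ((norm_sq_dampedKappa_le hl hl₁ (.inr hw)).trans_eq ?_) (norm_nonneg _)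
  rw [norm_sq_sinhWeight, hw, mul_one, add_div,
    div_self (pow_ne_zero 2 (Real.sinh_pos_iff.mpr hl).ne')]

theorem IsGroundState.exp_mul_norm_kappa_half_pow_le [NeZero N] (hN : Even N) (hl : 0 < l)
    (hl₁ : l ≤ 1) (htanh : 3 * Real.tanh (π ^ 2 / (4 * l)) ^ N ≤ 1 / 2)
    (h : IsGroundState l ψ) :
    (Real.exp (-2 * l) * ‖kappa (1 / 2)‖) ^ N ≤
      4 * ‖expectation (sinhTransferMatrix l N (1 / 2)) ψ‖ := by
  have bound := h.norm_pow_le_of_ne_zero hl htanh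
    (fun w h₀ h₁ ↦ h.expectation_ne_zero hN hl htanh h₀ h₁)
    (fun w h₀ h₁ ↦ differentiableAt_dampedKappa l h₀ h₁) (hasExpGrowth_dampedKappa hl)
    (fun w hw ↦ norm_dampedKappa_le_of_re_eq_zero hl hl₁ hw)
    (fun w hw ↦ norm_dampedKappa_le_of_re_eq_one hl hl₁ hw)
    (w := 1 / 2) (by norm_num) (by norm_num)
  simpa [norm_dampedKappa] using bound

end ComparisonFunction

section GeometricGrowth

theorem tendsto_log_div_of_geometric_bounds {F : Filter ℕ} (hF : F ≤ atTop) {K C C' : ℝ}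
    (hK : 0 < K) (hC : 0 < C) (hC' : 0 < C') {μ : ℕ → ℝ} (upper : ∀ᶠ n in F, μ n ≤ C * K ^ n)
    (lower : ∀ ε > 0, ∀ᶠ n in F, (K * Real.exp (-ε)) ^ n ≤ C' * μ n) :
    Tendsto (fun n ↦ Real.log (μ n) / n) F (nhds (Real.log K)) := by
  have const_div_lt (D : ℝ) {ε : ℝ} (hε : 0 < ε) : ∀ᶠ n : ℕ in F, D / n < ε :=
    ((tendsto_const_div_atTop_nhds_zero_nat D).mono_left hF).eventually (gt_mem_nhds hε)
  have pos : ∀ᶠ n : ℕ in F, 0 < μ n := by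
    filter_upwards [lower 1 one_pos] with n hn
    exact pos_of_mul_pos_right ((pow_pos (by positivity) n).trans_le hn) hC'.le
  refine tendsto_order.mpr ⟨fun r hr ↦ ?_, fun r hr ↦ ?_⟩
  · have half_pos : 0 < (Real.log K - r) / 2 := by linarith
    filter_upwards [lower _ half_pos, const_div_lt (Real.log C') half_pos, pos,
      hF (eventually_gt_atTop 0)] with n hn hdiv hμ n_pos
    have : (0 : ℝ) < n := mod_cast n_pos
    have log_le := Real.log_le_log (by positivity) hn
    rw [Real.log_pow, Real.log_mul hK.ne' (Real.exp_pos _).ne', Real.log_exp,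
      Real.log_mul hC'.ne' hμ.ne'] at log_le
    rw [div_lt_iff₀ this] at hdiv
    rw [lt_div_iff₀ this]
    nlinarith
  · filter_upwards [upper, const_div_lt (Real.log C) (sub_pos.mpr hr), pos,
      hF (eventually_gt_atTop 0)] with n hn hdiv hμ n_pos
    have : (0 : ℝ) < n := mod_cast n_pos
    have log_le := Real.log_le_log hμ hn
    rw [Real.log_mul hC.ne' (by positivity), Real.log_pow] at log_le
    rw [div_lt_iff₀ this] at hdiv ⊢
    linarith

theorem eventually_three_mul_tanh_pow_le {x : ℝ} (hx : 0 ≤ x) :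
    ∀ᶠ n : ℕ in atTop, 3 * Real.tanh x ^ n ≤ 1 / 2 := by
  have tendsto := (tendsto_pow_atTop_nhds_zero_of_lt_one
    (Real.tanh_zero.symm.trans_le (tanh_monotone hx)) (Real.tanh_lt_one x)).const_mul 3
  rw [mul_zero] at tendsto
  exact tendsto.eventually_le_const (by norm_num)

end GeometricGrowth

section FreeEnergy

open Matrix

variable {N : ℕ} {μ : ℝ}

theorem tendsto_log_Z_div {a c : ℝ} (ha : 1 ≤ a) (hc : 0 ≤ c)
    (hμ : IsGreatest (numericalRange (transferMatrix (sixVertexTensor a a c) N)) μ) :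
    Tendsto (fun M : ℕ ↦ Real.log (Z N M a a c) / (M * N)) atTop (nhds (Real.log μ / N)) := by
  have ha₀ : 0 ≤ a := zero_le_one.trans ha
  refine ((tendsto_log_trace_pow_div (isHermitian_transferMatrix a c N)
    (transferMatrix_nonneg ha₀ ha₀ hc) (one_le_transferMatrix_self ha ha hc) hμ).div_const
      (N : ℝ)).congr' ?_
  filter_upwards [eventually_ne_atTop 0] with M hM
  have : NeZero M := ⟨hM⟩
  rw [Z_eq_trace_transferMatrix_pow, div_div]

theorem transferMatrix_sixVertexTensor_smul {R : Type*} [CommRing R] (φ a b c : R) (N : ℕ) :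
    transferMatrix (sixVertexTensor (φ * a) (φ * b) (φ * c)) N =
      φ ^ N • transferMatrix (sixVertexTensor a b c) N := by
  rw [← transferMatrix_smul]
  congr 1
  ext s s' h h'
  simp only [sixVertexTensor, Matrix.smul_apply, smul_eq_mul]
  split_ifs <;> simp

theorem dotProduct_transferMatrix_one_one_two_mulVec (ψ : (Fin N → Bool) → ℝ) :
    ψ ⬝ᵥ transferMatrix (sixVertexTensor 1 1 2) N *ᵥ ψ =
      2 ^ N * (ψ ⬝ᵥ transferMatrix (sixVertexTensor (1 / 2) (1 / 2) 1) N *ᵥ ψ) := by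
  have scaling := transferMatrix_sixVertexTensor_smul (2 : ℝ) (1 / 2) (1 / 2) 1 N
  rw [mul_one_div_cancel two_ne_zero, mul_one] at scaling
  rw [scaling, smul_mulVec, dotProduct_smul, smul_eq_mul]

theorem le_of_isGreatest_numericalRange [NeZero N]
    (hμ : IsGreatest (numericalRange (transferMatrix (sixVertexTensor 1 1 2) N)) μ) :
    μ ≤ 2 * (2 * ‖kappa (1 / 2)‖) ^ N := by
  obtain ⟨ψ, ψ_unit : ψ ⬝ᵥ ψ = 1, rfl⟩ := hμ.1
  have bound := norm_expectation_le_kappa_pow ψ (w := 1 / 2) (by norm_num) (by norm_num)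
  have real_weights : transferMatrix (sixVertexTensor (1 - 1 / 2 : ℂ) (1 / 2) 1) N =
      (transferMatrix (sixVertexTensor (1 / 2 : ℝ) (1 / 2) 1) N).map Complex.ofReal := by
    rw [transferMatrix_map_ofReal]
    norm_num
  rw [real_weights, expectation_ofReal, Complex.norm_real, ψ_unit, mul_one, norm_pow] at bound
  calc _ = 2 ^ N * (ψ ⬝ᵥ transferMatrix (sixVertexTensor (1 / 2) (1 / 2) 1) N *ᵥ ψ) :=
        dotProduct_transferMatrix_one_one_two_mulVec ψ
    _ ≤ 2 ^ N * (2 * ‖kappa (1 / 2)‖ ^ N) := by gcongr; exact (le_abs_self _).trans bound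
    _ = _ := by ring

theorem dotProduct_mulVec_mono {X : Type*} [Fintype X] {A B : Matrix X X ℝ} {ψ : X → ℝ}
    (hψ : ∀ x, 0 ≤ ψ x) (hAB : ∀ x y, A x y ≤ B x y) : ψ ⬝ᵥ A *ᵥ ψ ≤ ψ ⬝ᵥ B *ᵥ ψ :=
  dotProduct_le_dotProduct_of_nonneg_left
    (fun x ↦ dotProduct_le_dotProduct_of_nonneg_right (hAB x) hψ) hψ

theorem IsGroundState.norm_expectation_half_le {l : ℝ} (hl : 0 < l)
    {ψ : (Fin N → Bool) → ℝ} (h : IsGroundState l ψ) :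
    ‖expectation (sinhTransferMatrix l N (1 / 2)) ψ‖ ≤
      ψ ⬝ᵥ transferMatrix (sixVertexTensor (1 / 2) (1 / 2) 1) N *ᵥ ψ := by
  have nonneg : ∀ x, 0 ≤ ψ x := IsPerronVector.nonneg h
  have weight_nonneg := (midpointWeight_pos l).le
  rw [sinhTransferMatrix_half hl, expectation_ofReal, Complex.norm_real, Real.norm_of_nonneg]
  · exact dotProduct_mulVec_mono nonneg <| transferMatrix_mono weight_nonneg weight_nonneg
      zero_le_one (midpointWeight_le_half l) (midpointWeight_le_half l) le_rfl
  · exact dotProduct_nonneg_of_nonneg nonneg fun x ↦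
      dotProduct_nonneg_of_nonneg (transferMatrix_midpointWeight_nonneg l x) nonneg

theorem pow_le_of_isGreatest_numericalRange [NeZero N] (hN : Even N) {l : ℝ} (hl : 0 < l)
    (hl₁ : l ≤ 1) (htanh : 3 * Real.tanh (π ^ 2 / (4 * l)) ^ N ≤ 1 / 2)
    (hμ : IsGreatest (numericalRange (transferMatrix (sixVertexTensor 1 1 2) N)) μ) :
    (2 * ‖kappa (1 / 2)‖ * Real.exp (-2 * l)) ^ N ≤ 4 * μ := by
  obtain ⟨ψ, h⟩ := exists_isGroundState l hN
  have rayleigh_le : ψ ⬝ᵥ transferMatrix (sixVertexTensor 1 1 2) N *ᵥ ψ ≤ μ :=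
    hμ.2 ⟨ψ, IsPerronVector.dotProduct_self h, rfl⟩
  rw [dotProduct_transferMatrix_one_one_two_mulVec] at rayleigh_le
  calc _ = 2 ^ N * (Real.exp (-2 * l) * ‖kappa (1 / 2)‖) ^ N := by ring
    _ ≤ 2 ^ N * (4 * ‖expectation (sinhTransferMatrix l N (1 / 2)) ψ‖) := by
        gcongr
        exact h.exp_mul_norm_kappa_half_pow_le hN hl hl₁ htanh
    _ ≤ 2 ^ N * (4 * (ψ ⬝ᵥ transferMatrix (sixVertexTensor (1 / 2) (1 / 2) 1) N *ᵥ ψ)) := by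
        gcongr
        exact h.norm_expectation_half_le hl
    _ ≤ 4 * μ := by linarith

theorem eventually_pow_le_of_isGreatest_numericalRange {μ : ℕ → ℝ}
    (hμ : ∀ N, IsGreatest (numericalRange (transferMatrix (sixVertexTensor 1 1 2) N)) (μ N))
    {ε : ℝ} (hε : 0 < ε) : ∀ᶠ N : ℕ in atTop ⊓ 𝓟 {N | Even N},
      (2 * ‖kappa (1 / 2)‖ * Real.exp (-ε)) ^ N ≤ 4 * μ N := by
  set l := min 1 (ε / 2)
  have l_pos : 0 < l := lt_min one_pos (half_pos hε)
  have l_le : l ≤ ε / 2 := min_le_right _ _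
  rw [eventually_inf_principal]
  filter_upwards [eventually_three_mul_tanh_pow_le (x := π ^ 2 / (4 * l)) (by positivity),
    eventually_ne_atTop 0] with N htanh N_ne hN
  have : NeZero N := ⟨N_ne⟩
  refine le_trans ?_ (pow_le_of_isGreatest_numericalRange hN l_pos (min_le_left _ _) htanh (hμ N))
  gcongr
  linarith

theorem two_mul_norm_kappa_half :
    2 * ‖kappa (1 / 2)‖ = (2 * Real.Gamma (5 / 4) / Real.Gamma (3 / 4)) ^ 2 := by
  have norm_eq := congrArg norm two_mul_kappa_half
  rwa [norm_mul, Complex.norm_ofNat, Complex.norm_real,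
    Real.norm_of_nonneg (sq_nonneg _)] at norm_eq

end FreeEnergy

/-- **Free energy of the six-vertex model at a = b = 1, c = 2**:
the free energy exists and equals `2 log(2 Γ(5/4) / Γ(3/4))`. -/
theorem free_energy_c_two :
    FreeEnergyIs 1 1 2 (2 * Real.log (2 * Real.Gamma (5/4) / Real.Gamma (3/4))) := by
  choose μ hμ using fun N : ℕ ↦
    exists_isGreatest_numericalRange (isHermitian_transferMatrix 1 2 N)
  have kappa_pos : 0 < ‖kappa (1 / 2)‖ :=
    norm_pos_iff.mpr (kappa_ne_zero (by norm_num) (by norm_num))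
  have log_eq : 2 * Real.log (2 * Real.Gamma (5 / 4) / Real.Gamma (3 / 4)) =
      Real.log (2 * ‖kappa (1 / 2)‖) := by
    rw [two_mul_norm_kappa_half, Real.log_pow, Nat.cast_ofNat]
  refine ⟨fun N ↦ Real.log (μ N) / N,
    fun N _ _ ↦ tendsto_log_Z_div le_rfl zero_le_two (hμ N), ?_⟩
  rw [log_eq]
  refine tendsto_log_div_of_geometric_bounds inf_le_left (by positivity) two_pos four_pos ?_
    fun ε hε ↦ eventually_pow_le_of_isGreatest_numericalRange hμ hε
  filter_upwards [(eventually_ne_atTop 0).filter_mono inf_le_left] with N hN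
  have : NeZero N := ⟨hN⟩
  exact le_of_isGreatest_numericalRange (hμ N)

end SixVertexFE
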